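/- arXiv:2402.09185 — 3 statements merged into one kernel-verified Lean document; each statement's English description precedes it below -/
import Mathlib

section
/- A relation X ⊆ ℕ^{d'} × ℕ^{d''} is a PVASS section if and only if X = Rel(E) for some expression E of type E_{d',d''} over VASS sections. -/
/-- Vectors of naturals of dimension `d`. -/
abbrev NVec (d : ℕ) := Fin d → ℕ

/-- A priority vector addition system with states (PVASS) of dimension `d`:
a finite set of states `Q`, a finite set of edges `E`, each edge having a source,
a target, an update vector in `ℤ^d` and a test level `g(e) ∈ {0,…,d}`. -/
structure PVASS (d : ℕ) where
  Q : Type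
  E : Type
  fintypeQ : Fintype Q
  fintypeE : Fintype E
  src : E → Q
  tgt : E → Q
  upd : E → Fin d → ℤ
  test : E → ℕ
  test_le : ∀ e, test e ≤ d

namespace PVASS

variable {d : ℕ} (V : PVASS d)

/-- The one-step relation of a PVASS: an edge `e` can be taken from `(q,x)` to `(q',x')`
iff `q = src e`, `q' = tgt e`, the first `test e` counters of `x` are zero, and
`x' = x + upd e` (staying nonnegative, which is automatic since `x' ∈ ℕ^d`). -/
def Step (c c' : V.Q × NVec d) : Prop :=
  ∃ e : V.E, V.src e = c.1 ∧ V.tgt e = c'.1 ∧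
    (∀ j : Fin d, (j : ℕ) < V.test e → c.2 j = 0) ∧
    ∀ i : Fin d, (c'.2 i : ℤ) = (c.2 i : ℤ) + V.upd e i

/-- The reachability relation: reflexive transitive closure of the step relation. -/
def Reach : V.Q × NVec d → V.Q × NVec d → Prop := Relation.ReflTransGen V.Step

end PVASS

/-- Embed a pair `(b, x)` with `b ∈ ℕ^{d-d'}` and `x ∈ ℕ^{d'}` into `ℕ^d`:
the first `d - d'` coordinates form `b`, the last `d'` coordinates form `x`. -/
def fitVec {d d' : ℕ} (h : d' ≤ d) (b : Fin (d - d') → ℕ) (x : Fin d' → ℕ) : NVec d :=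
  fun i => Fin.append b x (Fin.cast (Nat.sub_add_cancel h).symm i)

/-- `X ⊆ ℕ^{d'} × ℕ^{d''}` is a PVASS section. -/
def IsPVASSSection {d' d'' : ℕ} (X : Set (NVec d' × NVec d'')) : Prop :=
  ∃ (d : ℕ) (h' : d' ≤ d) (h'' : d'' ≤ d) (V : PVASS d) (p q : V.Q)
    (bs : Fin (d - d') → ℕ) (bt : Fin (d - d'') → ℕ),
    X = {xy | V.Reach (p, fitVec h' bs xy.1) (q, fitVec h'' bt xy.2)}

/-- `X ⊆ ℕ^{d'} × ℕ^{d''}` is a VASS section: a section of a PVASS in which no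
counter is ever tested for zero. -/
def IsVASSSection {d' d'' : ℕ} (X : Set (NVec d' × NVec d'')) : Prop :=
  ∃ (d : ℕ) (h' : d' ≤ d) (h'' : d'' ≤ d) (V : PVASS d) (_ : ∀ e, V.test e = 0)
    (p q : V.Q) (bs : Fin (d - d') → ℕ) (bt : Fin (d - d'') → ℕ),
    X = {xy | V.Reach (p, fitVec h' bs xy.1) (q, fitVec h'' bt xy.2)}

/-- Composition of relations. -/
def RelComp {α β γ : Type*} (R : Set (α × β)) (S : Set (β × γ)) : Set (α × γ) :=
  {p | ∃ x, (p.1, x) ∈ R ∧ (x, p.2) ∈ S}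

/-- Reflexive transitive closure of a relation, viewed as a set of pairs. -/
def RelStar {α : Type*} (R : Set (α × α)) : Set (α × α) :=
  {p | Relation.ReflTransGen (fun a b => (a, b) ∈ R) p.1 p.2}

/-- Regular expressions over VASS sections: leaves are VASS sections, and we can
compose (with matching intermediate dimension), take unions (with matching dimensions),
and take Kleene star (only when input and output dimensions agree). -/
inductive Expr : ℕ → ℕ → Type 1 where
  | leaf {a b : ℕ} (Y : Set (NVec a × NVec b)) (hY : IsVASSSection Y) : Expr a b
  | comp {a m b : ℕ} : Expr a m → Expr m b → Expr a b
  | union {a b : ℕ} : Expr a b → Expr a b → Expr a b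
  | star {a : ℕ} : Expr a a → Expr a a

/-- The relation denoted by an expression. -/
def Expr.Rel : ∀ {a b : ℕ}, Expr a b → Set (NVec a × NVec b)
  | _, _, .leaf Y _ => Y
  | _, _, .comp E₁ E₂ => RelComp E₁.Rel E₂.Rel
  | _, _, .union E₁ E₂ => E₁.Rel ∪ E₂.Rel
  | _, _, .star E => RelStar E.Rel

theorem rlift {α β : Type} {r : α → α → Prop} {s : β → β → Prop} (f : α → β)
    (h : ∀ a b, r a b → s (f a) (f b)) {a b : α} (H : Relation.ReflTransGen r a b) :
    Relation.ReflTransGen s (f a) (f b) := by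
  induction H with
  | refl => exact .refl
  | tail _ h1 ih => exact ih.tail (h _ _ h1)

/-- Zero-extension: put `x` in the last `a` coordinates. -/
def embV {a : ℕ} (d : ℕ) (x : NVec a) : NVec d :=
  fun i => if h : d ≤ i.1 + a then x ⟨i.1 + a - d, by omega⟩ else 0

/-- The relation of a single edge. -/
def EdgeRel (d : ℕ) (u : Fin d → ℤ) (t : ℕ) : Set (NVec d × NVec d) :=
  {p | (∀ j : Fin d, (j : ℕ) < t → p.1 j = 0) ∧ ∀ i, (p.2 i : ℤ) = (p.1 i : ℤ) + u i}

/-- Relations definable by regular programs. -/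
inductive PDef (d : ℕ) : Set (NVec d × NVec d) → Prop where
  | empty : PDef d ∅
  | edge (u : Fin d → ℤ) (t : ℕ) (ht : t ≤ d) : PDef d (EdgeRel d u t)
  | comp {R S} : PDef d R → PDef d S → PDef d (RelComp R S)
  | union {R S} : PDef d R → PDef d S → PDef d (R ∪ S)
  | star {R} : PDef d R → PDef d (RelStar R)

theorem fitVec_eq {d d' : ℕ} (h : d' ≤ d) (b : Fin (d - d') → ℕ) (x : Fin d' → ℕ) (i : Fin d) :
    fitVec h b x i = if hi : i.1 < d - d' then b ⟨i.1, hi⟩ else x ⟨i.1 + d' - d, by omega⟩ := by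
  unfold fitVec
  split_ifs with hi
  · have : Fin.cast (Nat.sub_add_cancel h).symm i = Fin.castAdd d' ⟨i.1, hi⟩ := by
      ext; simp
    rw [this, Fin.append_left]
  · have : Fin.cast (Nat.sub_add_cancel h).symm i
        = Fin.natAdd (d - d') ⟨i.1 + d' - d, by omega⟩ := by
      ext; simp; omega
    rw [this, Fin.append_right]

theorem fitVec_zero {d d' : ℕ} (h : d' ≤ d) (x : Fin d' → ℕ) :
    fitVec h 0 x = embV d x := by
  funext i
  rw [fitVec_eq]
  unfold embV
  by_cases hi : i.1 < d - d'
  · rw [dif_pos hi, dif_neg (by omega)]; rfl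
  · rw [dif_neg hi, dif_pos (by omega)]

theorem fitVec_add {d d' : ℕ} (h : d' ≤ d) (b : Fin (d - d') → ℕ) (x : Fin d' → ℕ) (i : Fin d) :
    fitVec h b x i = embV d x i + fitVec h b 0 i := by
  rw [fitVec_eq, fitVec_eq]
  unfold embV
  by_cases hi : i.1 < d - d'
  · rw [dif_pos hi, dif_neg (by omega), dif_pos hi]; simp
  · rw [dif_neg hi, dif_pos (by omega), dif_neg hi]; simp

theorem embV_self {d : ℕ} (x : NVec d) : embV d x = x := by
  funext i
  unfold embV
  rw [dif_pos (by omega)]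
  congr 1
  ext; simp

theorem embV_embV {a d D : ℕ} (h1 : a ≤ d) (h2 : d ≤ D) (x : NVec a) :
    embV D (embV d x) = embV D x := by
  funext i
  unfold embV
  by_cases h : D ≤ i.1 + a
  · rw [dif_pos (by omega), dif_pos (by simp; omega), dif_pos h]
    congr 1
    ext; simp; omega
  · rw [dif_neg h]
    split_ifs with h3 h4
    · simp at h4; omega
    · rfl
    · rfl

theorem embV_apply {a d : ℕ} (h : a ≤ d) (x : NVec a) (i : Fin a) :
    embV d x ⟨i.1 + (d - a), by omega⟩ = x i := by
  unfold embV
  rw [dif_pos (by simp; omega)]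
  congr 1
  ext; simp; omega

theorem embV_low {a d : ℕ} (x : NVec a) (j : Fin d) (hj : j.1 < d - a) : embV d x j = 0 := by
  unfold embV
  rw [dif_neg (by omega)]

theorem embV_inj {a d : ℕ} (h : a ≤ d) {x y : NVec a} (e : embV d x = embV d y) : x = y := by
  funext i
  rw [← embV_apply h x i, ← embV_apply h y i, e]

theorem exists_embV {a d : ℕ} (h : a ≤ d) (w : NVec d) (hw : ∀ j : Fin d, j.1 < d - a → w j = 0) :
    ∃ y : NVec a, w = embV d y := by
  refine ⟨fun i => w ⟨i.1 + (d - a), by omega⟩, ?_⟩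
  funext j
  unfold embV
  split_ifs with hj
  · congr 1; ext; simp; omega
  · exact hw j (by omega)

/-! ### Padding -/

theorem PDef.pad {d D : ℕ} (h : d ≤ D) {R : Set (NVec d × NVec d)} (hR : PDef d R) :
    ∃ R', PDef D R' ∧ ∀ (x : NVec d) (w : NVec D),
      (embV D x, w) ∈ R' ↔ ∃ y, w = embV D y ∧ (x, y) ∈ R := by
  induction hR with
  | empty => exact ⟨∅, .empty, by simp⟩
  | edge u t ht =>
    refine ⟨EdgeRel D (fun i => if h : D ≤ i.1 + d then u ⟨i.1 + d - D, by omega⟩ else 0)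
      (D - d + t), .edge _ _ (by omega), ?_⟩
    intro x w
    constructor
    · rintro ⟨h1, h2⟩
      simp only at h1 h2
      obtain ⟨y, rfl⟩ := exists_embV h w (by
        intro j hj
        have := h2 j
        rw [dif_neg (by omega), embV_low x j hj] at this
        simpa using this)
      refine ⟨y, rfl, ?_, ?_⟩
      · intro j hj
        have := h1 ⟨j.1 + (D - d), by omega⟩ (by simp at *; omega)
        rwa [embV_apply h] at this
      · intro i
        have := h2 ⟨i.1 + (D - d), by omega⟩
        rw [embV_apply h, embV_apply h, dif_pos (by simp; omega)] at this
        simp only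
        rw [this]
        congr 3
        simp; omega
    · rintro ⟨y, rfl, h1, h2⟩
      simp only at h1 h2
      constructor
      · intro j hj
        simp only
        unfold embV
        split_ifs with hj'
        · exact h1 _ (by simp; omega)
        · rfl
      · intro i
        simp only
        unfold embV
        split_ifs with hi
        · exact h2 _
        · simp
  | comp _ _ ih1 ih2 =>
    obtain ⟨R', hR', h1⟩ := ih1
    obtain ⟨S', hS', h2⟩ := ih2
    refine ⟨_, .comp hR' hS', ?_⟩
    intro x w
    constructor
    · rintro ⟨z, hz1, hz2⟩
      obtain ⟨y, rfl, hy⟩ := (h1 _ _).1 hz1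
      obtain ⟨y', e, hy'⟩ := (h2 _ _).1 hz2
      exact ⟨y', e, y, hy, hy'⟩
    · rintro ⟨y, rfl, z, hz1, hz2⟩
      exact ⟨embV D z, (h1 _ _).2 ⟨z, rfl, hz1⟩, (h2 _ _).2 ⟨y, rfl, hz2⟩⟩
  | union _ _ ih1 ih2 =>
    obtain ⟨R', hR', h1⟩ := ih1
    obtain ⟨S', hS', h2⟩ := ih2
    refine ⟨_, .union hR' hS', ?_⟩
    intro x w
    simp only [Set.mem_union, h1, h2]
    constructor
    · rintro (⟨y, e, hy⟩ | ⟨y, e, hy⟩)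
      · exact ⟨y, e, .inl hy⟩
      · exact ⟨y, e, .inr hy⟩
    · rintro ⟨y, e, hy | hy⟩
      · exact .inl ⟨y, e, hy⟩
      · exact .inr ⟨y, e, hy⟩
  | star _ ih =>
    obtain ⟨R', hR', h1⟩ := ih
    refine ⟨_, .star hR', ?_⟩
    intro x w
    constructor
    · intro hw
      change Relation.ReflTransGen _ (embV D x) w at hw
      induction hw with
      | refl => exact ⟨x, rfl, Relation.ReflTransGen.refl⟩
      | tail _ hs ih =>
        obtain ⟨y, rfl, hy⟩ := ih
        obtain ⟨y', e, hy'⟩ := (h1 _ _).1 hs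
        exact ⟨y', e, Relation.ReflTransGen.tail hy hy'⟩
    · rintro ⟨y, rfl, hy⟩
      change Relation.ReflTransGen _ x y at hy
      change Relation.ReflTransGen _ (embV D x) (embV D y)
      induction hy with
      | refl => exact .refl
      | tail _ hs ih => exact ih.tail ((h1 _ _).2 ⟨_, rfl, hs⟩)

/-! ### Kleene -/

/-- Nonempty paths whose intermediate states lie in `T`. -/
inductive TPath {Q A : Type} (S : Q → Q → Set (A × A)) (T : Set Q) : Q → A → Q → A → Prop where
  | single {p q x y} : (x, y) ∈ S p q → TPath S T p x q y
  | cons {p r q x z y} : (x, z) ∈ S p r → r ∈ T → TPath S T r z q y → TPath S T p x q y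

theorem TPath.mono {Q A : Type} {S : Q → Q → Set (A × A)} {T T' : Set Q} (h : T ⊆ T') {p x q y}
    (H : TPath S T p x q y) : TPath S T' p x q y := by
  induction H with
  | single h1 => exact .single h1
  | cons h1 h2 _ ih => exact .cons h1 (h h2) ih

theorem TPath.trans {Q A : Type} {S : Q → Q → Set (A × A)} {T : Set Q} {p x r z q y}
    (H : TPath S T p x r z) (hr : r ∈ T) (H' : TPath S T r z q y) : TPath S T p x q y := by
  induction H with
  | single h1 => exact .cons h1 hr H'
  | cons h1 h2 _ ih => exact .cons h1 h2 (ih hr H')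

theorem TPath.insert_iff {Q A : Type} {S : Q → Q → Set (A × A)} {T : Set Q} {r p x q y} :
    TPath S (insert r T) p x q y ↔ TPath S T p x q y ∨
      ∃ z z', TPath S T p x r z ∧ Relation.ReflTransGen (fun a b => TPath S T r a r b) z z' ∧
        TPath S T r z' q y := by
  constructor
  · intro H
    induction H with
    | single h1 => exact .inl (.single h1)
    | cons h1 h2 _ ih =>
      rcases h2 with rfl | h2
      · rcases ih with ih | ⟨z, z', ha, hb, hc⟩
        · exact .inr ⟨_, _, .single h1, .refl, ih⟩
        · exact .inr ⟨_, _, .single h1, .head ha hb, hc⟩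
      · rcases ih with ih | ⟨z, z', ha, hb, hc⟩
        · exact .inl (.cons h1 h2 ih)
        · exact .inr ⟨_, _, .cons h1 h2 ha, hb, hc⟩
  · rintro (H | ⟨z, z', ha, hb, hc⟩)
    · exact H.mono (Set.subset_insert _ _)
    · have hr : r ∈ insert r T := Set.mem_insert _ _
      have m := Set.subset_insert r T
      refine (ha.mono m).trans hr ?_
      clear ha
      induction hb using Relation.ReflTransGen.head_induction_on with
      | refl => exact hc.mono m
      | head h1 _ ih => exact (h1.mono m).trans hr ih

theorem PDef.id (d : ℕ) : PDef d {p | p.1 = p.2} := by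
  have := PDef.star (PDef.empty (d := d))
  convert this using 1
  ext ⟨x, y⟩
  constructor
  · rintro h
    simp only [Set.mem_ofPred_eq] at h
    subst h
    exact Relation.ReflTransGen.refl
  · intro h
    change Relation.ReflTransGen _ x y at h
    induction h with
    | refl => rfl
    | tail _ h _ => exact h.elim

theorem PDef.iUnion {d : ℕ} {ι : Type} (s : Finset ι) (R : ι → Set (NVec d × NVec d))
    (h : ∀ i, PDef d (R i)) : PDef d {p | ∃ i ∈ s, p ∈ R i} := by
  classical
  induction s using Finset.induction_on with
  | empty => simpa using PDef.empty
  | insert a s _ ih =>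
    convert PDef.union (h a) ih using 1
    ext p; simp

theorem PDef.tpath {d : ℕ} {Q : Type} (S : Q → Q → Set (NVec d × NVec d))
    (h : ∀ p q, PDef d (S p q)) (T : Finset Q) (p q : Q) :
    PDef d {a | TPath S (T : Set Q) p a.1 q a.2} := by
  classical
  induction T using Finset.induction_on generalizing p q with
  | empty =>
    convert h p q using 1
    ext ⟨x, y⟩
    constructor
    · intro H
      cases H with
      | single h => exact h
      | cons _ h _ => simp at h
    · intro H; exact .single H
  | insert r T _ ih =>
    convert PDef.union (ih p q) (PDef.comp (ih p r) (PDef.comp (PDef.star (ih r r)) (ih r q))) using 1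
    ext ⟨x, y⟩
    simp only [Finset.coe_insert, Set.mem_ofPred_eq, TPath.insert_iff, Set.mem_union, RelComp,
      RelStar]
    refine or_congr Iff.rfl ⟨?_, ?_⟩
    · rintro ⟨z, z', a, b, c⟩
      exact ⟨z, a, z', b, c⟩
    · rintro ⟨z, a, z', b, c⟩
      exact ⟨z, z', a, b, c⟩

theorem PDef.reach {d : ℕ} (V : PVASS d) (p q : V.Q) :
    PDef d {a | V.Reach (p, a.1) (q, a.2)} := by
  classical
  have := V.fintypeQ
  have := V.fintypeE
  let S : V.Q → V.Q → Set (NVec d × NVec d) := fun p q => {a | V.Step (p, a.1) (q, a.2)}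
  have hS : ∀ p q, PDef d (S p q) := by
    intro p q
    have := PDef.iUnion (Finset.univ : Finset V.E)
      (fun e => if V.src e = p ∧ V.tgt e = q then EdgeRel d (V.upd e) (V.test e) else ∅) (by
        intro e
        split_ifs
        · exact .edge _ _ (V.test_le e)
        · exact .empty)
    convert this using 1
    ext ⟨x, y⟩
    simp only [S, PVASS.Step, Set.mem_ofPred_eq, Finset.mem_univ, true_and]
    refine exists_congr fun e => ?_
    split_ifs with h
    · simp [h, EdgeRel]
    · simp only [Set.mem_empty_iff_false, iff_false]
      tauto
  have hT := PDef.tpath S hS Finset.univ p q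
  have key : ∀ x y, V.Reach (p, x) (q, y) ↔
      ((p, x) = (q, y) ∨ TPath S ((Finset.univ : Finset V.Q) : Set V.Q) p x q y) := by
    intro x y
    constructor
    · intro H
      have : ∀ c c' : V.Q × NVec d, Relation.ReflTransGen V.Step c c' →
          c = c' ∨ TPath S ((Finset.univ : Finset V.Q) : Set V.Q) c.1 c.2 c'.1 c'.2 := by
        intro c c' H
        induction H with
        | refl => exact .inl rfl
        | tail _ h ih =>
          rcases ih with rfl | ih
          · exact .inr (.single h)
          · exact .inr (ih.trans (by simp) (.single h))
      exact this _ _ H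
    · rintro (e | H)
      · rw [e]; exact Relation.ReflTransGen.refl
      · clear hT
        induction H with
        | single h => exact Relation.ReflTransGen.single h
        | cons h _ _ ih => exact Relation.ReflTransGen.head h ih
  by_cases hpq : p = q
  · convert PDef.union (PDef.id d) hT using 1
    ext ⟨x, y⟩
    simp only [Set.mem_ofPred_eq, key, Set.mem_union]
    simp [hpq]
  · convert hT using 1
    ext ⟨x, y⟩
    simp only [Set.mem_ofPred_eq, key]
    simp [hpq]

/-! ### Thompson -/

/-- Realised by a PVASS of dimension `d`. -/
def HasAut (d : ℕ) (R : Set (NVec d × NVec d)) : Prop :=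
  ∃ (V : PVASS d) (p q : V.Q), ∀ x y, (x, y) ∈ R ↔ V.Reach (p, x) (q, y)

/-- Two states, one edge. -/
def edgeAut (d : ℕ) (u : Fin d → ℤ) (t : ℕ) (ht : t ≤ d) : PVASS d where
  Q := Bool
  E := Unit
  fintypeQ := inferInstance
  fintypeE := inferInstance
  src _ := false
  tgt _ := true
  upd _ := u
  test _ := t
  test_le _ := ht

theorem edgeAut_reach {d : ℕ} {u : Fin d → ℤ} {t : ℕ} {ht : t ≤ d} (x y : NVec d) :
    (edgeAut d u t ht).Reach (false, x) (true, y) ↔ (x, y) ∈ EdgeRel d u t := by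
  constructor
  · intro H
    have : ∀ c, (edgeAut d u t ht).Reach (false, x) c →
        (match c with | (false, w) => x = w | (true, w) => (x, w) ∈ EdgeRel d u t) := by
      intro c H
      induction H with
      | refl => rfl
      | @tail b c _ h ih =>
        obtain ⟨b1, b2⟩ := b
        obtain ⟨c1, c2⟩ := c
        obtain ⟨e, h1, h2, h3, h4⟩ := h
        simp only [edgeAut] at h1 h2
        subst h1 h2
        simp only at ih
        subst ih
        exact ⟨h3, h4⟩
    exact this _ H
  · rintro ⟨h1, h2⟩
    exact Relation.ReflTransGen.single ⟨(), rfl, rfl, h1, h2⟩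

/-- No edges. -/
def nilAut (d : ℕ) (Q : Type) (hQ : Fintype Q) : PVASS d where
  Q := Q
  E := Empty
  fintypeQ := hQ
  fintypeE := inferInstance
  src e := e.elim
  tgt e := e.elim
  upd e := e.elim
  test e := e.elim
  test_le e := e.elim

theorem nilAut_reach {d : ℕ} {Q : Type} {hQ : Fintype Q} (c c') :
    (nilAut d Q hQ).Reach c c' ↔ c = c' := by
  constructor
  · intro H
    induction H with
    | refl => rfl
    | tail _ h _ => exact h.choose.elim
  · rintro rfl; exact Relation.ReflTransGen.refl

/-- Sequential composition. -/
def compAut {d : ℕ} (V W : PVASS d) (q : V.Q) (p : W.Q) : PVASS d where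
  Q := V.Q ⊕ W.Q
  E := V.E ⊕ W.E ⊕ Unit
  fintypeQ := by have := V.fintypeQ; have := W.fintypeQ; infer_instance
  fintypeE := by have := V.fintypeE; have := W.fintypeE; infer_instance
  src := Sum.elim (fun e => .inl (V.src e)) (Sum.elim (fun e => .inr (W.src e)) fun _ => .inl q)
  tgt := Sum.elim (fun e => .inl (V.tgt e)) (Sum.elim (fun e => .inr (W.tgt e)) fun _ => .inr p)
  upd := Sum.elim V.upd (Sum.elim W.upd fun _ _ => 0)
  test := Sum.elim V.test (Sum.elim W.test fun _ => 0)
  test_le := by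
    rintro (e | e | e)
    · exact V.test_le e
    · exact W.test_le e
    · exact Nat.zero_le _

theorem compAut_reach {d : ℕ} (V W : PVASS d) (p q : V.Q) (p' q' : W.Q) (x y) :
    (compAut V W q p').Reach (.inl p, x) (.inr q', y) ↔
      ∃ z, V.Reach (p, x) (q, z) ∧ W.Reach (p', z) (q', y) := by
  constructor
  · intro H
    have : ∀ c, (compAut V W q p').Reach (.inl p, x) c →
        (match c with
          | (.inl s, w) => V.Reach (p, x) (s, w)
          | (.inr s, w) => ∃ z, V.Reach (p, x) (q, z) ∧ W.Reach (p', z) (s, w)) := by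
      intro c H
      induction H with
      | refl => exact Relation.ReflTransGen.refl
      | @tail b c _ h ih =>
        obtain ⟨b1, b2⟩ := b
        obtain ⟨c1, c2⟩ := c
        obtain ⟨e, h1, h2, h3, h4⟩ := h
        rcases e with e | e | e
        · simp only [compAut, Sum.elim_inl] at h1 h2
          subst h1 h2
          exact Relation.ReflTransGen.tail ih ⟨e, rfl, rfl, h3, h4⟩
        · simp only [compAut, Sum.elim_inl, Sum.elim_inr] at h1 h2
          subst h1 h2
          obtain ⟨z, hz, hz'⟩ := ih
          exact ⟨z, hz, Relation.ReflTransGen.tail hz' ⟨e, rfl, rfl, h3, h4⟩⟩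
        · simp only [compAut, Sum.elim_inr] at h1 h2 h4
          subst h1 h2
          have : b2 = c2 := by
            funext i
            have := h4 i
            simp at this
            exact this.symm
          subst this
          exact ⟨_, ih, Relation.ReflTransGen.refl⟩
    exact this _ H
  · rintro ⟨z, h1, h2⟩
    have a1 : (compAut V W q p').Reach (.inl p, x) (.inl q, z) :=
      rlift (fun c : V.Q × NVec d => ((.inl c.1, c.2) : (V.Q ⊕ W.Q) × NVec d))
        (by
          rintro a b ⟨e, r1, r2, r3, r4⟩
          exact ⟨.inl e, congrArg Sum.inl r1, congrArg Sum.inl r2, r3, r4⟩) h1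
    have a2 : (compAut V W q p').Reach (.inr p', z) (.inr q', y) :=
      rlift (fun c : W.Q × NVec d => ((.inr c.1, c.2) : (V.Q ⊕ W.Q) × NVec d))
        (by
          rintro a b ⟨e, r1, r2, r3, r4⟩
          exact ⟨.inr (.inl e), congrArg Sum.inr r1, congrArg Sum.inr r2, r3, r4⟩) h2
    have a3 : (compAut V W q p').Step (.inl q, z) (.inr p', z) :=
      ⟨.inr (.inr ()), rfl, rfl, by simp [compAut], by simp [compAut]⟩
    exact (a1.tail a3).trans a2

/-- Union. -/
def unionAut {d : ℕ} (V W : PVASS d) (p q : V.Q) (p' q' : W.Q) : PVASS d where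
  Q := (V.Q ⊕ W.Q) ⊕ Bool
  E := (V.E ⊕ W.E) ⊕ (Bool ⊕ Bool)
  fintypeQ := by have := V.fintypeQ; have := W.fintypeQ; infer_instance
  fintypeE := by have := V.fintypeE; have := W.fintypeE; infer_instance
  src := Sum.elim (Sum.elim (fun e => .inl (.inl (V.src e))) (fun e => .inl (.inr (W.src e))))
    (Sum.elim (fun _ => .inr false) (fun b => if b then .inl (.inl q) else .inl (.inr q')))
  tgt := Sum.elim (Sum.elim (fun e => .inl (.inl (V.tgt e))) (fun e => .inl (.inr (W.tgt e))))
    (Sum.elim (fun b => if b then .inl (.inl p) else .inl (.inr p')) (fun _ => .inr true))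
  upd := Sum.elim (Sum.elim V.upd W.upd) fun _ _ => 0
  test := Sum.elim (Sum.elim V.test W.test) fun _ => 0
  test_le := by
    rintro ((e | e) | e)
    · exact V.test_le e
    · exact W.test_le e
    · exact Nat.zero_le _

theorem unionAut_reach {d : ℕ} (V W : PVASS d) (p q : V.Q) (p' q' : W.Q) (x y) :
    (unionAut V W p q p' q').Reach (.inr false, x) (.inr true, y) ↔
      V.Reach (p, x) (q, y) ∨ W.Reach (p', x) (q', y) := by
  constructor
  · intro H
    have : ∀ c, (unionAut V W p q p' q').Reach (.inr false, x) c →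
        (match c with
          | (.inl (.inl s), w) => V.Reach (p, x) (s, w)
          | (.inl (.inr s), w) => W.Reach (p', x) (s, w)
          | (.inr false, w) => x = w
          | (.inr true, w) => V.Reach (p, x) (q, w) ∨ W.Reach (p', x) (q', w)) := by
      intro c H
      induction H with
      | refl => rfl
      | @tail b c _ h ih =>
        obtain ⟨b1, b2⟩ := b
        obtain ⟨c1, c2⟩ := c
        obtain ⟨e, h1, h2, h3, h4⟩ := h
        rcases e with (e | e) | e
        · simp only [unionAut, Sum.elim_inl] at h1 h2
          subst h1 h2
          exact Relation.ReflTransGen.tail ih ⟨e, rfl, rfl, h3, h4⟩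
        · simp only [unionAut, Sum.elim_inl, Sum.elim_inr] at h1 h2
          subst h1 h2
          exact Relation.ReflTransGen.tail ih ⟨e, rfl, rfl, h3, h4⟩
        · have : b2 = c2 := by
            funext i
            have := h4 i
            simp [unionAut] at this
            exact this.symm
          subst this
          rcases e with (_ | _) | (_ | _)
          all_goals
            simp only [unionAut, Sum.elim_inl, Sum.elim_inr, if_true, Bool.false_eq_true,
              if_false] at h1 h2
            subst h1 h2
            simp only at ih ⊢
          · subst ih; exact Relation.ReflTransGen.refl
          · subst ih; exact Relation.ReflTransGen.refl
          · exact .inr ih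
          · exact .inl ih
    exact this _ H
  · have s0 : ∀ (b : Bool) z, (unionAut V W p q p' q').Step (.inr false, z)
        ((if b then .inl (.inl p) else .inl (.inr p') : (V.Q ⊕ W.Q) ⊕ Bool), z) := fun b z =>
      ⟨.inr (.inl b), rfl, rfl, by simp [unionAut], by simp [unionAut]⟩
    have s1 : ∀ (b : Bool) z, (unionAut V W p q p' q').Step
        ((if b then .inl (.inl q) else .inl (.inr q') : (V.Q ⊕ W.Q) ⊕ Bool), z)
        (.inr true, z) := fun b z =>
      ⟨.inr (.inr b), rfl, rfl, by simp [unionAut], by simp [unionAut]⟩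
    rintro (h1 | h2)
    · have a1 : (unionAut V W p q p' q').Reach (.inl (.inl p), x) (.inl (.inl q), y) :=
        rlift
          (fun c : V.Q × NVec d => ((.inl (.inl c.1), c.2) : ((V.Q ⊕ W.Q) ⊕ Bool) × NVec d))
          (by
            rintro a b ⟨e, r1, r2, r3, r4⟩
            exact ⟨.inl (.inl e), congrArg (Sum.inl ∘ Sum.inl) r1, congrArg (Sum.inl ∘ Sum.inl) r2,
              r3, r4⟩) h1
      exact Relation.ReflTransGen.head (s0 true x) (a1.tail (s1 true y))
    · have a1 : (unionAut V W p q p' q').Reach (.inl (.inr p'), x) (.inl (.inr q'), y) :=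
        rlift
          (fun c : W.Q × NVec d => ((.inl (.inr c.1), c.2) : ((V.Q ⊕ W.Q) ⊕ Bool) × NVec d))
          (by
            rintro a b ⟨e, r1, r2, r3, r4⟩
            exact ⟨.inl (.inr e), congrArg (Sum.inl ∘ Sum.inr) r1, congrArg (Sum.inl ∘ Sum.inr) r2,
              r3, r4⟩) h2
      exact Relation.ReflTransGen.head (s0 false x) (a1.tail (s1 false y))

/-- Kleene star. -/
def starAut {d : ℕ} (V : PVASS d) (p q : V.Q) : PVASS d where
  Q := Option V.Q
  E := V.E ⊕ Bool
  fintypeQ := by have := V.fintypeQ; infer_instance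
  fintypeE := by have := V.fintypeE; infer_instance
  src := Sum.elim (fun e => some (V.src e)) (fun b => if b then none else some q)
  tgt := Sum.elim (fun e => some (V.tgt e)) (fun b => if b then some p else none)
  upd := Sum.elim V.upd fun _ _ => 0
  test := Sum.elim V.test fun _ => 0
  test_le := by
    rintro (e | e)
    · exact V.test_le e
    · exact Nat.zero_le _

theorem starAut_reach {d : ℕ} (V : PVASS d) (p q : V.Q) (x y) :
    (starAut V p q).Reach (none, x) (none, y) ↔
      Relation.ReflTransGen (fun a b => V.Reach (p, a) (q, b)) x y := by
  constructor
  · intro H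
    have : ∀ c, (starAut V p q).Reach (none, x) c →
        (match c with
          | (none, w) => Relation.ReflTransGen (fun a b => V.Reach (p, a) (q, b)) x w
          | (some s, w) => ∃ z, Relation.ReflTransGen (fun a b => V.Reach (p, a) (q, b)) x z ∧
              V.Reach (p, z) (s, w)) := by
      intro c H
      induction H with
      | refl => exact Relation.ReflTransGen.refl
      | @tail b c _ h ih =>
        obtain ⟨b1, b2⟩ := b
        obtain ⟨c1, c2⟩ := c
        obtain ⟨e, h1, h2, h3, h4⟩ := h
        rcases e with e | e
        · simp only [starAut, Sum.elim_inl] at h1 h2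
          subst h1 h2
          obtain ⟨z, hz, hz'⟩ := ih
          exact ⟨z, hz, Relation.ReflTransGen.tail hz' ⟨e, rfl, rfl, h3, h4⟩⟩
        · have : b2 = c2 := by
            funext i
            have := h4 i
            simp [starAut] at this
            exact this.symm
          subst this
          rcases e with _ | _
          all_goals
            simp only [starAut, Sum.elim_inr, if_true, Bool.false_eq_true, if_false] at h1 h2
            subst h1 h2
            simp only at ih ⊢
          · obtain ⟨z, hz, hz'⟩ := ih
            exact hz.tail hz'
          · exact ⟨_, ih, Relation.ReflTransGen.refl⟩
    exact this _ H
  · intro H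
    induction H with
    | refl => exact Relation.ReflTransGen.refl
    | @tail b c _ h ih =>
      have s0 : (starAut V p q).Step (none, b) (some p, b) :=
        ⟨.inr true, rfl, rfl, by simp [starAut], by simp [starAut]⟩
      have s1 : (starAut V p q).Step (some q, c) (none, c) :=
        ⟨.inr false, rfl, rfl, by simp [starAut], by simp [starAut]⟩
      have a1 : (starAut V p q).Reach (some p, b) (some q, c) :=
        rlift
          (fun c : V.Q × NVec d => ((some c.1, c.2) : Option V.Q × NVec d))
          (by
            rintro a b ⟨e, r1, r2, r3, r4⟩
            exact ⟨.inl e, congrArg some r1, congrArg some r2, r3, r4⟩) h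
      exact ((Relation.ReflTransGen.tail ih s0).trans a1).tail s1

theorem PDef.hasAut {d : ℕ} {R : Set (NVec d × NVec d)} (h : PDef d R) : HasAut d R := by
  induction h with
  | empty =>
    exact ⟨nilAut d Bool inferInstance, false, true, fun x y => by
      rw [nilAut_reach]
      exact ⟨fun h => h.elim, fun h => Bool.noConfusion (congrArg Prod.fst h)⟩⟩
  | edge u t ht => exact ⟨edgeAut d u t ht, false, true, fun x y => (edgeAut_reach x y).symm⟩
  | comp _ _ ih1 ih2 =>
    obtain ⟨V, p, q, h1⟩ := ih1
    obtain ⟨W, p', q', h2⟩ := ih2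
    refine ⟨compAut V W q p', .inl p, .inr q', fun x y => ?_⟩
    rw [compAut_reach]
    simp only [← h1, ← h2]
    rfl
  | union _ _ ih1 ih2 =>
    obtain ⟨V, p, q, h1⟩ := ih1
    obtain ⟨W, p', q', h2⟩ := ih2
    refine ⟨unionAut V W p q p' q', .inr false, .inr true, fun x y => ?_⟩
    rw [unionAut_reach]
    simp only [← h1, ← h2]
    rfl
  | star _ ih1 =>
    obtain ⟨V, p, q, h1⟩ := ih1
    refine ⟨starAut V p q, none, none, fun x y => ?_⟩
    rw [starAut_reach]
    simp only [← h1]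
    rfl

/-! ### Representations -/

/-- `X` is represented in dimension `d`. -/
def RepAt {a b : ℕ} (X : Set (NVec a × NVec b)) (d : ℕ) : Prop :=
  ∃ R, PDef d R ∧ ∀ x y, (x, y) ∈ X ↔ (embV d x, embV d y) ∈ R

theorem RepAt.mono {a b : ℕ} {X : Set (NVec a × NVec b)} {d D : ℕ} (ha : a ≤ d) (hb : b ≤ d)
    (h : RepAt X d) (hD : d ≤ D) : RepAt X D := by
  obtain ⟨R, hR, hX⟩ := h
  obtain ⟨R', hR', h'⟩ := hR.pad hD
  refine ⟨R', hR', fun x y => ?_⟩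
  rw [hX, ← embV_embV ha hD, ← embV_embV hb hD, h']
  constructor
  · intro h; exact ⟨_, rfl, h⟩
  · rintro ⟨y', e, h⟩
    rwa [embV_inj hD e]

theorem IsPVASSSection.repAt {a b : ℕ} {X : Set (NVec a × NVec b)} (h : IsPVASSSection X) :
    ∃ d, a ≤ d ∧ b ≤ d ∧ RepAt X d := by
  obtain ⟨d, h', h'', V, p, q, bs, bt, rfl⟩ := h
  refine ⟨d, h', h'', _, .comp (.edge (fun i => (fitVec h' bs 0 i : ℤ)) 0 (Nat.zero_le _))
    (.comp (PDef.reach V p q) (.edge (fun i => -(fitVec h'' bt 0 i : ℤ)) 0 (Nat.zero_le _))), ?_⟩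
  intro x y
  constructor
  · intro H
    refine ⟨fitVec h' bs x, ⟨by simp, ?_⟩, fitVec h'' bt y, H, by simp, ?_⟩
    · intro i
      simp [fitVec_add h' bs x i]
    · intro i
      simp [fitVec_add h'' bt y i]
  · rintro ⟨z, ⟨_, h1⟩, z', h2, _, h3⟩
    have e1 : z = fitVec h' bs x := by
      funext i
      have := h1 i
      rw [fitVec_add]
      simp only at this
      omega
    have e2 : z' = fitVec h'' bt y := by
      funext i
      have := h3 i
      rw [fitVec_add]
      simp only at this
      omega
    subst e1 e2
    exact h2

theorem RepAt.isPVASSSection {a b d : ℕ} {X : Set (NVec a × NVec b)} (ha : a ≤ d) (hb : b ≤ d)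
    (h : RepAt X d) : IsPVASSSection X := by
  obtain ⟨R, hR, hX⟩ := h
  obtain ⟨V, p, q, hV⟩ := hR.hasAut
  refine ⟨d, ha, hb, V, p, q, 0, 0, ?_⟩
  ext ⟨x, y⟩
  rw [hX, hV, Set.mem_ofPred_eq, fitVec_zero, fitVec_zero]

theorem mem_testRel {d m : ℕ} (hm : m ≤ d) (w w' : NVec d) :
    (w, w') ∈ EdgeRel d 0 (d - m) ↔ ∃ y : NVec m, w = embV d y ∧ w' = embV d y := by
  constructor
  · rintro ⟨h1, h2⟩
    obtain ⟨y, rfl⟩ := exists_embV hm w h1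
    refine ⟨y, rfl, ?_⟩
    funext i
    have := h2 i
    simpa using this
  · rintro ⟨y, rfl, rfl⟩
    exact ⟨fun j hj => embV_low y j hj, by simp⟩

theorem expr_repAt {a b : ℕ} (E : Expr a b) : ∃ d, a ≤ d ∧ b ≤ d ∧ RepAt E.Rel d := by
  induction E with
  | leaf Y hY =>
    obtain ⟨d, h', h'', V, _, p, q, bs, bt, rfl⟩ := hY
    exact IsPVASSSection.repAt ⟨d, h', h'', V, p, q, bs, bt, rfl⟩
  | @comp a m b E₁ E₂ ih1 ih2 =>
    obtain ⟨d1, ha1, hb1, r1⟩ := ih1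
    obtain ⟨d2, ha2, hb2, r2⟩ := ih2
    obtain ⟨R, hR, e1⟩ := r1.mono ha1 hb1 (le_max_left d1 d2)
    obtain ⟨S, hS, e2⟩ := r2.mono ha2 hb2 (le_max_right d1 d2)
    have hm : m ≤ max d1 d2 := by omega
    refine ⟨max d1 d2, by omega, by omega, _,
      .comp hR (.comp (.edge 0 (max d1 d2 - m) (by omega)) hS), fun x y => ?_⟩
    constructor
    · rintro ⟨z, h1, h2⟩
      exact ⟨_, (e1 _ _).1 h1, _, (mem_testRel hm _ _).2 ⟨z, rfl, rfl⟩, (e2 _ _).1 h2⟩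
    · rintro ⟨w, h1, w', h2, h3⟩
      obtain ⟨z, rfl, rfl⟩ := (mem_testRel hm _ _).1 h2
      exact ⟨z, (e1 _ _).2 h1, (e2 _ _).2 h3⟩
  | union E₁ E₂ ih1 ih2 =>
    obtain ⟨d1, ha1, hb1, r1⟩ := ih1
    obtain ⟨d2, ha2, hb2, r2⟩ := ih2
    obtain ⟨R, hR, e1⟩ := r1.mono ha1 hb1 (le_max_left d1 d2)
    obtain ⟨S, hS, e2⟩ := r2.mono ha2 hb2 (le_max_right d1 d2)
    refine ⟨max d1 d2, by omega, by omega, _, .union hR hS, fun x y => ?_⟩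
    simp only [Expr.Rel, Set.mem_union, e1, e2]
  | @star a E ih =>
    obtain ⟨d, ha, _, R, hR, e⟩ := ih
    refine ⟨d, ha, ha, _, .star (.comp hR (.edge 0 (d - a) (by omega))), fun x y => ?_⟩
    constructor
    · intro H
      change Relation.ReflTransGen _ x y at H
      change Relation.ReflTransGen _ (embV d x) (embV d y)
      refine rlift (embV d) ?_ H
      intro u v h
      exact ⟨_, (e _ _).1 h, (mem_testRel ha _ _).2 ⟨v, rfl, rfl⟩⟩
    · intro H
      change Relation.ReflTransGen _ (embV d x) (embV d y) at H
      have : ∀ w, Relation.ReflTransGen (fun u v => (u, v) ∈ RelComp R (EdgeRel d 0 (d - a)))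
          (embV d x) w → ∃ z, w = embV d z ∧ Relation.ReflTransGen
            (fun u v => (u, v) ∈ E.Rel) x z := by
        intro w H
        induction H with
        | refl => exact ⟨x, rfl, .refl⟩
        | tail _ h ih =>
          obtain ⟨z, rfl, hz⟩ := ih
          obtain ⟨v, h1, h2⟩ := h
          obtain ⟨z', rfl, hz'⟩ := (mem_testRel ha _ _).1 h2
          exact ⟨z', hz', hz.tail ((e _ _).2 h1)⟩
      obtain ⟨z, e1, hz⟩ := this _ H
      have := embV_inj ha e1
      subst this
      exact hz

/-! ### Back to expressions -/

theorem leaf_emb {a d : ℕ} (h : a ≤ d) :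
    IsVASSSection {p : NVec a × NVec d | p.2 = embV d p.1} := by
  refine ⟨d, h, le_refl d, nilAut d Unit inferInstance, fun e => e.elim, (), (), 0, 0, ?_⟩
  ext ⟨x, y⟩
  simp only [Set.mem_ofPred_eq, nilAut_reach, fitVec_zero, embV_self]
  constructor
  · intro h; rw [h]
  · intro h; exact (congrArg Prod.snd h).symm

theorem leaf_proj {a d : ℕ} (h : a ≤ d) :
    IsVASSSection {p : NVec d × NVec a | p.1 = embV d p.2} := by
  refine ⟨d, le_refl d, h, nilAut d Unit inferInstance, fun e => e.elim, (), (), 0, 0, ?_⟩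
  ext ⟨x, y⟩
  simp only [Set.mem_ofPred_eq, nilAut_reach, fitVec_zero, embV_self]
  constructor
  · intro h; rw [h]
  · intro h; exact congrArg Prod.snd h

theorem leaf_edge {d : ℕ} (u : Fin d → ℤ) : IsVASSSection (EdgeRel d u 0) := by
  refine ⟨d, le_refl d, le_refl d, edgeAut d u 0 (Nat.zero_le _), fun e => rfl, false, true, 0, 0,
    ?_⟩
  ext ⟨x, y⟩
  simp only [Set.mem_ofPred_eq, fitVec_zero, embV_self]
  rw [edgeAut_reach]

theorem leaf_empty {d : ℕ} : IsVASSSection (∅ : Set (NVec d × NVec d)) := by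
  refine ⟨d, le_refl d, le_refl d, nilAut d Bool inferInstance, fun e => e.elim, false, true, 0, 0,
    ?_⟩
  ext ⟨x, y⟩
  simp only [Set.mem_ofPred_eq, nilAut_reach]
  exact ⟨fun h => h.elim, fun h => Bool.noConfusion (congrArg Prod.fst h)⟩

theorem PDef.expr {d : ℕ} {R : Set (NVec d × NVec d)} (h : PDef d R) :
    ∃ E : Expr d d, E.Rel = R := by
  induction h with
  | empty => exact ⟨.leaf _ leaf_empty, rfl⟩
  | edge u t ht =>
    refine ⟨.comp (.leaf _ (leaf_proj (Nat.sub_le d t)))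
      (.comp (.leaf _ (leaf_emb (Nat.sub_le d t))) (.leaf _ (leaf_edge u))), ?_⟩
    ext ⟨x, y⟩
    constructor
    · rintro ⟨z, hz, w, hw, h1, h2⟩
      change x = embV d z at hz
      change w = embV d z at hw
      subst hz hw
      exact ⟨fun j hj => embV_low z j (by omega), h2⟩
    · rintro ⟨h1, h2⟩
      obtain ⟨z, rfl⟩ := exists_embV (Nat.sub_le d t) x (fun j hj => h1 j (by omega))
      exact ⟨z, (rfl : embV d z = embV d z), embV d z, (rfl : embV d z = embV d z), by simp, h2⟩
  | comp _ _ ih1 ih2 =>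
    obtain ⟨E, rfl⟩ := ih1
    obtain ⟨F, rfl⟩ := ih2
    exact ⟨.comp E F, rfl⟩
  | union _ _ ih1 ih2 =>
    obtain ⟨E, rfl⟩ := ih1
    obtain ⟨F, rfl⟩ := ih2
    exact ⟨.union E F, rfl⟩
  | star _ ih =>
    obtain ⟨E, rfl⟩ := ih
    exact ⟨.star E, rfl⟩

/-- A relation `X ⊆ ℕ^{d'} × ℕ^{d''}` is a PVASS section if and only if
`X = Rel(E)` for some expression `E` of type `E_{d',d''}` over VASS sections. -/
theorem isPVASSSection_iff_exists_expr {d' d'' : ℕ} (X : Set (NVec d' × NVec d'')) :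
    IsPVASSSection X ↔ ∃ E : Expr d' d'', E.Rel = X := by
  constructor
  · intro h
    obtain ⟨d, ha, hb, R, hR, hX⟩ := h.repAt
    obtain ⟨E, rfl⟩ := hR.expr
    refine ⟨.comp (.leaf _ (leaf_emb ha)) (.comp E (.leaf _ (leaf_proj hb))), ?_⟩
    ext ⟨x, y⟩
    rw [hX]
    constructor
    · rintro ⟨z, hz, w, h1, hw⟩
      change z = embV d x at hz
      change w = embV d y at hw
      subst hz hw
      exact h1
    · intro h1
      exact ⟨embV d x, (rfl : embV d x = embV d x), embV d y, h1, (rfl : embV d y = embV d y)⟩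
  · rintro ⟨E, rfl⟩
    obtain ⟨d, ha, hb, h⟩ := expr_repAt E
    exact h.isPVASSSection ha hb
end

section
/- For every expression E over VASS sections there exists an expression E' with Rel(E') = Rel(E) such that in E' the Kleene star is only applied to subexpressions F whose relation Rel(F) is monotone. -/
/-- Add `1` to the coordinate `j` of a vector. -/
def addU {n : ℕ} (x : NVec n) (j : Fin n) : NVec n :=
  fun i => if i = j then x i + 1 else x i

/-- A relation `R ⊆ ℕ^a × ℕ^a` is monotone: for every `(x,y) ∈ R` and every coordinate
`j`, also `(x + e_j, y + e_j) ∈ R`. -/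
def MonotoneRel {a : ℕ} (R : Set (NVec a × NVec a)) : Prop :=
  ∀ p ∈ R, ∀ j : Fin a, (addU p.1 j, addU p.2 j) ∈ R

/-- In this expression, the Kleene star is only applied to subexpressions whose
denoted relation is monotone. -/
def Expr.StarOnMonotone : ∀ {a b : ℕ}, Expr a b → Prop
  | _, _, .leaf _ _ => True
  | _, _, .comp E₁ E₂ => E₁.StarOnMonotone ∧ E₂.StarOnMonotone
  | _, _, .union E₁ E₂ => E₁.StarOnMonotone ∧ E₂.StarOnMonotone
  | _, _, .star E => E.StarOnMonotone ∧ MonotoneRel E.Rel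

theorem rtg_lift {α β : Type*} {r : α → α → Prop} {p : β → β → Prop} (f : α → β)
    (h : ∀ u v, r u v → p (f u) (f v)) {x y : α} (hxy : Relation.ReflTransGen r x y) :
    Relation.ReflTransGen p (f x) (f y) := by
  induction hxy with
  | refl => exact Relation.ReflTransGen.refl
  | tail _ hs ih => exact ih.tail (h _ _ hs)

/-- Monotonicity in the last `m` coordinates. -/
def TailMono {a b : ℕ} (m : ℕ) (R : Set (NVec a × NVec b)) : Prop :=
  ∀ x y, (x, y) ∈ R → ∀ (i : Fin a) (j : Fin b), a + (j : ℕ) = b + (i : ℕ) → a ≤ i + m →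
    (addU x i, addU y j) ∈ R

/-- Expressible by a good expression. -/
def GoodRel {a b : ℕ} (R : Set (NVec a × NVec b)) : Prop :=
  ∃ E : Expr a b, E.Rel = R ∧ E.StarOnMonotone

def Good {a b : ℕ} (m : ℕ) (R : Set (NVec a × NVec b)) : Prop := GoodRel R ∧ TailMono m R

theorem TailMono.mono {a b m n : ℕ} {R : Set (NVec a × NVec b)} (h : TailMono m R)
    (hn : n ≤ m) : TailMono n R :=
  fun x y hxy i j hij hi => h x y hxy i j hij (by omega)

theorem Good.mono {a b m n : ℕ} {R : Set (NVec a × NVec b)} (h : Good m R)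
    (hn : n ≤ m) : Good n R := ⟨h.1, h.2.mono hn⟩

theorem Good.comp {a b k m : ℕ} {R : Set (NVec a × NVec k)} {S : Set (NVec k × NVec b)}
    (hR : Good m R) (hS : Good m S) (hk : m ≤ k) : Good m (RelComp R S) := by
  obtain ⟨⟨E, hE, gE⟩, tR⟩ := hR
  obtain ⟨⟨F, hF, gF⟩, tS⟩ := hS
  refine ⟨⟨.comp E F, by simp [Expr.Rel, hE, hF], gE, gF⟩, ?_⟩
  rintro x y ⟨z, h1, h2⟩ i j hij hi
  have hi' := i.2
  have hlt : k + i - a < k := by omega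
  refine ⟨addU z ⟨k + i - a, hlt⟩, tR _ _ h1 _ _ ?_ hi, tS _ _ h2 _ _ ?_ ?_⟩ <;> simp only <;> omega

theorem Good.union {a b m : ℕ} {R S : Set (NVec a × NVec b)}
    (hR : Good m R) (hS : Good m S) : Good m (R ∪ S) := by
  obtain ⟨⟨E, hE, gE⟩, tR⟩ := hR
  obtain ⟨⟨F, hF, gF⟩, tS⟩ := hS
  refine ⟨⟨.union E F, by simp [Expr.Rel, hE, hF], gE, gF⟩, ?_⟩
  rintro x y (h | h) i j hij hi
  · exact Or.inl (tR _ _ h _ _ hij hi)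
  · exact Or.inr (tS _ _ h _ _ hij hi)

theorem Good.star {a : ℕ} {R : Set (NVec a × NVec a)} (hR : Good a R) : Good a (RelStar R) := by
  obtain ⟨⟨E, hE, gE⟩, tR⟩ := hR
  refine ⟨⟨.star E, by simp [Expr.Rel, hE], gE, ?_⟩, ?_⟩
  · rw [hE]
    rintro ⟨x, y⟩ h j
    exact tR x y h j j rfl (by omega)
  · intro x y h i j hij hi
    obtain rfl : i = j := by ext; omega
    exact rtg_lift (fun z => addU z i)
      (fun u v huv => tR u v huv i i rfl hi) h

theorem step_addU {d : ℕ} (V : PVASS d) (hV : ∀ e, V.test e = 0) (i : Fin d)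
    (c c' : V.Q × NVec d) (h : V.Step c c') : V.Step (c.1, addU c.2 i) (c'.1, addU c'.2 i) := by
  obtain ⟨e, h1, h2, h3, h4⟩ := h
  refine ⟨e, h1, h2, ?_, ?_⟩
  · intro j hj
    simp [hV] at hj
  · intro k
    have := h4 k
    simp only [addU]
    split_ifs <;> push_cast <;> linarith

theorem fitVec_addU {d a : ℕ} (h : a ≤ d) (b : Fin (d - a) → ℕ) (x : NVec a) (i : Fin a)
    (k : Fin d) (hk : (k : ℕ) = d - a + i) : fitVec h b (addU x i) = addU (fitVec h b x) k := by
  funext l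
  obtain ⟨l', rfl⟩ : ∃ l' : Fin (d - a + a), l = Fin.cast (Nat.sub_add_cancel h) l' :=
    ⟨Fin.cast (Nat.sub_add_cancel h).symm l, by simp⟩
  simp only [fitVec, addU, Fin.ext_iff]
  induction l' using Fin.addCases with
  | left l => 
    have := l.2
    simp; omega
  | right l => simp [hk, addU, Fin.ext_iff]

theorem leaf_good {a b : ℕ} (Y : Set (NVec a × NVec b)) (hY : IsVASSSection Y) (m : ℕ) :
    Good m Y := by
  refine ⟨⟨.leaf Y hY, rfl, trivial⟩, ?_⟩
  obtain ⟨d, h', h'', V, hV, p, q, bs, bt, rfl⟩ := hY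
  intro x y h i j hij hi
  have hi' := i.2
  have hlt : d - a + i < d := by omega
  simp only [Set.mem_ofPred_eq] at h ⊢
  rw [fitVec_addU h' bs x i ⟨d - a + i, hlt⟩ rfl,
    fitVec_addU h'' bt y j ⟨d - a + i, hlt⟩ (by simp only; omega)]
  exact rtg_lift
    (fun c : V.Q × NVec d => (c.1, addU c.2 ⟨d - a + i, hlt⟩)) (step_addU V hV _) h

/-- The identity relation. -/
def idRel (a : ℕ) : Set (NVec a × NVec a) := {p | p.1 = p.2}

theorem fitVec_inj {d a : ℕ} (h : a ≤ d) (b : Fin (d - a) → ℕ) (x y : NVec a)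
    (hxy : fitVec h b x = fitVec h b y) : x = y := by
  funext i
  have := congrFun hxy (Fin.cast (Nat.sub_add_cancel h) (Fin.natAdd (d - a) i))
  simpa [fitVec] using this

theorem id_good (a m : ℕ) : Good m (idRel a) := by
  apply leaf_good
  refine ⟨a, le_rfl, le_rfl, ⟨Unit, Empty, inferInstance, inferInstance, fun _ => (), fun _ => (),
    fun e => e.elim, fun _ => 0, fun _ => Nat.zero_le _⟩, fun _ => rfl, (), (),
    fun _ => 0, fun _ => 0, ?_⟩
  ext ⟨x, y⟩
  simp only [idRel, Set.mem_ofPred_eq]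
  constructor
  · rintro rfl
    exact Relation.ReflTransGen.refl
  · intro h
    rcases Relation.ReflTransGen.cases_head h with h | ⟨c, ⟨e, _⟩, _⟩
    · exact fitVec_inj le_rfl (fun _ => 0) _ _ (Prod.ext_iff.1 h).2
    · exact e.elim

theorem empty_good (a b m : ℕ) : Good m (∅ : Set (NVec a × NVec b)) := by
  apply leaf_good
  refine ⟨max a b, le_max_left _ _, le_max_right _ _, ⟨Bool, Empty, inferInstance, inferInstance,
    fun _ => true, fun _ => true,
    fun e => e.elim, fun _ => 0, fun _ => Nat.zero_le _⟩, fun _ => rfl, true, false,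
    fun _ => 0, fun _ => 0, ?_⟩
  ext ⟨x, y⟩
  simp only [Set.mem_ofPred_eq, Set.mem_empty_iff_false, false_iff]
  intro h
  rcases Relation.ReflTransGen.cases_head h with h | ⟨c, ⟨e, _⟩, _⟩
  · exact absurd (Prod.ext_iff.1 h).1 (by simp)
  · exact e.elim

/-- A relation factoring through dimension `m` in a tail-monotone way. -/
def FacT {a b : ℕ} (m : ℕ) (S : Set (NVec a × NVec b)) : Prop :=
  m ≤ a ∧ m ≤ b ∧ ∃ (A : Set (NVec a × NVec m)) (B : Set (NVec m × NVec b)),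
    Good m A ∧ Good m B ∧ S = RelComp A B

/-- The union of a list of relations. -/
def UL {a b : ℕ} (L : List (ℕ × Set (NVec a × NVec b))) : Set (NVec a × NVec b) :=
  {p | ∃ t ∈ L, p ∈ t.2}

theorem UL_cons {a b : ℕ} (t : ℕ × Set (NVec a × NVec b)) (L) : UL (t :: L) = t.2 ∪ UL L := by
  ext p; simp [UL]

theorem UL_good {a b m : ℕ} (L : List (ℕ × Set (NVec a × NVec b)))
    (hL : ∀ t ∈ L, FacT t.1 t.2) (hm : ∀ t ∈ L, m ≤ t.1) : Good m (UL L) := by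
  induction L with
  | nil => 
    have : UL ([] : List (ℕ × Set (NVec a × NVec b))) = ∅ := by ext p; simp [UL]
    rw [this]; exact empty_good _ _ _
  | cons t L ih =>
    rw [UL_cons]
    refine Good.union ?_ (ih (fun t ht => hL t (by simp [ht])) (fun t ht => hm t (by simp [ht])))
    obtain ⟨_, _, A, B, hA, hB, h⟩ := hL t (by simp)
    rw [h]
    exact (hA.comp hB le_rfl).mono (hm t (by simp))

theorem RelComp_assoc {α β γ δ : Type*} (R : Set (α × β)) (S : Set (β × γ)) (T : Set (γ × δ)) :
    RelComp (RelComp R S) T = RelComp R (RelComp S T) := by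
  ext ⟨x, y⟩
  constructor
  · rintro ⟨u, ⟨v, h1, h2⟩, h3⟩
    exact ⟨v, h1, u, h2, h3⟩
  · rintro ⟨v, h1, u, h2, h3⟩
    exact ⟨u, ⟨v, h1, h2⟩, h3⟩

theorem FacT.comp {a b c m n : ℕ} {R : Set (NVec a × NVec b)} {S : Set (NVec b × NVec c)}
    (hR : FacT m R) (hS : FacT n S) : FacT (min m n) (RelComp R S) := by
  obtain ⟨h1, h2, A, B, hA, hB, rfl⟩ := hR
  obtain ⟨h3, h4, C, D, hC, hD, rfl⟩ := hS
  rcases le_total m n with h | h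
  · rw [min_eq_left h]
    refine ⟨h1, by omega, A, RelComp B (RelComp C D), hA, ?_, RelComp_assoc _ _ _⟩
    exact hB.comp ((hC.comp hD le_rfl).mono h) h2
  · rw [min_eq_right h]
    refine ⟨by omega, h4, RelComp (RelComp A B) C, D, ?_, hD, (RelComp_assoc _ _ _).symm⟩
    exact ((hA.comp hB le_rfl).mono h).comp hC h3

theorem star_union {α β : Type*} (X : Set (α × α)) (A : Set (α × β)) (B : Set (β × α)) :
    RelStar (RelComp A B ∪ X) = RelComp
      (RelComp (RelComp (RelStar X) A) (RelStar (RelComp (RelComp B (RelStar X)) A)))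
      (RelComp B (RelStar X)) ∪ RelStar X := by
  have hsub : ∀ x y, (x, y) ∈ RelStar X → (x, y) ∈ RelStar (RelComp A B ∪ X) :=
    fun x y h => rtg_lift (r := fun a b => (a, b) ∈ X)
      (p := fun a b => (a, b) ∈ RelComp A B ∪ X) id (fun _ _ h => Or.inr h) h
  ext ⟨x, y⟩
  constructor
  · intro h
    change Relation.ReflTransGen _ x y at h
    induction h with
    | refl => exact Or.inr Relation.ReflTransGen.refl
    | tail _ hs ih =>
      rcases ih with ⟨v, ⟨u, hu, huv⟩, w, hvw, hwq⟩ | ih <;> rcases hs with ⟨u', h1, h2⟩ | hs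
      · exact Or.inl ⟨u', ⟨u, hu, Relation.ReflTransGen.tail huv ⟨_, ⟨w, hvw, hwq⟩, h1⟩⟩, _, h2,
          Relation.ReflTransGen.refl⟩
      · exact Or.inl ⟨v, ⟨u, hu, huv⟩, w, hvw, Relation.ReflTransGen.tail hwq hs⟩
      · exact Or.inl ⟨u', ⟨u', ⟨_, ih, h1⟩, Relation.ReflTransGen.refl⟩, _, h2,
          Relation.ReflTransGen.refl⟩
      · exact Or.inr (Relation.ReflTransGen.tail ih hs)
  · rintro (⟨v, ⟨u, ⟨z, hxz, hzu⟩, huv⟩, w, hvw, hwy⟩ | h)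
    · have key : ∀ w, (v, w) ∈ B → (x, w) ∈ RelStar (RelComp A B ∪ X) := by
        change Relation.ReflTransGen _ u v at huv
        change (x, z) ∈ RelStar X at hxz
        change (z, u) ∈ A at hzu
        clear hvw hwy
        induction huv with
        | refl =>
          intro w hw
          exact Relation.ReflTransGen.tail (b := z) (hsub _ _ hxz) (Or.inl ⟨_, hzu, hw⟩)
        | tail _ hs ih =>
          intro w hw
          obtain ⟨s, ⟨r, h1, h2⟩, h3⟩ := hs
          exact Relation.ReflTransGen.tail (b := s)
            (Relation.ReflTransGen.trans (b := r) (ih r h1) (hsub r s h2))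
            (Or.inl ⟨_, h3, hw⟩)
      exact Relation.ReflTransGen.trans (key w hvw) (hsub _ _ hwy)
    · exact hsub _ _ h

theorem star_list {a : ℕ} (L : List (ℕ × Set (NVec a × NVec a)))
    (hs : L.Pairwise (fun s t => s.1 ≤ t.1)) (hL : ∀ t ∈ L, FacT t.1 t.2) :
    ∃ L' : List (ℕ × Set (NVec a × NVec a)), (∀ t ∈ L', FacT t.1 t.2) ∧
      UL L' = RelStar (UL L) ∧ ∀ n ≤ a, (∀ t ∈ L, n ≤ t.1) → ∀ t ∈ L', n ≤ t.1 := by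
  induction L with
  | nil =>
    refine ⟨[(a, idRel a)], ?_, ?_, ?_⟩
    · simp only [List.mem_singleton, forall_eq]
      refine ⟨le_rfl, le_rfl, idRel a, idRel a, id_good _ _, id_good _ _, ?_⟩
      ext ⟨x, y⟩; simp [idRel, RelComp]
    · ext ⟨x, y⟩
      simp only [UL, List.mem_singleton, exists_eq_left, idRel, RelStar, Set.mem_ofPred_eq]
      constructor
      · rintro rfl; exact Relation.ReflTransGen.refl
      · intro h
        rcases Relation.ReflTransGen.cases_head h with h | ⟨c, ⟨e, he, _⟩, _⟩
        · exact h
        · simp at he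
    · intro n hn _
      simpa using hn
  | cons t L ih =>
    obtain ⟨m, S⟩ := t
    rw [List.pairwise_cons] at hs
    obtain ⟨L', h1, h2, h3⟩ := ih hs.2 (fun t ht => hL t (by simp [ht]))
    obtain ⟨hma, _, A, B, hA, hB, hS⟩ := hL (m, S) (by simp)
    simp only at hma hA hB hS
    have hY : Good m (UL L') := UL_good L' h1 (h3 m hma hs.1)
    have hBY := hB.comp hY hma
    refine ⟨(m, RelComp (RelComp (RelComp (UL L') A) (RelStar (RelComp (RelComp B (UL L')) A)))
      (RelComp B (UL L'))) :: L', ?_, ?_, ?_⟩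
    · intro t ht
      rcases List.mem_cons.1 ht with rfl | ht
      · exact ⟨hma, hma, _, _, (hY.comp hA hma).comp (hBY.comp hA hma).star le_rfl, hBY, rfl⟩
      · exact h1 t ht
    · rw [UL_cons, UL_cons, hS, star_union, h2]
    · intro n hn hb t ht
      rcases List.mem_cons.1 ht with rfl | ht
      · exact hb (m, S) (by simp)
      · exact h3 n hn (fun t ht => hb t (by simp [ht])) t ht

theorem exists_list {a b : ℕ} (E : Expr a b) :
    ∃ L : List (ℕ × Set (NVec a × NVec b)), (∀ t ∈ L, FacT t.1 t.2) ∧ UL L = E.Rel := by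
  induction E with
  | @leaf a b Y hY =>
    refine ⟨[(min a b, Y)], ?_, by ext; simp [UL, Expr.Rel]⟩
    simp only [List.mem_singleton, forall_eq]
    rcases le_total a b with h | h
    · rw [min_eq_left h]
      refine ⟨le_rfl, h, idRel a, Y, id_good _ _, leaf_good _ hY _, ?_⟩
      ext ⟨x, y⟩; simp [idRel, RelComp]
    · rw [min_eq_right h]
      refine ⟨h, le_rfl, Y, idRel b, leaf_good _ hY _, id_good _ _, ?_⟩
      ext ⟨x, y⟩; simp [idRel, RelComp]
  | comp E F ihE ihF =>
    obtain ⟨L, hL, eL⟩ := ihE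
    obtain ⟨M, hM, eM⟩ := ihF
    refine ⟨L.flatMap fun s => M.map fun t => (min s.1 t.1, RelComp s.2 t.2), ?_, ?_⟩
    · intro r hr
      simp only [List.mem_flatMap, List.mem_map] at hr
      obtain ⟨s, hs, t, ht, rfl⟩ := hr
      exact (hL s hs).comp (hM t ht)
    · rw [Expr.Rel, ← eL, ← eM]
      ext ⟨x, y⟩
      constructor
      · rintro ⟨r, hr, h⟩
        simp only [List.mem_flatMap, List.mem_map] at hr
        obtain ⟨s, hs, t, ht, rfl⟩ := hr
        obtain ⟨z, h1, h2⟩ := h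
        exact ⟨z, ⟨s, hs, h1⟩, t, ht, h2⟩
      · rintro ⟨z, ⟨s, hs, h1⟩, t, ht, h2⟩
        refine ⟨(min s.1 t.1, RelComp s.2 t.2), ?_, z, h1, h2⟩
        simp only [List.mem_flatMap, List.mem_map]
        exact ⟨s, hs, t, ht, rfl⟩
  | union E F ihE ihF =>
    obtain ⟨L, hL, eL⟩ := ihE
    obtain ⟨M, hM, eM⟩ := ihF
    refine ⟨L ++ M, ?_, ?_⟩
    · intro t ht
      rcases List.mem_append.1 ht with ht | ht
      · exact hL t ht
      · exact hM t ht
    · rw [Expr.Rel, ← eL, ← eM]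
      ext p
      simp only [UL, List.mem_append, Set.mem_ofPred_eq, Set.mem_union, or_and_right, exists_or]
  | star E ih =>
    obtain ⟨L, hL, eL⟩ := ih
    classical
    have hp := List.mergeSort_perm L (fun s t => decide (s.1 ≤ t.1))
    have hsort := List.pairwise_mergeSort (le := fun s t : ℕ × _ => decide (s.1 ≤ t.1))
      (by intro a b c h1 h2; simp only [decide_eq_true_eq] at *; omega)
      (by intro a b; simp only [Bool.or_eq_true, decide_eq_true_eq]; omega) L
    obtain ⟨L', h1, h2, _⟩ := star_list _ (hsort.imp (by simp))
      (fun t ht => hL t (hp.mem_iff.1 ht))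
    refine ⟨L', h1, ?_⟩
    rw [h2, Expr.Rel, ← eL]
    congr 1
    ext p
    simp only [UL, hp.mem_iff]

/-- For every expression `E` over VASS sections there is an expression
`E'` with `Rel(E') = Rel(E)` in which the Kleene star is only applied to subexpressions
whose relation is monotone. -/
theorem exists_expr_star_on_monotone {a b : ℕ} (E : Expr a b) :
    ∃ E' : Expr a b, E'.Rel = E.Rel ∧ E'.StarOnMonotone := by
  obtain ⟨L, hL, eL⟩ := exists_list E
  obtain ⟨⟨E', h1, h2⟩, _⟩ := UL_good (m := 0) L hL (fun _ _ => Nat.zero_le _)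
  exact ⟨E', h1.trans eL, h2⟩
end

section
/- Let V be a PVASS and let C_s, C_t be two configurations of V such that C_s does not reach C_t, i.e. ¬(C_s →_V* C_t). Then there exists a set S of configurations of V such that: (i) for every state q, the set {x ∈ ℕ^d : (q,x) ∈ S} is semilinear; (ii) S is an inductive invariant, i.e. whenever c ∈ S and c →_V c' then c' ∈ S; and (iii) C_s ∈ S and C_t ∉ S. -/
/-- A set in a commutative monoid is linear if it is of the form
`b + ℕ·p₁ + … + ℕ·p_r`. -/
def IsLinearSubset {M : Type*} [AddCommMonoid M] (L : Set M) : Prop :=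
  ∃ (b : M) (r : ℕ) (p : Fin r → M),
    L = {x | ∃ c : Fin r → ℕ, x = b + ∑ i, c i • p i}

/-- A set is semilinear if it is a finite union of linear sets. -/
def IsSemilinearSubset {M : Type*} [AddCommMonoid M] (S : Set M) : Prop :=
  ∃ (n : ℕ) (L : Fin n → Set M), (∀ i, IsLinearSubset (L i)) ∧ S = ⋃ i, L i

namespace PV

section nice
variable {N N' : Type} [AddCommMonoid N] [AddCommMonoid N']

/-- Submonoids that are traces of (rational) subspaces. -/
structure Lin (U : AddSubmonoid N) : Prop where
  sub : ∀ x y, x ∈ U → x + y ∈ U → y ∈ U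
  div : ∀ (k : ℕ) x, 1 ≤ k → k • x ∈ U → x ∈ U

/-- The cone of `P` is dense in a finitely generated cone. -/
def Dense (P : AddSubmonoid N) : Prop :=
  ∃ C : AddSubmonoid N, C.FG ∧ P ≤ C ∧ ∃ p0 ∈ P, ∀ c ∈ C, ∃ k : ℕ, 1 ≤ k ∧ k • (c + p0) ∈ P

/-- Hereditary density. -/
def Nice (P : AddSubmonoid N) : Prop := ∀ U : AddSubmonoid N, Lin U → Dense (P ⊓ U)

theorem Lin.top : Lin (⊤ : AddSubmonoid N) := ⟨fun _ _ _ _ => trivial, fun _ _ _ _ => trivial⟩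

theorem Lin.inf {U V : AddSubmonoid N} (hU : Lin U) (hV : Lin V) : Lin (U ⊓ V) :=
  ⟨fun x y h1 h2 => ⟨hU.sub x y h1.1 h2.1, hV.sub x y h1.2 h2.2⟩,
   fun k x h1 h2 => ⟨hU.div k x h1 h2.1, hV.div k x h1 h2.2⟩⟩

theorem Lin.iInf {ι : Sort*} {U : ι → AddSubmonoid N} (hU : ∀ i, Lin (U i)) : Lin (⨅ i, U i) :=
  ⟨fun x y h1 h2 => by
    rw [AddSubmonoid.mem_iInf] at *
    exact fun i => (hU i).sub x y (h1 i) (h2 i),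
   fun k x h1 h2 => by
    rw [AddSubmonoid.mem_iInf] at *
    exact fun i => (hU i).div k x h1 (h2 i)⟩

theorem Lin.comap {U : AddSubmonoid N'} (hU : Lin U) (f : N →+ N') : Lin (U.comap f) :=
  ⟨fun x y h1 h2 => by
    simp only [AddSubmonoid.mem_comap, map_add] at *
    exact hU.sub _ _ h1 h2,
   fun k x h1 h2 => by
    simp only [AddSubmonoid.mem_comap, map_nsmul] at *
    exact hU.div k _ h1 h2⟩

theorem fg_inf {C U : AddSubmonoid N} (hC : C.FG) (hU : ∀ x y, x ∈ U → x + y ∈ U → y ∈ U) :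
    (C ⊓ U).FG := by
  classical
  obtain ⟨S, rfl⟩ := hC
  let φ : (S → ℕ) →+ N :=
    { toFun := fun c => ∑ i, c i • (i : N)
      map_zero' := by simp
      map_add' := by intro x y; simp [add_smul, Finset.sum_add_distrib] }
  have hφ : ∀ c, φ c = ∑ i, c i • (i : N) := fun _ => rfl
  have h1 : (U.comap φ).FG := by
    apply AddSubmonoid.fg_of_subtractive
    intro x hx y hy
    simp only [AddSubmonoid.mem_comap, map_add] at *
    exact hU _ _ hx hy
  have h2 : AddSubmonoid.closure (S : Set N) ⊓ U = (U.comap φ).map φ := by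
    ext x
    simp only [AddSubmonoid.mem_inf, AddSubmonoid.mem_map, AddSubmonoid.mem_comap]
    have hcl : x ∈ AddSubmonoid.closure (S : Set N) ↔ ∃ c, φ c = x := by
      constructor
      · intro hx
        induction hx using AddSubmonoid.closure_induction with
        | mem x hx =>
          refine ⟨Pi.single ⟨x, hx⟩ 1, ?_⟩
          rw [hφ, Finset.sum_eq_single ⟨x, hx⟩]
          · simp
          · intro b _ hb; simp [Pi.single_apply, hb]
          · simp
        | zero => exact ⟨0, map_zero _⟩
        | add x y _ _ h1 h2 =>
          obtain ⟨a, rfl⟩ := h1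
          obtain ⟨b, rfl⟩ := h2
          exact ⟨a + b, map_add _ _ _⟩
      · rintro ⟨c, rfl⟩
        rw [hφ]
        exact AddSubmonoid.sum_mem _ fun i _ =>
          AddSubmonoid.nsmul_mem _ (AddSubmonoid.subset_closure i.2) _
    rw [hcl]
    constructor
    · rintro ⟨⟨c, rfl⟩, h⟩; exact ⟨c, h, rfl⟩
    · rintro ⟨c, h, rfl⟩; exact ⟨⟨c, rfl⟩, h⟩
  rw [h2]
  exact h1.map φ

theorem Dense.of_fg {P : AddSubmonoid N} (h : P.FG) : Dense P :=
  ⟨P, h, le_rfl, 0, P.zero_mem, fun c hc => ⟨1, le_rfl, by simpa using hc⟩⟩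

theorem Nice.of_fg {P : AddSubmonoid N} (h : P.FG) : Nice P :=
  fun _ hU => Dense.of_fg (fg_inf h hU.sub)

theorem Nice.inf {P U : AddSubmonoid N} (h : Nice P) (hU : Lin U) : Nice (P ⊓ U) := by
  intro V hV
  rw [inf_assoc]
  exact h _ (hU.inf hV)

theorem Dense.map {P : AddSubmonoid N} (h : Dense P) (f : N →+ N') : Dense (P.map f) := by
  obtain ⟨C, hC, hPC, p0, hp0, hk⟩ := h
  refine ⟨C.map f, hC.map f, AddSubmonoid.monotone_map hPC, f p0, ⟨p0, hp0, rfl⟩, ?_⟩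
  rintro _ ⟨c, hc, rfl⟩
  obtain ⟨k, hk1, hk2⟩ := hk c hc
  exact ⟨k, hk1, _, hk2, by simp⟩

theorem Nice.map {P : AddSubmonoid N} (h : Nice P) (f : N →+ N') : Nice (P.map f) := by
  intro U hU
  have : P.map f ⊓ U = (P ⊓ U.comap f).map f := by
    ext x
    constructor
    · rintro ⟨⟨c, hc, rfl⟩, h⟩; exact ⟨c, ⟨hc, h⟩, rfl⟩
    · rintro ⟨c, ⟨hc, h⟩, rfl⟩; exact ⟨⟨c, hc, rfl⟩, h⟩
  rw [this]
  exact (h _ (hU.comap f)).map f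

theorem fg_pi {E : Type} [Finite E] {C : E → AddSubmonoid N} (hC : ∀ e, (C e).FG) :
    (AddSubmonoid.pi Set.univ C).FG := by
  classical
  have := Fintype.ofFinite E
  have : AddSubmonoid.pi Set.univ C = ⨆ e, (C e).map (AddMonoidHom.single (fun _ => N) e) := by
    apply le_antisymm
    · intro x hx
      rw [← Finset.univ_sum_single x]
      refine AddSubmonoid.sum_mem _ fun e _ => ?_
      exact AddSubmonoid.mem_iSup_of_mem e ⟨x e, hx e trivial, rfl⟩
    · refine iSup_le fun e => ?_
      rintro _ ⟨c, hc, rfl⟩ e' _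
      simp only [AddMonoidHom.single_apply]
      by_cases h : e' = e
      · subst h; simpa using hc
      · simp [Pi.single_apply, h, (C e').zero_mem]
  rw [this]
  exact AddSubmonoid.FG.iSup _ fun e => (hC e).map _

theorem Nice.pi {E : Type} [Finite E] {P : E → AddSubmonoid N} (hP : ∀ e, Nice (P e)) :
    Nice (AddSubmonoid.pi Set.univ P) := by
  classical
  have := Fintype.ofFinite E
  intro U hU
  set W := AddSubmonoid.pi Set.univ P ⊓ U with hW
  -- the face of `P e` generated by the projections of `W`
  let F : E → AddSubmonoid N := fun e =>
    { carrier := {w | w ∈ P e ∧ ∃ w' ∈ P e, ∃ p ∈ W, w + w' = p e}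
      zero_mem' := ⟨zero_mem _, 0, zero_mem _, 0, zero_mem _, by simp⟩
      add_mem' := by
        rintro a b ⟨ha, a', ha', p, hp, h1⟩ ⟨hb, b', hb', q, hq, h2⟩
        refine ⟨add_mem ha hb, a' + b', add_mem ha' hb', p + q, add_mem hp hq, ?_⟩
        rw [Pi.add_apply, ← h1, ← h2]; abel }
  let V : E → AddSubmonoid N := fun e =>
    { carrier := {x | ∃ k : ℕ, 1 ≤ k ∧ ∃ f ∈ F e, ∃ f' ∈ F e, k • x + f = f'}
      zero_mem' := ⟨1, le_rfl, 0, zero_mem _, 0, zero_mem _, by simp⟩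
      add_mem' := by
        rintro a b ⟨k, hk, f, hf, f', hf', h1⟩ ⟨l, hl, g, hg, g', hg', h2⟩
        refine ⟨k * l, Nat.mul_pos hk hl, l • f + k • g, add_mem (nsmul_mem hf _) (nsmul_mem hg _),
          l • f' + k • g', add_mem (nsmul_mem hf' _) (nsmul_mem hg' _), ?_⟩
        rw [← h1, ← h2]
        simp only [smul_add, smul_smul, mul_comm l k]; abel }
  have hV : ∀ e, Lin (V e) := by
    intro e
    constructor
    · rintro x y ⟨k, hk, f, hf, f', hf', h1⟩ ⟨l, hl, g, hg, g', hg', h2⟩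
      refine ⟨k * l, Nat.mul_pos hk hl, l • f' + k • g, add_mem (nsmul_mem hf' _) (nsmul_mem hg _),
        l • f + k • g', add_mem (nsmul_mem hf _) (nsmul_mem hg' _), ?_⟩
      rw [← h1, ← h2]
      simp only [smul_add, smul_smul, mul_comm l k]; abel
    · rintro k x hk ⟨l, hl, g, hg, g', hg', h2⟩
      exact ⟨l * k, Nat.mul_pos hl hk, g, hg, g', hg', by rw [← h2, smul_smul]⟩
  have hF : ∀ e, P e ⊓ V e = F e := by
    intro e
    ext x
    constructor
    · rintro ⟨hx, k, hk, f, hf, f', ⟨-, w', hw', p, hp, h2⟩, h1⟩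
      refine ⟨hx, (k - 1) • x + f + w', add_mem (add_mem (nsmul_mem hx _) hf.1) hw', p, hp, ?_⟩
      rw [← h2, ← h1]
      obtain ⟨k, rfl⟩ : ∃ j, k = j + 1 := ⟨k - 1, by omega⟩
      simp only [Nat.add_sub_cancel, add_smul, one_smul]; abel
    · intro hx
      exact ⟨hx.1, 1, le_rfl, 0, zero_mem _, x, hx, by simp⟩
  have hD : ∀ e, Dense (F e) := fun e => hF e ▸ hP e _ (hV e)
  choose C hC hFC p0 hp0 hk using hD
  have hex : ∀ e, ∃ w' ∈ P e, ∃ p ∈ W, p0 e + w' = p e := fun e => (hp0 e).2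
  choose w' hw' q hq hpq using hex
  refine ⟨AddSubmonoid.pi Set.univ C ⊓ U, fg_inf (fg_pi hC) hU.sub, ?_, ∑ e, q e,
    AddSubmonoid.sum_mem _ fun e _ => hq e, ?_⟩
  · intro x hx
    exact ⟨fun e _ => hFC e ⟨hx.1 e trivial, 0, zero_mem _, x, hx, by simp⟩, hx.2⟩
  · rintro c ⟨hc, hcU⟩
    have h1 : ∀ e, ∃ k : ℕ, 1 ≤ k ∧ k • (c e + p0 e) ∈ F e := fun e => hk e _ (hc e trivial)
    choose k hk1 hk2 using h1
    refine ⟨∏ e, k e, Finset.one_le_prod' fun e _ => hk1 e, ?_, ?_⟩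
    · intro e _
      rw [Pi.smul_apply, Pi.add_apply]
      have h3 : (∑ e', q e') e = p0 e + (w' e + ∑ e' ∈ Finset.univ.erase e, q e' e) := by
        rw [Finset.sum_apply, ← Finset.add_sum_erase _ _ (Finset.mem_univ e), ← hpq, add_assoc]
      have h4 : w' e + ∑ e' ∈ Finset.univ.erase e, q e' e ∈ P e :=
        add_mem (hw' e) (AddSubmonoid.sum_mem _ fun e' _ => (hq e').1 e trivial)
      rw [h3, ← add_assoc, smul_add]
      refine add_mem ?_ (nsmul_mem h4 _)
      rw [← Finset.mul_prod_erase _ _ (Finset.mem_univ e), mul_comm, mul_smul]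
      exact nsmul_mem (hk2 e).1 _
    · exact nsmul_mem (add_mem hcU (AddSubmonoid.sum_mem _ fun e _ => (hq e).2)) _

/-- Relational composition of submonoids. -/
def mcomp {A : Type} [AddCommMonoid A] (P Q : AddSubmonoid (A × A)) : AddSubmonoid (A × A) where
  carrier := {x | ∃ b, (x.1, b) ∈ P ∧ (b, x.2) ∈ Q}
  zero_mem' := ⟨0, zero_mem P, zero_mem Q⟩
  add_mem' := by
    rintro x y ⟨b, h1, h2⟩ ⟨b', h1', h2'⟩
    exact ⟨b + b', add_mem h1 h1', add_mem h2 h2'⟩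

theorem lin_eqLocus {A B : Type} [AddCommMonoid A] [AddCommMonoid B] [IsCancelAdd B]
    [IsAddTorsionFree B] (f g : A →+ B) : Lin (f.eqLocusM g) := by
  constructor
  · intro x y h1 h2
    simp only [AddMonoidHom.mem_eqLocusM, map_add] at *
    rw [h1] at h2
    exact add_left_cancel h2
  · intro k x hk h
    simp only [AddMonoidHom.mem_eqLocusM, map_nsmul] at *
    exact nsmul_right_injective (by omega) h

theorem Nice.comp {A : Type} [AddCommMonoid A] [IsCancelAdd A] [IsAddTorsionFree A]
    {P Q : AddSubmonoid (A × A)} (hP : Nice P) (hQ : Nice Q) : Nice (mcomp P Q) := by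
  let R : Bool → AddSubmonoid (A × A) := fun b => if b then P else Q
  have hR : ∀ b, Nice (R b) := by intro b; cases b <;> simp [R, hP, hQ]
  let ev (b : Bool) : (Bool → A × A) →+ A × A := Pi.evalAddMonoidHom _ b
  let f : (Bool → A × A) →+ A := (AddMonoidHom.snd A A).comp (ev true)
  let g : (Bool → A × A) →+ A := (AddMonoidHom.fst A A).comp (ev false)
  let π : (Bool → A × A) →+ A × A :=
    ((AddMonoidHom.fst A A).comp (ev true)).prod ((AddMonoidHom.snd A A).comp (ev false))
  have h := (((Nice.pi hR).inf (lin_eqLocus f g)).map π)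
  convert h using 1
  ext ⟨x, y⟩
  constructor
  · rintro ⟨b, h1, h2⟩
    refine ⟨fun i => if i then (x, b) else (b, y), ⟨?_, ?_⟩, ?_⟩
    · intro i _
      cases i
      · simpa [R] using h2
      · simpa [R] using h1
    · simp [f, g, ev]
    · simp [π, ev]
  · rintro ⟨z, ⟨h1, h2⟩, h3⟩
    have h4 := h1 true trivial
    have h5 := h1 false trivial
    simp only [R, if_true] at h4
    simp only [R] at h5
    simp only [SetLike.mem_coe, AddMonoidHom.mem_eqLocusM, f, g, ev, AddMonoidHom.comp_apply,
      AddMonoidHom.coe_snd, AddMonoidHom.coe_fst, Pi.evalAddMonoidHom_apply] at h2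
    simp only [π, ev, AddMonoidHom.prod_apply, AddMonoidHom.comp_apply, AddMonoidHom.coe_snd,
      AddMonoidHom.coe_fst, Pi.evalAddMonoidHom_apply, Prod.mk.injEq] at h3
    obtain ⟨rfl, rfl⟩ := h3
    refine ⟨(z true).2, h4, ?_⟩
    show ((z true).2, (z false).2) ∈ Q
    rw [h2]
    exact h5

end nice

end PV

namespace PV

section good
variable {N N' : Type} [AddCommMonoid N] [AddCommMonoid N']

theorem fg_param {C : AddSubmonoid N} (hC : C.FG) :
    ∃ (S : Type) (_ : Fintype S) (φ : (S → ℕ) →+ N), ∀ x, x ∈ C ↔ ∃ c, φ c = x := by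
  classical
  obtain ⟨S, rfl⟩ := hC
  let φ : (S → ℕ) →+ N :=
    { toFun := fun c => ∑ i, c i • (i : N)
      map_zero' := by simp
      map_add' := by intro x y; simp [add_smul, Finset.sum_add_distrib] }
  have hφ : ∀ c, φ c = ∑ i, c i • (i : N) := fun _ => rfl
  refine ⟨S, inferInstance, φ, fun x => ?_⟩
  constructor
  · intro hx
    induction hx using AddSubmonoid.closure_induction with
    | mem x hx =>
      refine ⟨Pi.single ⟨x, hx⟩ 1, ?_⟩
      rw [hφ, Finset.sum_eq_single ⟨x, hx⟩]
      · simp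
      · intro b _ hb; simp [hb]
      · simp
    | zero => exact ⟨0, map_zero _⟩
    | add x y _ _ h1 h2 =>
      obtain ⟨a, rfl⟩ := h1
      obtain ⟨b, rfl⟩ := h2
      exact ⟨a + b, map_add _ _ _⟩
  · rintro ⟨c, rfl⟩
    rw [hφ]
    exact AddSubmonoid.sum_mem _ fun i _ =>
      AddSubmonoid.nsmul_mem _ (AddSubmonoid.subset_closure i.2) _

theorem wqo_basis {Ω : Type*} {le : Ω → Ω → Prop} (h : WellQuasiOrdered le) :
    ∃ F : Finset Ω, ∀ x, ∃ y ∈ F, le y x := by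
  by_contra! hc
  obtain ⟨f, -, hf⟩ := exists_seq_of_forall_finset_exists (fun _ : Ω => True)
    (fun x y => ¬ le x y) (fun s _ => by
      obtain ⟨x, hx⟩ := hc s
      exact ⟨x, trivial, hx⟩)
  obtain ⟨m, n, hmn, hle⟩ := h f
  exact hf m n hmn hle

structure GoodData (X : Set N) where
  Ω : Type
  le : Ω → Ω → Prop
  val : Ω → N
  P : Ω → AddSubmonoid N
  refl : ∀ a, le a a
  trans : ∀ a b c, le a b → le b c → le a c
  wqo : WellQuasiOrdered le
  le_val : ∀ ω ω', le ω ω' → ∃ w ∈ P ω, val ω' = val ω + w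
  mem : ∀ ω, ∀ w ∈ P ω, val ω + w ∈ X
  surj : ∀ x ∈ X, ∃ ω, val ω = x
  nice : ∀ ω, Nice (P ω)

def Good (X : Set N) : Prop := Nonempty (GoodData X)

theorem Good.decomp {X : Set N} (h : Good X) :
    ∃ (I : Type) (_ : Fintype I) (b : I → N) (P : I → AddSubmonoid N), (∀ i, Nice (P i)) ∧
      X = {x | ∃ i, ∃ p ∈ P i, x = b i + p} := by
  obtain ⟨D⟩ := h
  obtain ⟨F, hF⟩ := wqo_basis D.wqo
  refine ⟨F, inferInstance, fun i => D.val i, fun i => D.P i, fun i => D.nice i, ?_⟩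
  ext x
  constructor
  · intro hx
    obtain ⟨ω, rfl⟩ := D.surj x hx
    obtain ⟨y, hy, hle⟩ := hF ω
    obtain ⟨w, hw, h⟩ := D.le_val _ _ hle
    exact ⟨⟨y, hy⟩, w, hw, h⟩
  · rintro ⟨i, p, hp, rfl⟩
    exact D.mem _ _ hp

theorem Good.linear (b : N) {C : AddSubmonoid N} (hC : C.FG) :
    Good {x | ∃ c ∈ C, x = b + c} := by
  obtain ⟨S, _, φ, hφ⟩ := fg_param hC
  refine ⟨⟨S → ℕ, (· ≤ ·), fun c => b + φ c, fun _ => C, le_refl, fun _ _ _ => le_trans,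
    wellQuasiOrdered_le, ?_, ?_, ?_, fun _ => Nice.of_fg hC⟩⟩
  · intro ω ω' h
    obtain ⟨z, rfl⟩ := exists_add_of_le h
    exact ⟨φ z, (hφ _).2 ⟨z, rfl⟩, by rw [map_add, add_assoc]⟩
  · intro ω w hw
    exact ⟨φ ω + w, add_mem ((hφ _).2 ⟨ω, rfl⟩) hw, by rw [add_assoc]⟩
  · rintro x ⟨c, hc, rfl⟩
    obtain ⟨z, rfl⟩ := (hφ _).1 hc
    exact ⟨z, rfl⟩

theorem Good.inter {X : Set N} (h : Good X) {U : AddSubmonoid N} (hU : Lin U) :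
    Good {x | x ∈ X ∧ x ∈ U} := by
  obtain ⟨D⟩ := h
  refine ⟨⟨{ω // D.val ω ∈ U}, fun a b => D.le a.1 b.1, fun a => D.val a.1, fun a => D.P a.1 ⊓ U,
    fun a => D.refl _, fun a b c => D.trans _ _ _, ?_, ?_, ?_, ?_, fun a => (D.nice _).inf hU⟩⟩
  · intro f
    exact D.wqo fun n => (f n).1
  · rintro ⟨ω, h1⟩ ⟨ω', h2⟩ h
    obtain ⟨w, hw, h3⟩ := D.le_val _ _ h
    refine ⟨w, ⟨hw, hU.sub _ _ h1 ?_⟩, h3⟩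
    rw [← h3]; exact h2
  · rintro ⟨ω, h1⟩ w hw
    exact ⟨D.mem _ _ hw.1, add_mem h1 hw.2⟩
  · rintro x ⟨hx, hxU⟩
    obtain ⟨ω, rfl⟩ := D.surj x hx
    exact ⟨⟨ω, hxU⟩, rfl⟩

theorem Good.iUnion {I : Type} [Finite I] {X : I → Set N} (h : ∀ i, Good (X i)) :
    Good (⋃ i, X i) := by
  have D : ∀ i, GoodData (X i) := fun i => Classical.choice (h i)
  refine ⟨⟨Σ i, (D i).Ω, fun a b => ∃ h : a.1 = b.1, (D b.1).le (h ▸ a.2) b.2,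
    fun a => (D a.1).val a.2, fun a => (D a.1).P a.2, ?_, ?_, ?_, ?_, ?_, ?_,
    fun a => (D a.1).nice a.2⟩⟩
  · rintro ⟨i, a⟩
    exact ⟨rfl, (D i).refl a⟩
  · rintro ⟨i, a⟩ ⟨j, b⟩ ⟨k, c⟩ ⟨h1, h2⟩ ⟨h3, h4⟩
    dsimp only at h1 h3
    subst h1 h3
    exact ⟨rfl, (D _).trans _ _ _ h2 h4⟩
  · intro f
    obtain ⟨g, hg⟩ := (Finite.wellQuasiOrdered (Eq : I → I → Prop)).exists_monotone_subseq
      (fun n => (f n).1)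
    have h1 : ∀ n, ∃ a : (D (f (g 0)).1).Ω, f (g n) = ⟨(f (g 0)).1, a⟩ := by
      intro n
      have := hg 0 n (Nat.zero_le _)
      rw [this]
      exact ⟨_, rfl⟩
    choose a ha using h1
    obtain ⟨m, n, hmn, hle⟩ := (D (f (g 0)).1).wqo a
    refine ⟨g m, g n, g.strictMono hmn, ?_⟩
    rw [ha m, ha n]
    exact ⟨rfl, hle⟩
  · rintro ⟨i, a⟩ ⟨j, b⟩ ⟨h1, h2⟩
    dsimp only at h1
    subst h1
    exact (D i).le_val _ _ h2
  · rintro ⟨i, a⟩ w hw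
    exact Set.mem_iUnion.2 ⟨i, (D i).mem _ _ hw⟩
  · intro x hx
    obtain ⟨i, hi⟩ := Set.mem_iUnion.1 hx
    obtain ⟨a, ha⟩ := (D i).surj x hi
    exact ⟨⟨i, a⟩, ha⟩

theorem Good.union {X Y : Set N} (hX : Good X) (hY : Good Y) : Good (X ∪ Y) := by
  rw [Set.union_eq_iUnion]
  exact Good.iUnion fun b => by cases b <;> assumption

def rcomp {A : Type} (X Y : Set (A × A)) : Set (A × A) :=
  {x | ∃ b, (x.1, b) ∈ X ∧ (b, x.2) ∈ Y}

theorem wqo_prod {α β : Type*} {r : α → α → Prop} {s : β → β → Prop} (hr : ∀ a b c, r a b → r b c → r a c)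
    (h0 : ∀ a, r a a)
    (h1 : WellQuasiOrdered r) (h2 : WellQuasiOrdered s) :
    WellQuasiOrdered (fun a b : α × β => r a.1 b.1 ∧ s a.2 b.2) := by
  intro f
  have : IsPreorder α r := { refl := h0, trans := hr }
  obtain ⟨g, hg⟩ := h1.exists_monotone_subseq (fun n => (f n).1)
  obtain ⟨m, n, hmn, hle⟩ := h2 (fun n => (f (g n)).2)
  exact ⟨g m, g n, g.strictMono hmn, hg _ _ hmn.le, hle⟩

theorem Good.comp {A : Type} [AddCommMonoid A] [IsCancelAdd A] [IsAddTorsionFree A]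
    {X Y : Set (A × A)} (hX : Good X) (hY : Good Y) : Good (rcomp X Y) := by
  obtain ⟨D⟩ := hX
  obtain ⟨D'⟩ := hY
  refine ⟨⟨{ω : D.Ω × D'.Ω // (D.val ω.1).2 = (D'.val ω.2).1},
    fun a b => D.le a.1.1 b.1.1 ∧ D'.le a.1.2 b.1.2,
    fun a => ((D.val a.1.1).1, (D'.val a.1.2).2), fun a => mcomp (D.P a.1.1) (D'.P a.1.2),
    fun a => ⟨D.refl _, D'.refl _⟩,
    fun a b c h1 h2 => ⟨D.trans _ _ _ h1.1 h2.1, D'.trans _ _ _ h1.2 h2.2⟩, ?_, ?_, ?_, ?_,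
    fun a => (D.nice _).comp (D'.nice _)⟩⟩
  · intro f
    exact wqo_prod D.trans D.refl D.wqo D'.wqo fun n => (f n).1
  · rintro ⟨⟨ω1, ω2⟩, h1⟩ ⟨⟨ω1', ω2'⟩, h2⟩ ⟨h3, h4⟩
    obtain ⟨⟨r, s⟩, hw, h5⟩ := D.le_val _ _ h3
    obtain ⟨⟨s', t⟩, hw', h6⟩ := D'.le_val _ _ h4
    dsimp only at *
    rw [h5, h6, Prod.snd_add, Prod.fst_add, h1] at h2
    have := add_left_cancel h2
    dsimp only at this
    subst this
    exact ⟨(r, t), ⟨s, hw, hw'⟩, by rw [h5, h6]; rfl⟩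
  · rintro ⟨⟨ω1, ω2⟩, h1⟩ ⟨r, t⟩ ⟨s, hs, hs'⟩
    refine ⟨(D.val ω1).2 + s, D.mem _ _ hs, ?_⟩
    have := D'.mem _ _ hs'
    dsimp only at *
    rw [h1]; exact this
  · rintro ⟨x, z⟩ ⟨y, h1, h2⟩
    obtain ⟨a, ha⟩ := D.surj _ h1
    obtain ⟨b, hb⟩ := D'.surj _ h2
    exact ⟨⟨(a, b), by rw [ha, hb]⟩, by simp [ha, hb]⟩

end good

end PV

namespace PV

section graph
variable {F V : Type} (src tgt : F → V)

def IsW : V → List F → V → Prop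
  | u, [], v => u = v
  | u, e :: l, v => src e = u ∧ IsW (tgt e) l v

variable {src tgt}

theorem IsW.append {u v w : V} {l l' : List F} (h : IsW src tgt u l v) (h' : IsW src tgt v l' w) :
    IsW src tgt u (l ++ l') w := by
  induction l generalizing u with
  | nil => cases h; exact h'
  | cons e l ih => exact ⟨h.1, ih h.2⟩

theorem IsW.map {F' : Type} {src' tgt' : F' → V} {u v : V} {l : List F} (f : F → F')
    (hs : ∀ e, src' (f e) = src e) (ht : ∀ e, tgt' (f e) = tgt e) (h : IsW src tgt u l v) :
    IsW src' tgt' u (l.map f) v := by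
  induction l generalizing u with
  | nil => exact h
  | cons e l ih => exact ⟨(hs e).trans h.1, by rw [ht]; exact ih h.2⟩

theorem IsW.flatMap {u : V} {X : Type} (L : List X) (f : X → List F)
    (h : ∀ x ∈ L, IsW src tgt u (f x) u) : IsW src tgt u (L.flatMap f) u := by
  induction L with
  | nil => exact rfl
  | cons x L ih =>
    rw [List.flatMap_cons]
    exact (h x (by simp)).append (ih fun y hy => h y (by simp [hy]))

end graph

section flow
open Classical in
/-- Weighted indicator sums. -/
noncomputable def deg {F V : Type} [Fintype F] (src : F → V) : (F → ℕ) →+ (V → ℕ) where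
  toFun m := ∑ e, m e • Pi.single (src e) 1
  map_zero' := by simp
  map_add' := by intro x y; simp [add_smul, Finset.sum_add_distrib]

open Classical in
theorem deg_single {F V : Type} [Fintype F] (src : F → V) (e : F) :
    deg src (Pi.single e 1) = Pi.single (src e) 1 := by
  show ∑ e', (Pi.single e 1 : F → ℕ) e' • (Pi.single (src e') 1 : V → ℕ) = _
  rw [Finset.sum_eq_single e]
  · simp
  · intro b _ hb; simp [hb]
  · simp

open Classical in
theorem deg_pos {F V : Type} [Fintype F] (src : F → V) (m : F → ℕ) (v : V)
    (h : 0 < deg src m v) : ∃ e, src e = v ∧ 0 < m e := by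
  by_contra! hc
  apply h.ne'
  show (∑ e', m e' • (Pi.single (src e') 1 : V → ℕ)) v = _
  rw [Finset.sum_apply]
  refine Finset.sum_eq_zero fun e _ => ?_
  by_cases he : src e = v
  · have := hc e he
    simp [Nat.le_zero.1 this]
  · have : v ≠ src e := fun h => he h.symm
    simp [this]

open Classical in
noncomputable def cnt {F : Type} (l : List F) : F → ℕ := (l.map fun e => Pi.single e 1).sum

open Classical in
theorem exists_single_add {F : Type} (m : F → ℕ) (e : F) (h : 0 < m e) :
    ∃ m1 : F → ℕ, m = (Pi.single e 1 : F → ℕ) + m1 := by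
  apply exists_add_of_le (a := Pi.single e 1) (b := m)
  intro i
  by_cases hi : i = e
  · subst hi; rw [Pi.single_eq_same]; exact h
  · simp [hi]

open Classical in
theorem flow_walk {F V : Type} [Fintype F] (src tgt : F → V) (n : ℕ) :
    ∀ (m : F → ℕ) (u v : V), ∑ e, m e = n →
    deg src m + Pi.single v 1 = deg tgt m + Pi.single u 1 →
    ∃ l m', IsW src tgt u l v ∧ m = cnt l + m' ∧ deg src m' = deg tgt m' := by
  induction n with
  | zero =>
    intro m u v hm h
    by_cases huv : u = v
    · subst huv
      exact ⟨[], m, rfl, by simp [cnt], add_right_cancel h⟩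
    · exfalso
      have h0 : m = 0 := by
        ext e
        exact (Finset.sum_eq_zero_iff.1 hm) e (Finset.mem_univ e)
      subst h0
      have := congrFun h u
      simp [huv] at this
  | succ n ih =>
    intro m u v hm h
    by_cases huv : u = v
    · subst huv
      exact ⟨[], m, rfl, by simp [cnt], add_right_cancel h⟩
    · have h1 := congrFun h u
      simp only [Pi.add_apply, Pi.single_eq_same, Pi.single_eq_of_ne huv] at h1
      obtain ⟨e, he, hpos⟩ := deg_pos src m u (by omega)
      obtain ⟨m1, rfl⟩ := exists_single_add m e hpos
      obtain ⟨l, m', h2, h3, h4⟩ := ih m1 (tgt e) v (by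
        simp [Finset.sum_add_distrib] at hm; omega) (by
        rw [map_add, map_add, deg_single, deg_single, he] at h
        apply add_left_cancel (a := Pi.single u 1)
        calc _ = _ := (add_assoc _ _ _).symm
          _ = _ := h
          _ = _ := by abel)
      refine ⟨e :: l, m', ⟨he, h2⟩, ?_, h4⟩
      rw [h3, ← add_assoc]; rfl

theorem cnt_append {F : Type} (l l' : List F) : cnt (l ++ l') = cnt l + cnt l' := by
  simp [cnt]

open Classical in
theorem circ {F V : Type} [Fintype F] (src tgt : F → V) (n : ℕ) :
    ∀ (m : F → ℕ), ∑ e, m e = n → deg src m = deg tgt m →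
    ∃ δ : F → List F, (∀ e, IsW src tgt (src e) (δ e) (src e)) ∧ ∑ e, cnt (δ e) = m := by
  induction n using Nat.strong_induction_on with
  | _ n ih =>
  intro m hm h
  by_cases h0 : m = 0
  · subst h0
    exact ⟨fun _ => [], fun _ => rfl, by simp [cnt]⟩
  · obtain ⟨e, he⟩ : ∃ e, m e ≠ 0 := by
      by_contra! hc; exact h0 (funext hc)
    obtain ⟨m1, rfl⟩ := exists_single_add m e (Nat.pos_of_ne_zero he)
    rw [map_add, map_add, deg_single, deg_single] at h
    obtain ⟨l, m', h2, rfl, h4⟩ := flow_walk src tgt _ m1 (tgt e) (src e) rfl (by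
      rw [add_comm, h, add_comm])
    obtain ⟨δ, h5, h6⟩ := ih (∑ e, m' e) (by
      simp [Finset.sum_add_distrib] at hm; omega) m' rfl h4
    refine ⟨fun e' => if e' = e then e :: l ++ δ e else δ e', ?_, ?_⟩
    · intro e'
      dsimp only
      split_ifs with h7
      · subst h7
        exact IsW.append ⟨rfl, h2⟩ (h5 _)
      · exact h5 e'
    · have : ∀ e', cnt (if e' = e then e :: l ++ δ e else δ e') =
          (if e' = e then cnt (e :: l) else 0) + cnt (δ e') := by
        intro e'
        split_ifs with h7
        · subst h7; rw [cnt_append]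
        · simp
      simp only [this, Finset.sum_add_distrib, h6]
      simp only [Finset.sum_ite_eq', Finset.mem_univ, if_true]
      rw [← add_assoc]; rfl

end flow

end PV

namespace PV

section key
variable {ι : Type}

def zer (J : Set ι) : AddSubmonoid (ι → ℕ) where
  carrier := {z | ∀ j ∈ J, z j = 0}
  zero_mem' := fun _ _ => rfl
  add_mem' := fun {a b} ha hb j hj => by simp [ha j hj, hb j hj]

theorem zer_lin (J : Set ι) : Lin (zer J) := by
  constructor
  · intro x y hx hxy j hj
    have := hxy j hj
    simp only [Pi.add_apply] at this
    omega
  · intro k x hk h j hj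
    have := h j hj
    simp only [Pi.smul_apply, smul_eq_mul] at this
    rcases Nat.mul_eq_zero.1 this with h | h
    · omega
    · exact h

theorem zer_le {J : Set ι} {x y : ι → ℕ} (h : x ≤ y) (hy : y ∈ zer J) : x ∈ zer J := by
  intro j hj
  exact Nat.le_zero.1 ((hy j hj) ▸ h j)

def TS (T : Set ((ι → ℕ) × (ι → ℕ))) : (ι → ℕ) → (ι → ℕ) → Prop :=
  Relation.ReflTransGen fun x y => (x, y) ∈ T

structure MonoT (J : Set ι) (T : Set ((ι → ℕ) × (ι → ℕ))) : Prop where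
  left : ∀ x y, (x, y) ∈ T → x ∈ zer J
  right : ∀ x y, (x, y) ∈ T → y ∈ zer J
  add : ∀ x y z, z ∈ zer J → (x, y) ∈ T → (x + z, y + z) ∈ T

variable {J : Set ι} {T : Set ((ι → ℕ) × (ι → ℕ))}

theorem TS.add (hT : MonoT J T) {x y z : ι → ℕ} (hz : z ∈ zer J) (h : TS T x y) :
    TS T (x + z) (y + z) := by
  induction h with
  | refl => exact Relation.ReflTransGen.refl
  | tail _ h2 ih => exact ih.tail (hT.add _ _ _ hz h2)

theorem TS.add' (hT : MonoT J T) {x y z u v : ι → ℕ} (hz : z ∈ zer J) (h : TS T x y)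
    (hu : u = x + z) (hv : v = y + z) : TS T u v := by
  subst hu hv; exact h.add hT hz

theorem TS.trans {x y z : ι → ℕ} (h : TS T x y) (h' : TS T y z) : TS T x z :=
  Relation.ReflTransGen.trans h h'

theorem TS.right (hT : MonoT J T) {x y : ι → ℕ} (h : TS T x y) (hx : x ∈ zer J) : y ∈ zer J := by
  cases h with
  | refl => exact hx
  | tail _ h2 => exact hT.right _ _ h2

def Lsub (hT : MonoT J T) (c : ι → ℕ) : AddSubmonoid ((ι → ℕ) × (ι → ℕ)) where
  carrier := {p | p.1 ∈ zer J ∧ p.2 ∈ zer J ∧ TS T (c + p.1) (c + p.2)}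
  zero_mem' := ⟨zero_mem _, zero_mem _, Relation.ReflTransGen.refl⟩
  add_mem' := by
    rintro ⟨r, s⟩ ⟨r', s'⟩ ⟨h1, h2, h3⟩ ⟨h1', h2', h3'⟩
    refine ⟨add_mem h1 h1', add_mem h2 h2', ?_⟩
    exact TS.trans (h3.add' hT h1' (v := c + s + r') (add_assoc _ _ _).symm rfl)
      (h3'.add' hT h2 (by dsimp only; abel) (by dsimp only [Prod.snd_add]; abel))

def Tri (hT : MonoT J T) (c : ι → ℕ) (U : AddSubmonoid ((ι → ℕ) × (ι → ℕ))) :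
    AddSubmonoid ((ι → ℕ) × (ι → ℕ) × (ι → ℕ)) where
  carrier := {p | p.1 ∈ zer J ∧ p.2.1 ∈ zer J ∧ p.2.2 ∈ zer J ∧ (p.1, p.2.2) ∈ U ∧
    TS T (c + p.1) (c + p.2.1) ∧ TS T (c + p.2.1) (c + p.2.2)}
  zero_mem' := ⟨zero_mem _, zero_mem _, zero_mem _, zero_mem U, Relation.ReflTransGen.refl,
    Relation.ReflTransGen.refl⟩
  add_mem' := by
    rintro ⟨r, x, s⟩ ⟨r', x', s'⟩ ⟨h1, h2, h3, h4, h5, h6⟩ ⟨h1', h2', h3', h4', h5', h6'⟩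
    refine ⟨add_mem h1 h1', add_mem h2 h2', add_mem h3 h3', add_mem h4 h4', ?_, ?_⟩
    · exact TS.trans (h5.add' hT h1' (v := c + x + r') (add_assoc _ _ _).symm rfl)
        (h5'.add' hT h2 (by dsimp only; abel) (by dsimp only [Prod.snd_add, Prod.fst_add]; abel))
    · exact TS.trans (h6.add' hT h2' (v := c + s + x') (add_assoc _ _ _).symm rfl)
        (h6'.add' hT h3 (by dsimp only; abel) (by dsimp only [Prod.snd_add, Prod.fst_add]; abel))

open Classical in
noncomputable def node (B : Set ι) (y : ι → ℕ) : ι → ℕ := fun i => if i ∈ B then 0 else y i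

theorem node_add {B : Set ι} {y z : ι → ℕ} (hz : z ∈ zer Bᶜ) : node B (y + z) = node B y := by
  ext i
  unfold node
  split_ifs with h
  · rfl
  · simp [hz i h]

theorem node_eq {B : Set ι} {y y' : ι → ℕ} (h : node B y = node B y') (i : ι) (hi : i ∉ B) :
    y i = y' i := by
  have := congrFun h i
  simpa [node, hi] using this

section net
variable {E : Type} [Fintype E]

def tot (a : E → ι → ℕ) (p : (ι → ℕ) × (ι → ℕ) →+ (ι → ℕ)) :
    (E → ℕ × ((ι → ℕ) × (ι → ℕ))) →+ (ι → ℕ) where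
  toFun d := ∑ e, ((d e).1 • a e + p (d e).2)
  map_zero' := by simp
  map_add' := by
    intro x y
    simp only [Pi.add_apply, Prod.fst_add, Prod.snd_add, add_smul, map_add]
    rw [← Finset.sum_add_distrib]
    refine Finset.sum_congr rfl fun e _ => by abel

open Classical in
theorem tot_single (a : E → ι → ℕ) (p : (ι → ℕ) × (ι → ℕ) →+ (ι → ℕ)) (e : E) (n : ℕ)
    (w : (ι → ℕ) × (ι → ℕ)) : tot a p (Pi.single e (n, w)) = n • a e + p w := by
  show ∑ e', _ = _
  rw [Finset.sum_eq_single e]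
  · simp
  · intro b _ hb; simp [hb]
  · simp

open Classical in
noncomputable def dv (l : List (E × ((ι → ℕ) × (ι → ℕ)))) : E → ℕ × ((ι → ℕ) × (ι → ℕ)) :=
  (l.map fun f => (Pi.single f.1 (1, f.2) : E → ℕ × ((ι → ℕ) × (ι → ℕ)))).sum

open Classical in
theorem dv_cons (f) (l : List (E × ((ι → ℕ) × (ι → ℕ)))) :
    dv (f :: l) = Pi.single f.1 (1, f.2) + dv l := by simp [dv]

theorem dv_append (l l' : List (E × ((ι → ℕ) × (ι → ℕ)))) :
    dv (l ++ l') = dv l + dv l' := by simp [dv]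

noncomputable abbrev srcL (B : Set ι) (a : E → ι → ℕ) : E × ((ι → ℕ) × (ι → ℕ)) → (ι → ℕ) :=
  fun f => node B (a f.1)

theorem exec (hT : MonoT J T) {a b : E → ι → ℕ} {Pp : E → AddSubmonoid ((ι → ℕ) × (ι → ℕ))}
    {B : Set ι} (hstep : ∀ e w, w ∈ Pp e → (a e + w.1, b e + w.2) ∈ T)
    (hoff : ∀ e w, w ∈ Pp e → w.1 ∈ zer Bᶜ ∧ w.2 ∈ zer Bᶜ)
    (l : List (E × ((ι → ℕ) × (ι → ℕ)))) :
    ∀ (u v : ι → ℕ), (∀ f ∈ l, f.2 ∈ Pp f.1) → IsW (srcL B a) (srcL B b) u l v →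
    ∃ k : ι → ℕ, ∀ y ∈ zer J, node B y = u → (∀ i ∈ B, k i ≤ y i) → ∃ y', TS T y y' ∧
      node B y' = v ∧ y' + tot a (AddMonoidHom.fst _ _) (dv l) =
        y + tot b (AddMonoidHom.snd _ _) (dv l) := by
  induction l with
  | nil =>
    intro u v _ h
    refine ⟨0, fun y _ hy _ => ⟨y, Relation.ReflTransGen.refl, hy.trans h, ?_⟩⟩
    simp [dv]
  | cons f l ih =>
    intro u v hl h
    obtain ⟨k, hk⟩ := ih _ v (fun f hf => hl f (by simp [hf])) h.2
    obtain ⟨e, w⟩ := f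
    have hw : w ∈ Pp e := hl (e, w) (by simp)
    refine ⟨a e + w.1 + k, fun y hyJ hy hky => ?_⟩
    have hle : a e + w.1 ≤ y := by
      intro i
      by_cases hi : i ∈ B
      · have := hky i hi
        simp only [Pi.add_apply] at this ⊢
        omega
      · have h1 := (hoff e w hw).1 i hi
        have h2 := node_eq (hy.trans h.1.symm) i hi
        simp only [Pi.add_apply]
        dsimp only at h2
        omega
    obtain ⟨z, rfl⟩ := exists_add_of_le hle
    have hz : z ∈ zer J := zer_le (fun i => by simp) hyJ
    have hzB : z ∈ zer Bᶜ := by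
      intro i hi
      have h1 := (hoff e w hw).1 i hi
      have h2 := node_eq (hy.trans h.1.symm) i hi
      simp only [Pi.add_apply] at h2
      omega
    have hst := hT.add _ _ z hz (hstep e w hw)
    obtain ⟨y', h1, h2, h3⟩ := hk (b e + w.2 + z) (hT.right _ _ hst)
      (by rw [node_add hzB, node_add (hoff e w hw).2]) (fun i hi => by
        have := hky i hi
        simp only [Pi.add_apply] at this ⊢
        omega)
    refine ⟨y', Relation.ReflTransGen.head hst h1, h2, ?_⟩
    rw [dv_cons, map_add, map_add, tot_single, tot_single]
    simp only [one_smul, AddMonoidHom.coe_fst, AddMonoidHom.coe_snd]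
    calc _ = (y' + tot a (AddMonoidHom.fst _ _) (dv l)) + (a e + w.1) := by abel
      _ = _ := by rw [h3]; abel

end net

end key

end PV

namespace PV

section key
variable {ι : Type} {J : Set ι} {T : Set ((ι → ℕ) × (ι → ℕ))}
variable {E : Type} [Fintype E]

theorem dv_flatMap {X : Type} (L : List X) (f : X → List (E × ((ι → ℕ) × (ι → ℕ)))) :
    dv (L.flatMap f) = (L.map fun x => dv (f x)).sum := by
  induction L with
  | nil => simp [dv]
  | cons x L ih => rw [List.flatMap_cons, dv_append, ih]; simp

theorem dv_map_zero (l : List E) :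
    dv (l.map fun e => (e, (0 : (ι → ℕ) × (ι → ℕ)))) = fun e => (cnt l e, 0) := by
  classical
  induction l with
  | nil => simp [dv, cnt]; rfl
  | cons x l ih =>
    rw [List.map_cons, dv_cons, ih]
    ext1 e
    have : cnt (x :: l) = Pi.single x 1 + cnt l := by simp [cnt]
    rw [this]
    by_cases h : e = x
    · subst h; simp
    · simp [h]

open Classical in
theorem realize0 (hT : MonoT J T) {a b : E → ι → ℕ} {Pp : E → AddSubmonoid ((ι → ℕ) × (ι → ℕ))}
    {B : Set ι} (hstep : ∀ e w, w ∈ Pp e → (a e + w.1, b e + w.2) ∈ T)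
    (hoff : ∀ e w, w ∈ Pp e → w.1 ∈ zer Bᶜ ∧ w.2 ∈ zer Bᶜ)
    {c : ι → ℕ} (hc : c ∈ zer J)
    {α β : E → List (E × ((ι → ℕ) × (ι → ℕ)))} {re se : E → ι → ℕ}
    (hα : ∀ e, ∀ f ∈ α e, f.2 ∈ Pp f.1) (hβ : ∀ e, ∀ f ∈ β e, f.2 ∈ Pp f.1)
    (hαw : ∀ e, IsW (srcL B a) (srcL B b) (node B c) (α e) (node B (a e)))
    (hβw : ∀ e, IsW (srcL B a) (srcL B b) (node B (b e)) (β e) (node B c))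
    (hre : ∀ e, re e ∈ zer J) (hreB : ∀ e, re e ∈ zer Bᶜ)
    (hdisp : ∀ e, se e + tot a (AddMonoidHom.fst _ _) (dv (α e) + dv (β e) + dv [(e, 0)]) =
      re e + tot b (AddMonoidHom.snd _ _) (dv (α e) + dv (β e) + dv [(e, 0)]))
    {d : E → ℕ × ((ι → ℕ) × (ι → ℕ))} (hd : ∀ e, (d e).2 ∈ Pp e)
    (hbal : deg (fun e => node B (a e)) (fun e => (d e).1) =
      deg (fun e => node B (b e)) (fun e => (d e).1))
    {r s : ι → ℕ} (hr : r ∈ zer J) (hrB : r ∈ zer Bᶜ)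
    (hrs : s + tot a (AddMonoidHom.fst _ _) d = r + tot b (AddMonoidHom.snd _ _) d) :
    ∃ k : ι → ℕ, ∀ z ∈ zer J, z ∈ zer Bᶜ → (∀ i ∈ B, k i ≤ z i) →
      TS T (c + z + (∑ e, re e + r)) (c + z + (∑ e, se e + s)) := by
  have hsg : ∀ e, dv (ι := ι) [(e, 0)] = (Pi.single e (1, 0) : E → ℕ × ((ι → ℕ) × (ι → ℕ))) := by
    intro e; simp [dv]
  simp only [hsg] at hdisp
  obtain ⟨δ, hδ, hδs⟩ := circ _ _ _ _ rfl hbal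
  set l := (Finset.univ : Finset E).toList.flatMap fun e =>
    α e ++ ((δ e).map (fun e => (e, (0 : (ι → ℕ) × (ι → ℕ)))) ++ ((e, (d e).2) :: β e)) with hl
  have hlw : IsW (srcL B a) (srcL B b) (node B c) l (node B c) := by
    apply IsW.flatMap
    intro e _
    refine (hαw e).append (IsW.append (v := node B (a e)) ?_ ⟨rfl, hβw e⟩)
    exact (hδ e).map _ (fun _ => rfl) (fun _ => rfl)
  have hlm : ∀ f ∈ l, f.2 ∈ Pp f.1 := by
    intro f hf
    simp only [hl, List.mem_flatMap, List.mem_append, List.mem_cons, List.mem_map] at hf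
    obtain ⟨e, -, h | ⟨e', -, rfl⟩ | rfl | h⟩ := hf
    · exact hα e f h
    · exact zero_mem _
    · exact hd e
    · exact hβ e f h
  have hdv : dv l = ∑ e, (dv (α e) + dv (β e) + Pi.single e (1, 0)) + d := by
    rw [hl, dv_flatMap, Finset.sum_map_toList]
    simp only [dv_append, dv_cons, dv_map_zero]
    have h1 : ∀ e, (Pi.single e (1, (d e).2) : E → ℕ × ((ι → ℕ) × (ι → ℕ))) =
        Pi.single e (1, 0) + Pi.single e (0, (d e).2) := by
      intro e
      rw [← Pi.single_add]; simp
    have h2 : d = ∑ e, ((fun e' => (cnt (δ e) e', 0)) + Pi.single e (0, (d e).2)) := by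
      rw [Finset.sum_add_distrib]
      ext1 e
      rw [Pi.add_apply, Finset.sum_apply, Finset.sum_apply]
      have h3 := congrFun hδs e
      rw [Finset.sum_apply] at h3
      rw [Finset.sum_pi_single, if_pos (Finset.mem_univ e)]
      apply Prod.ext
      · rw [Prod.fst_add, Prod.fst_sum, h3]; simp
      · rw [Prod.snd_add, Prod.snd_sum]; simp
    conv_rhs => rw [h2]
    rw [← Finset.sum_add_distrib]
    refine Finset.sum_congr rfl fun e _ => ?_
    rw [h1]; abel
  obtain ⟨k, hk⟩ := exec hT hstep hoff l _ _ hlm hlw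
  refine ⟨k, fun z hz hzB hkz => ?_⟩
  have hR : ∑ e, re e ∈ zer J := sum_mem fun e _ => hre e
  have hRB : ∑ e, re e ∈ zer Bᶜ := sum_mem fun e _ => hreB e
  obtain ⟨y', h1, -, h3⟩ := hk (c + z + (∑ e, re e + r))
    (add_mem (add_mem hc hz) (add_mem hR hr))
    (by rw [node_add (add_mem hRB hrB), node_add hzB])
    (fun i hi => by
      have := hkz i hi
      simp only [Pi.add_apply]; omega)
  convert h1 using 1
  apply add_right_cancel (b := tot a (AddMonoidHom.fst _ _) (dv l))
  rw [h3, hdv, map_add, map_add, map_sum, map_sum]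
  have h4 : ∑ e, se e + ∑ e, tot a (AddMonoidHom.fst _ _) (dv (α e) + dv (β e) + Pi.single e (1, 0)) =
    ∑ e, re e + ∑ e, tot b (AddMonoidHom.snd _ _) (dv (α e) + dv (β e) + Pi.single e (1, 0)) := by
    rw [← Finset.sum_add_distrib, ← Finset.sum_add_distrib]
    exact Finset.sum_congr rfl fun e _ => hdisp e
  generalize ∑ e, se e = X1 at *
  generalize ∑ e, re e = X2 at *
  generalize (∑ e, tot a (AddMonoidHom.fst _ _) (dv (α e) + dv (β e) + Pi.single e (1, 0))) = X3 at *
  generalize (∑ e, tot b (AddMonoidHom.snd _ _) (dv (α e) + dv (β e) + Pi.single e (1, 0))) = X4 at *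
  calc _ = c + z + (X1 + X3) + (s + tot a (AddMonoidHom.fst _ _) d) := by abel
    _ = _ := by rw [h4, hrs]; abel

theorem tot_dv_one (a : E → ι → ℕ) (p : (ι → ℕ) × (ι → ℕ) →+ (ι → ℕ)) (e : E) :
    tot a p (dv [(e, 0)]) = a e := by
  classical
  have : dv (ι := ι) [(e, 0)] = (Pi.single e (1, 0) : E → ℕ × ((ι → ℕ) × (ι → ℕ))) := by
    simp [dv]
  rw [this, tot_single]; simp

/-- Pumping argument. -/
theorem pump (hT : MonoT J T) {c : ι → ℕ} [Fintype ι]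
    {U : AddSubmonoid ((ι → ℕ) × (ι → ℕ))} {B : Set ι} {t : (ι → ℕ) × (ι → ℕ) × (ι → ℕ)}
    (ht : t ∈ Tri hT c U) (hB : ∀ i ∈ B, 0 < t.2.1 i) (htB : t.2.1 ∈ zer Bᶜ)
    {q : (ι → ℕ) × (ι → ℕ)} (hq1 : q.1 ∈ zer J) (hq2 : q.2 ∈ zer J) (hqU : q ∈ U) {k : ι → ℕ}
    (hk : ∀ z ∈ zer J, z ∈ zer Bᶜ → (∀ i ∈ B, k i ≤ z i) → TS T (c + z + q.1) (c + z + q.2)) :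
    ∃ k' : ℕ, ∀ n : ℕ, k' • (t.1, t.2.2) + n • q ∈ Lsub hT c ⊓ U := by
  refine ⟨∑ i, k i, fun n => ?_⟩
  set k' := ∑ i, k i with hk'
  obtain ⟨h1, h2, h3, h4, h5, h6⟩ := nsmul_mem ht k'
  obtain ⟨r, x, s⟩ := t
  obtain ⟨qr, qs⟩ := q
  simp only [Prod.smul_mk] at h1 h2 h3 h4 h5 h6 ⊢
  dsimp only at *
  refine ⟨⟨add_mem h1 (nsmul_mem hq1 n), add_mem h3 (nsmul_mem hq2 n), ?_⟩,
    add_mem h4 (nsmul_mem hqU n)⟩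
  have hx : ∀ i ∈ B, k i ≤ (k' • x) i := by
    intro i hi
    have h7 : k i ≤ k' := Finset.single_le_sum (f := k) (fun _ _ => Nat.zero_le _) (Finset.mem_univ i)
    have h8 := hB i hi
    simp only [Pi.smul_apply, smul_eq_mul]
    nlinarith
  have hmid : ∀ j : ℕ, j ≤ n →
      TS T (c + k' • x + n • qr) (c + k' • x + (j • qs + (n - j) • qr)) := by
    intro j
    induction j with
    | zero => intro _; simp; exact Relation.ReflTransGen.refl
    | succ j ih =>
      intro hj
      refine (ih (by omega)).trans ?_
      have h9 := (hk (k' • x) h2 (nsmul_mem htB _) hx)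
      refine h9.add' hT (z := j • qs + (n - (j + 1)) • qr)
        (add_mem (nsmul_mem hq2 _) (nsmul_mem hq1 _)) ?_ ?_
      · obtain ⟨p, hp⟩ : ∃ p, n - j = p + 1 := ⟨n - j - 1, by omega⟩
        rw [hp, show n - (j + 1) = p by omega, add_smul, one_smul]; abel
      · rw [add_smul, one_smul]; abel
  have h9 := hmid n le_rfl
  refine ((h5.add' hT (nsmul_mem hq1 n) ?_ rfl).trans h9).trans
    (h6.add' hT (nsmul_mem hq2 n) ?_ ?_)
  · rw [Prod.fst_add]; abel
  · simp
  · rw [Prod.snd_add]; abel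

end key

end PV

namespace PV

theorem Nice.sup {N : Type} [AddCommMonoid N] {P Q : AddSubmonoid N} (hP : Nice P) (hQ : Nice Q) :
    Nice (P ⊔ Q) := by
  let R : Bool → AddSubmonoid N := fun b => if b then P else Q
  have hR : ∀ b, Nice (R b) := by intro b; cases b <;> simp [R, hP, hQ]
  let π : (Bool → N) →+ N := Pi.evalAddMonoidHom (fun _ : Bool => N) true +
    Pi.evalAddMonoidHom (fun _ : Bool => N) false
  convert (Nice.pi hR).map π using 1
  ext x
  rw [AddSubmonoid.mem_sup]
  constructor
  · rintro ⟨y, hy, z, hz, rfl⟩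
    refine ⟨fun b => if b then y else z, ?_, ?_⟩
    · intro b _
      cases b
      · simpa [R] using hz
      · simpa [R] using hy
    · simp [π]
  · rintro ⟨f, hf, rfl⟩
    exact ⟨f true, by simpa [R] using hf true trivial, f false, by simpa [R] using hf false trivial,
      rfl⟩

theorem fg_top_pi {ι : Type} [Finite ι] : (⊤ : AddSubmonoid (ι → ℕ)).FG :=
  AddSubmonoid.fg_of_subtractive fun _ _ _ _ => trivial

theorem fg_top_prod {A B : Type} [AddCommMonoid A] [AddCommMonoid B]
    (hA : (⊤ : AddSubmonoid A).FG) (hB : (⊤ : AddSubmonoid B).FG) :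
    (⊤ : AddSubmonoid (A × B)).FG := by
  have : (⊤ : AddSubmonoid (A × B)) = (⊤ : AddSubmonoid A).map (AddMonoidHom.inl A B) ⊔
      (⊤ : AddSubmonoid B).map (AddMonoidHom.inr A B) := by
    symm
    rw [eq_top_iff]
    rintro ⟨x, y⟩ -
    exact AddSubmonoid.mem_sup.2 ⟨(x, 0), ⟨x, trivial, rfl⟩, (0, y), ⟨y, trivial, rfl⟩, by simp⟩
  rw [this]
  exact (hA.map _).sup (hB.map _)

theorem fg_top_nat : (⊤ : AddSubmonoid ℕ).FG := by
  have h := (fg_top_pi (ι := Unit)).map (Pi.evalAddMonoidHom (fun _ : Unit => ℕ) ())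
  convert h
  symm
  rw [eq_top_iff]
  intro x _
  exact ⟨fun _ => x, trivial, rfl⟩

theorem Nice.topProd {A : Type} [AddCommMonoid A] {P : AddSubmonoid A} (hP : Nice P) :
    Nice (P.comap (AddMonoidHom.snd ℕ A)) := by
  have : P.comap (AddMonoidHom.snd ℕ A) = (⊤ : AddSubmonoid ℕ).map (AddMonoidHom.inl ℕ A) ⊔
      P.map (AddMonoidHom.inr ℕ A) := by
    apply le_antisymm
    · rintro ⟨x, y⟩ h
      exact AddSubmonoid.mem_sup.2 ⟨(x, 0), ⟨x, trivial, rfl⟩, (0, y), ⟨y, h, rfl⟩, by simp⟩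
    · apply sup_le
      · rintro _ ⟨x, -, rfl⟩; exact zero_mem P
      · rintro _ ⟨x, h, rfl⟩; exact h
  rw [this]
  exact (Nice.of_fg (fg_top_nat.map _)).sup (hP.map _)

section key
variable {ι : Type} {J : Set ι} {T : Set ((ι → ℕ) × (ι → ℕ))}

/-- Occurring configurations. -/
def Occ (J : Set ι) (T : Set ((ι → ℕ) × (ι → ℕ))) (c : ι → ℕ)
    (U : AddSubmonoid ((ι → ℕ) × (ι → ℕ))) (y y' : ι → ℕ) : Prop :=
  ∃ r s, r ∈ zer J ∧ s ∈ zer J ∧ (r, s) ∈ U ∧ TS T (c + r) y ∧ TS T y' (c + s)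

theorem tri_diag (hT : MonoT J T) {c : ι → ℕ} {U : AddSubmonoid ((ι → ℕ) × (ι → ℕ))}
    {r s : ι → ℕ} (h1 : r ∈ zer J) (h2 : s ∈ zer J) (h3 : (r, s) ∈ U) (h4 : TS T (c + r) (c + s)) :
    (r, r, s) ∈ Tri hT c U ∧ (r, s, s) ∈ Tri hT c U :=
  ⟨⟨h1, h1, h2, h3, Relation.ReflTransGen.refl, h4⟩,
    ⟨h1, h2, h2, h3, h4, Relation.ReflTransGen.refl⟩⟩

theorem occ_eq (hT : MonoT J T) {c : ι → ℕ} (hc : c ∈ zer J)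
    {U : AddSubmonoid ((ι → ℕ) × (ι → ℕ))} {y y' : ι → ℕ} (h : Occ J T c U y y)
    (h' : Occ J T c U y' y') (hle : y ≤ y') (i : ι)
    (hi : ∀ t ∈ Tri hT c U, t.2.1 i = 0) : y i = y' i := by
  obtain ⟨r, s, hr, hs, hU, h1, h2⟩ := h
  obtain ⟨r', s', hr', hs', hU', h1', h2'⟩ := h'
  obtain ⟨z, rfl⟩ := exists_add_of_le hle
  have hz : z ∈ zer J := zer_le (fun i => by simp) (h1'.right hT (add_mem hc hr'))
  have hmem : (r' + r, s + z + r, s' + s) ∈ Tri hT c U := by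
    refine ⟨add_mem hr' hr, add_mem (add_mem hs hz) hr, add_mem hs' hs, add_mem hU' hU, ?_, ?_⟩
    · have := h1'.trans (h2.add hT hz)
      exact this.add' hT hr (by dsimp only; abel) (by dsimp only; abel)
    · have := (h1.add hT hz).trans h2'
      exact this.add' hT hs (by dsimp only; abel) (by dsimp only; abel)
  have := hi _ hmem
  simp only [Pi.add_apply] at this ⊢
  omega

theorem exists_walk {c : ι → ℕ}
    {U : AddSubmonoid ((ι → ℕ) × (ι → ℕ))} {B : Set ι} {E : Type} [Fintype E] {a b : E → ι → ℕ}
    {Pp : E → AddSubmonoid ((ι → ℕ) × (ι → ℕ))}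
    (hoff : ∀ e w, w ∈ Pp e → w.1 ∈ zer Bᶜ ∧ w.2 ∈ zer Bᶜ)
    (hone : ∀ y y', (y, y') ∈ T → Occ J T c U y y' →
      ∃ e, ∃ w ∈ Pp e, y = a e + w.1 ∧ y' = b e + w.2) {y y' : ι → ℕ} (h : TS T y y') :
    Occ J T c U y y' →
    ∃ l : List (E × ((ι → ℕ) × (ι → ℕ))), (∀ f ∈ l, f.2 ∈ Pp f.1) ∧
      IsW (srcL B a) (srcL B b) (node B y) l (node B y') ∧
      y' + tot a (AddMonoidHom.fst _ _) (dv l) = y + tot b (AddMonoidHom.snd _ _) (dv l) := by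
  induction h using Relation.ReflTransGen.head_induction_on with
  | refl => intro _; exact ⟨[], by simp, rfl, by simp [dv]⟩
  | head h1 h2 ih =>
    rintro ⟨r, s, hr, hs, hU, h3, h4⟩
    obtain ⟨l, hl, hw, hd⟩ := ih ⟨r, s, hr, hs, hU, h3.tail h1, h4⟩
    obtain ⟨e, w, hwe, rfl, rfl⟩ := hone _ _ h1 ⟨r, s, hr, hs, hU, h3, TS.trans h2 h4⟩
    refine ⟨(e, w) :: l, ?_, ⟨?_, ?_⟩, ?_⟩
    · intro f hf
      rcases List.mem_cons.1 hf with rfl | hf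
      · exact hwe
      · exact hl f hf
    · exact (node_add (hoff e w hwe).1).symm
    · rw [node_add (hoff e w hwe).2] at hw; exact hw
    · rw [dv_cons, map_add, map_add, tot_single, tot_single]
      simp only [one_smul, AddMonoidHom.coe_fst, AddMonoidHom.coe_snd]
      calc _ = (y' + tot a (AddMonoidHom.fst _ _) (dv l)) + (a e + w.1) := by abel
        _ = _ := by rw [hd]; abel

open Classical in
theorem dv_deg {E V : Type} [Fintype E] (src tgt : E → V)
    (l : List (E × ((ι → ℕ) × (ι → ℕ)))) :
    ∀ u v, IsW (fun f => src f.1) (fun f => tgt f.1) u l v →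
    deg src (fun e => (dv l e).1) + Pi.single v 1 = deg tgt (fun e => (dv l e).1) + Pi.single u 1 := by
  induction l with
  | nil => 
    intro u v h
    cases h
    have : (fun e : E => (dv (ι := ι) [] e).1) = 0 := by ext; simp [dv]
    rw [this]; simp
  | cons f l ih =>
    intro u v h
    have h1 := ih _ _ h.2
    have : (fun e => (dv (f :: l) e).1) = Pi.single f.1 1 + fun e => (dv l e).1 := by
      ext e
      rw [dv_cons]
      by_cases he : e = f.1
      · subst he; simp
      · simp [he]
    rw [this, map_add, map_add, deg_single, deg_single, add_assoc, h1, ← h.1]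
    abel

theorem dv_bal {E V : Type} [Fintype E] (src tgt : E → V)
    (l : List (E × ((ι → ℕ) × (ι → ℕ)))) (u : V)
    (h : IsW (fun f => src f.1) (fun f => tgt f.1) u l u) :
    deg src (fun e => (dv l e).1) = deg tgt (fun e => (dv l e).1) :=
  add_right_cancel (dv_deg src tgt l u u h)

theorem dv_mem {E : Type} {Pp : E → AddSubmonoid ((ι → ℕ) × (ι → ℕ))}
    (l : List (E × ((ι → ℕ) × (ι → ℕ)))) (h : ∀ f ∈ l, f.2 ∈ Pp f.1) [Fintype E] (e : E) :
    (dv l e).2 ∈ Pp e := by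
  classical
  induction l with
  | nil => simp [dv, zero_mem]
  | cons f l ih =>
    rw [dv_cons, Pi.add_apply, Prod.snd_add]
    refine add_mem ?_ (ih fun f hf => h f (by simp [hf]))
    by_cases he : e = f.1
    · subst he; simpa using h f (by simp)
    · simp [he, zero_mem]

end key

end PV

namespace PV

section key
variable {ι : Type} {J : Set ι} {T : Set ((ι → ℕ) × (ι → ℕ))}

theorem key [Fintype ι] (hT : MonoT J T) (D : GoodData T) {c : ι → ℕ} (hc : c ∈ zer J) :
    Nice (Lsub hT c) := by
  classical
  intro U hU
  set B : Set ι := {i | ∃ t ∈ Tri hT c U, 0 < t.2.1 i} with hBdef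
  have hx : ∀ t ∈ Tri hT c U, t.2.1 ∈ zer Bᶜ := by
    intro t ht i hi
    by_contra h
    exact hi ⟨t, ht, Nat.pos_of_ne_zero h⟩
  have hrs : ∀ r s, r ∈ zer J → s ∈ zer J → (r, s) ∈ U → TS T (c + r) (c + s) →
      r ∈ zer Bᶜ ∧ s ∈ zer Bᶜ := by
    intro r s h1 h2 h3 h4
    exact ⟨hx _ (tri_diag hT h1 h2 h3 h4).1, hx _ (tri_diag hT h1 h2 h3 h4).2⟩
  obtain ⟨t2, ht2, ht2B⟩ : ∃ t2 ∈ Tri hT c U, ∀ i ∈ B, 0 < t2.2.1 i := by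
    have : ∀ i, ∃ t ∈ Tri hT c U, i ∈ B → 0 < t.2.1 i := by
      intro i
      by_cases hi : i ∈ B
      · obtain ⟨t, ht, h⟩ := hi
        exact ⟨t, ht, fun _ => h⟩
      · exact ⟨0, zero_mem _, fun h => absurd h hi⟩
    choose t ht hti using this
    refine ⟨∑ i, t i, sum_mem fun i _ => ht i, fun i hi => ?_⟩
    rw [Prod.snd_sum, Prod.fst_sum, Finset.sum_apply]
    exact lt_of_lt_of_le (hti i hi)
      (Finset.single_le_sum (f := fun j => (t j).2.1 i) (fun _ _ => Nat.zero_le _) (Finset.mem_univ i))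
  have hval : ∀ ω, D.val ω ∈ T := fun ω => by
    have := D.mem ω 0 (zero_mem _)
    rwa [add_zero] at this
  let S := {ω : D.Ω // Occ J T c U (D.val ω).1 (D.val ω).2}
  have hSa : ∀ ω : S, Occ J T c U (D.val ω.1).1 (D.val ω.1).1 := by
    rintro ⟨ω, r, s, h1, h2, h3, h4, h5⟩
    exact ⟨r, s, h1, h2, h3, h4, Relation.ReflTransGen.head (hval ω) h5⟩
  have hSb : ∀ ω : S, Occ J T c U (D.val ω.1).2 (D.val ω.1).2 := by
    rintro ⟨ω, r, s, h1, h2, h3, h4, h5⟩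
    exact ⟨r, s, h1, h2, h3, h4.tail (hval ω), h5⟩
  obtain ⟨F, hF⟩ := wqo_basis (le := fun a b : S => D.le a.1 b.1) (fun f => D.wqo fun n => (f n).1)
  let E := {x // x ∈ F}
  let a : E → ι → ℕ := fun e => (D.val e.1.1).1
  let b : E → ι → ℕ := fun e => (D.val e.1.1).2
  let Z : AddSubmonoid ((ι → ℕ) × (ι → ℕ)) :=
    (zer Bᶜ).comap (AddMonoidHom.fst _ _) ⊓ (zer Bᶜ).comap (AddMonoidHom.snd _ _)
  have hZ : Lin Z := ((zer_lin _).comap _).inf ((zer_lin _).comap _)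
  let Pp : E → AddSubmonoid ((ι → ℕ) × (ι → ℕ)) := fun e => D.P e.1.1 ⊓ Z
  have hPp : ∀ e, Nice (Pp e) := fun e => (D.nice _).inf hZ
  have hstep : ∀ e w, w ∈ Pp e → (a e + w.1, b e + w.2) ∈ T := fun e w hw => D.mem _ _ hw.1
  have hoff : ∀ e w, w ∈ Pp e → w.1 ∈ zer Bᶜ ∧ w.2 ∈ zer Bᶜ := fun e w hw => hw.2
  have hone : ∀ y y', (y, y') ∈ T → Occ J T c U y y' →
      ∃ e, ∃ w ∈ Pp e, y = a e + w.1 ∧ y' = b e + w.2 := by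
    intro y y' hy ho
    obtain ⟨ω, hω⟩ := D.surj _ hy
    have hoω : Occ J T c U (D.val ω).1 (D.val ω).2 := by rw [hω]; exact ho
    obtain ⟨e, he, hle⟩ := hF ⟨ω, hoω⟩
    obtain ⟨w, hw, h1⟩ := D.le_val _ _ hle
    rw [hω] at h1
    have h2 : y = (D.val e.1).1 + w.1 := congrArg Prod.fst h1
    have h3 : y' = (D.val e.1).2 + w.2 := congrArg Prod.snd h1
    have ha := hSa ⟨ω, hoω⟩
    have hb := hSb ⟨ω, hoω⟩
    simp only [hω] at ha hb
    refine ⟨⟨e, he⟩, w, ⟨hw, ?_, ?_⟩, h2, h3⟩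
    · intro i hi
      have := occ_eq hT hc (hSa e) ha (by rw [h2]; intro i; simp) i (fun t ht => hx t ht i hi)
      rw [h2, Pi.add_apply] at this
      show w.1 i = 0
      omega
    · intro i hi
      have := occ_eq hT hc (hSb e) hb (by rw [h3]; intro i; simp) i (fun t ht => hx t ht i hi)
      rw [h3, Pi.add_apply] at this
      show w.2 i = 0
      omega
  -- choose data for each edge
  have hchoice : ∀ e : E, ∃ α β : List (E × ((ι → ℕ) × (ι → ℕ))), ∃ r s : ι → ℕ,
      (∀ f ∈ α, f.2 ∈ Pp f.1) ∧ (∀ f ∈ β, f.2 ∈ Pp f.1) ∧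
      IsW (srcL B a) (srcL B b) (node B c) α (node B (a e)) ∧
      IsW (srcL B a) (srcL B b) (node B (b e)) β (node B c) ∧
      r ∈ zer J ∧ s ∈ zer J ∧ (r, s) ∈ U ∧ TS T (c + r) (c + s) ∧
      s + tot a (AddMonoidHom.fst _ _) (dv α + dv β + dv [(e, 0)]) =
      r + tot b (AddMonoidHom.snd _ _) (dv α + dv β + dv [(e, 0)]) := by
    intro e
    obtain ⟨r, s, h1, h2, h3, h4, h5⟩ := e.1.2
    have h6 : TS T (c + r) (c + s) := h4.trans (Relation.ReflTransGen.head (hval _) h5)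
    obtain ⟨hrB, hsB⟩ := hrs r s h1 h2 h3 h6
    obtain ⟨α, hα1, hα2, hα3⟩ := exists_walk hoff hone h4
      ⟨r, s, h1, h2, h3, Relation.ReflTransGen.refl, Relation.ReflTransGen.head (hval _) h5⟩
    obtain ⟨β, hβ1, hβ2, hβ3⟩ := exists_walk hoff hone h5
      ⟨r, s, h1, h2, h3, h4.tail (hval _), Relation.ReflTransGen.refl⟩
    rw [node_add hrB] at hα2
    rw [node_add hsB] at hβ2
    refine ⟨α, β, r, s, hα1, hβ1, hα2, hβ2, h1, h2, h3, h6, ?_⟩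
    simp only [map_add, tot_dv_one]
    change a e + _ = _ at hα3
    change _ = b e + _ at hβ3
    apply add_left_cancel (a := c)
    generalize tot a (AddMonoidHom.fst _ _) (dv α) = X1 at *
    generalize tot b (AddMonoidHom.snd _ _) (dv α) = X2 at *
    generalize tot a (AddMonoidHom.fst _ _) (dv β) = X3 at *
    generalize tot b (AddMonoidHom.snd _ _) (dv β) = X4 at *
    calc _ = (c + s + X3) + (a e + X1) := by abel
      _ = _ := by rw [hβ3, hα3]; abel
  choose α β re se hα hβ hαw hβw hre hse hreU hreT hdisp using hchoice
  -- the pumping triple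
  set tt := t2 + ∑ e, (re e, re e, se e) with htt
  have htt_mem : tt ∈ Tri hT c U :=
    add_mem ht2 (sum_mem fun e _ => (tri_diag hT (hre e) (hse e) (hreU e) (hreT e)).1)
  have httB : ∀ i ∈ B, 0 < tt.2.1 i := by
    intro i hi
    have := ht2B i hi
    simp only [htt, Prod.snd_add, Prod.fst_add, Pi.add_apply]
    omega
  set ph : (ι → ℕ) × (ι → ℕ) := (tt.1, tt.2.2) with hph
  have htriW : ∀ t ∈ Tri hT c U, (t.1, t.2.2) ∈ Lsub hT c ⊓ U := fun t ht =>
    ⟨⟨ht.1, ht.2.2.1, ht.2.2.2.2.1.trans ht.2.2.2.2.2⟩, ht.2.2.2.1⟩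
  have hphW : ph ∈ Lsub hT c ⊓ U := htriW _ htt_mem
  have ht2W := htriW _ ht2
  have hph_eq : ph = (t2.1, t2.2.2) + (∑ e, re e, ∑ e, se e) := by
    simp only [hph, htt, Prod.fst_add, Prod.snd_add, Prod.fst_sum, Prod.snd_sum]
    rfl
  -- the flow monoid
  let PP : Option E → AddSubmonoid (ℕ × ((ι → ℕ) × (ι → ℕ))) := fun o =>
    o.elim ⊤ fun e => (Pp e).comap (AddMonoidHom.snd ℕ _)
  have hPP : ∀ o, Nice (PP o) := by
    intro o
    cases o with
    | none => exact Nice.of_fg (fg_top_prod fg_top_nat (fg_top_prod fg_top_pi fg_top_pi))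
    | some e => exact (hPp e).topProd
  let res : (Option E → ℕ × ((ι → ℕ) × (ι → ℕ))) →+ (E → ℕ × ((ι → ℕ) × (ι → ℕ))) :=
    { toFun := fun d e => d (some e), map_zero' := rfl, map_add' := fun _ _ => rfl }
  let mult : (E → ℕ × ((ι → ℕ) × (ι → ℕ))) →+ (E → ℕ) :=
    { toFun := fun d e => (d e).1, map_zero' := rfl, map_add' := fun _ _ => rfl }
  let π : (Option E → ℕ × ((ι → ℕ) × (ι → ℕ))) →+ ((ι → ℕ) × (ι → ℕ)) :=
    { toFun := fun d => (d none).2, map_zero' := rfl, map_add' := fun _ _ => rfl }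
  let ZJ : AddSubmonoid ((ι → ℕ) × (ι → ℕ)) :=
    (zer J).comap (AddMonoidHom.fst _ _) ⊓ (zer J).comap (AddMonoidHom.snd _ _)
  let VV : AddSubmonoid (Option E → ℕ × ((ι → ℕ) × (ι → ℕ))) :=
    ((((deg fun e => node B (a e)).comp mult).comp res).eqLocusM
      (((deg fun e => node B (b e)).comp mult).comp res)) ⊓
    ((((AddMonoidHom.snd _ _).comp π + (tot a (AddMonoidHom.fst _ _)).comp res).eqLocusM
      ((AddMonoidHom.fst _ _).comp π + (tot b (AddMonoidHom.snd _ _)).comp res)) ⊓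
    (U ⊓ (ZJ ⊓ Z)).comap π)
  have hVV : Lin VV := (lin_eqLocus _ _).inf ((lin_eqLocus _ _).inf
    ((hU.inf ((((zer_lin _).comap _).inf ((zer_lin _).comap _)).inf hZ)).comap _))
  obtain ⟨C, hC, hDC, d0, hd0, hk⟩ := Nice.pi hPP VV hVV
  set Dm := AddSubmonoid.pi Set.univ PP ⊓ VV with hDm
  have real : ∀ d ∈ Dm, ∃ k' : ℕ, ∀ n : ℕ, k' • ph + n • (ph + π d) ∈ Lsub hT c ⊓ U := by
    rintro d ⟨hd1, hd2, hd3, hd4, ⟨hd5, hd6⟩, hd7, hd8⟩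
    obtain ⟨k, hk⟩ := realize0 hT hstep hoff hc hα hβ hαw hβw hre
      (fun e => (hrs _ _ (hre e) (hse e) (hreU e) (hreT e)).1) hdisp (d := res d)
      (fun e => hd1 (some e) trivial) hd2 hd5 hd7 hd3
    refine pump hT htt_mem httB (hx _ htt_mem) (add_mem hphW.1.1 hd5) (add_mem hphW.1.2.1 hd6)
      (add_mem hphW.2 hd4) (k := k) ?_
    intro z hz hzB hkz
    have h1 := hk z hz hzB hkz
    have h2 := ht2W.1.2.2
    rw [hph_eq]
    refine TS.trans (h1.add' hT (z := t2.1) ht2W.1.1 (u := _) ?_ rfl)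
      (h2.add' hT (z := z + (∑ e, se e + (π d).2))
        (add_mem hz (add_mem (sum_mem fun e _ => hse e) hd6)) ?_ ?_)
    · show c + z + (t2.1 + ∑ e, re e + (π d).1) = c + z + (∑ e, re e + (π d).1) + t2.1
      abel
    · show c + z + (∑ e, se e + (π d).2) + t2.1 = c + t2.1 + (z + (∑ e, se e + (π d).2))
      abel
    · show c + z + (t2.2.2 + ∑ e, se e + (π d).2) = c + t2.2.2 + (z + (∑ e, se e + (π d).2))
      abel
  obtain ⟨k0, hk0⟩ := real d0 hd0
  have hp0 : (k0 + 2) • ph + π d0 ∈ Lsub hT c ⊓ U := by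
    have := add_mem (hk0 1) hphW
    convert this using 1
    simp only [add_smul, one_smul, two_smul]; abel
  refine ⟨C.map π, hC.map π, ?_, _, hp0, ?_⟩
  · rintro ⟨r, s⟩ ⟨⟨h1, h2, h3⟩, h4⟩
    dsimp only at h1 h2 h3
    obtain ⟨l, hl1, hl2, hl3⟩ := exists_walk hoff hone h3
      ⟨r, s, h1, h2, h4, Relation.ReflTransGen.refl, Relation.ReflTransGen.refl⟩
    obtain ⟨hrB, hsB⟩ := hrs r s h1 h2 h4 h3
    rw [node_add hrB, node_add hsB] at hl2
    refine ⟨fun o => o.elim (0, (r, s)) (dv l), hDC ⟨?_, ?_, ?_, h4, ⟨h1, h2⟩, hrB, hsB⟩, rfl⟩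
    · intro o _
      cases o with
      | none => trivial
      | some e => exact dv_mem l hl1 e
    · exact dv_bal (fun e => node B (a e)) (fun e => node B (b e)) l _ hl2
    · show s + tot a _ (dv l) = r + tot b _ (dv l)
      apply add_left_cancel (a := c)
      rw [← add_assoc, ← add_assoc]; exact hl3
  · rintro _ ⟨c', hc', rfl⟩
    obtain ⟨k1, hk1, hk2⟩ := hk c' hc'
    obtain ⟨k', hk'⟩ := real _ hk2
    refine ⟨(k' + 1) * k1, Nat.mul_pos (Nat.succ_pos _) hk1, ?_⟩
    have h1 := hk' (k' + 1)
    obtain ⟨m, hm⟩ : ∃ m, (k' + 1) * k1 * (k0 + 2) = k' + (k' + 1) + m := by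
      apply exists_add_of_le
      calc k' + (k' + 1) ≤ (k' + 1) * 1 * 2 := by omega
        _ ≤ _ := by gcongr; omega
    have h2 := add_mem h1 (nsmul_mem hphW m)
    convert h2 using 1
    rw [map_nsmul, map_add]
    have h3 : ((k' + 1) * k1) • ((k0 + 2) • ph) = k' • ph + (k' + 1) • ph + m • ph := by
      rw [smul_smul, hm, add_smul, add_smul]
    rw [smul_add, smul_add, h3, smul_add, smul_smul, smul_add]
    abel

end key

end PV

namespace PV

theorem higman {Ω : Type} {le : Ω → Ω → Prop} (h0 : ∀ a, le a a)
    (h1 : ∀ a b c, le a b → le b c → le a c) (h : WellQuasiOrdered le) :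
    WellQuasiOrdered (List.SublistForall₂ le) := by
  have : IsPreorder Ω le := { refl := h0, trans := h1 }
  have h2 : (Set.univ : Set Ω).PartiallyWellOrderedOn le := Set.partiallyWellOrderedOn_univ_iff.2 h
  have h3 := Set.PartiallyWellOrderedOn.partiallyWellOrderedOn_sublistForall₂ le h2
  intro f
  exact Set.PartiallyWellOrderedOn.exists_lt h3 (f := f) (fun n x _ => trivial)

theorem sublist_refl {Ω : Type} {le : Ω → Ω → Prop} (h0 : ∀ a, le a a) (l : List Ω) :
    List.SublistForall₂ le l l := by
  induction l with
  | nil => exact List.SublistForall₂.nil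
  | cons a l ih => exact List.SublistForall₂.cons (h0 a) ih

theorem sublist_trans {Ω : Type} {le : Ω → Ω → Prop} (h0 : ∀ a, le a a)
    (h1 : ∀ a b c, le a b → le b c → le a c) (l l' l'' : List Ω)
    (h : List.SublistForall₂ le l l') (h' : List.SublistForall₂ le l' l'') :
    List.SublistForall₂ le l l'' := by
  have : IsPreorder Ω le := { refl := h0, trans := h1 }
  exact IsTrans.trans _ _ _ h h'

section star
variable {ι : Type} {J : Set ι} {T : Set ((ι → ℕ) × (ι → ℕ))}

def Prun (hT : MonoT J T) (D : GoodData T) : (ι → ℕ) → List D.Ω → AddSubmonoid ((ι → ℕ) × (ι → ℕ))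
  | c, [] => Lsub hT c
  | c, ω :: l => mcomp (mcomp (Lsub hT c) (D.P ω)) (Prun hT D (D.val ω).2 l)

abbrev Chain (D : GoodData T) := IsW (fun ω => (D.val ω).1) (fun ω => (D.val ω).2)

theorem GoodData.val_mem {N : Type} [AddCommMonoid N] {X : Set N} (D : GoodData X) (ω : D.Ω) :
    D.val ω ∈ X := by
  have := D.mem ω 0 (zero_mem _)
  rwa [add_zero] at this

theorem Prun_nice [Fintype ι] (hT : MonoT J T) (D : GoodData T) (l : List D.Ω) :
    ∀ c ∈ zer J, Nice (Prun hT D c l) := by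
  induction l with
  | nil => intro c hc; exact key hT D hc
  | cons ω l ih =>
    intro c hc
    exact ((key hT D hc).comp (D.nice ω)).comp (ih _ (hT.right _ _ (D.val_mem ω)))

theorem Chain.ts (D : GoodData T) (l : List D.Ω) : ∀ c e, Chain D c l e → TS T c e := by
  induction l with
  | nil => rintro c e h; cases h; exact Relation.ReflTransGen.refl
  | cons ω l ih =>
    rintro c e ⟨rfl, h⟩
    exact Relation.ReflTransGen.head (D.val_mem ω) (ih _ _ h)

theorem exists_chain (D : GoodData T) {c e : ι → ℕ} (h : TS T c e) : ∃ l, Chain D c l e := by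
  induction h using Relation.ReflTransGen.head_induction_on with
  | refl => exact ⟨[], rfl⟩
  | head h1 h2 ih =>
    obtain ⟨l, hl⟩ := ih
    obtain ⟨ω, hω⟩ := D.surj _ h1
    exact ⟨ω :: l, by simp [hω], by simpa [hω] using hl⟩

theorem Prun_ts (hT : MonoT J T) (D : GoodData T) (l : List D.Ω) :
    ∀ c e r s, Chain D c l e → (r, s) ∈ Prun hT D c l → r ∈ zer J ∧ TS T (c + r) (e + s) := by
  induction l with
  | nil =>
    intro c e r s h h'
    cases h
    exact ⟨h'.1, h'.2.2⟩
  | cons ω l ih =>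
    rintro c e r s ⟨rfl, h⟩ ⟨b, ⟨b', h1, h2⟩, h3⟩
    have h4 := ih _ _ _ _ h h3
    exact ⟨h1.1, (TS.trans h1.2.2 (Relation.ReflTransGen.single (D.mem _ _ h2))).trans h4.2⟩

theorem Prun_mem (hT : MonoT J T) (D : GoodData T) {l l' : List D.Ω}
    (hl : List.SublistForall₂ D.le l l') :
    ∀ c e r s c' e', c ∈ zer J → r ∈ zer J → Chain D c l e → Chain D c' l' e' → TS T (c + r) c' →
      e' = e + s → (r, s) ∈ Prun hT D c l := by
  induction hl with
  | nil =>
    rintro c e r s c' e' hc hr h h' ht rfl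
    cases h
    have h1 := ht.trans (Chain.ts D _ _ _ h')
    refine ⟨hr, ?_, h1⟩
    exact zer_le (fun i => by simp) (h1.right hT (add_mem hc hr))
  | @cons ω ω' l l' hle _ ih =>
    rintro c e r s c' e' hc hr ⟨rfl, h⟩ ⟨rfl, h'⟩ ht he
    obtain ⟨w, hw, h1⟩ := D.le_val _ _ hle
    dsimp only at *
    have hm := D.val_mem ω
    have hm' := D.val_mem ω'
    have e1 : (D.val ω').1 = (D.val ω).1 + w.1 := by rw [h1]; rfl
    have e2 : (D.val ω').2 = (D.val ω).2 + w.2 := by rw [h1]; rfl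
    refine ⟨w.2, ⟨w.1, ⟨hr, ?_, ?_⟩, hw⟩, ?_⟩
    · exact zer_le (by rw [e1]; intro i; simp) (hT.left _ _ hm')
    · rw [e1] at ht; exact ht
    · refine ih _ _ _ _ _ _ (hT.right _ _ hm) ?_ h h' (by rw [e2]; exact Relation.ReflTransGen.refl) he
      exact zer_le (by rw [e2]; intro i; simp) (hT.right _ _ hm')
  | cons_right _ ih =>
    rintro c e r s c' e' hc hr h ⟨rfl, h'⟩ ht he
    exact ih _ _ _ _ _ _ hc hr h h' (ht.tail (D.val_mem _)) he

theorem Good.star [Fintype ι] (hT : MonoT J T) (h : Good T) :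
    Good {p : (ι → ℕ) × (ι → ℕ) | p.1 ∈ zer J ∧ TS T p.1 p.2} := by
  obtain ⟨D⟩ := h
  refine ⟨⟨{x : (ι → ℕ) × (List D.Ω × (ι → ℕ)) // x.1 ∈ zer J ∧ Chain D x.1 x.2.1 x.2.2},
    fun x y => x.1.1 ≤ y.1.1 ∧ (List.SublistForall₂ D.le x.1.2.1 y.1.2.1 ∧ x.1.2.2 ≤ y.1.2.2),
    fun x => (x.1.1, x.1.2.2), fun x => Prun hT D x.1.1 x.1.2.1, ?_, ?_, ?_, ?_, ?_, ?_, ?_⟩⟩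
  · intro a
    exact ⟨le_rfl, sublist_refl D.refl _, le_rfl⟩
  · rintro a b c ⟨h1, h2, h3⟩ ⟨h1', h2', h3'⟩
    exact ⟨h1.trans h1', sublist_trans D.refl D.trans _ _ _ h2 h2', h3.trans h3'⟩
  · intro f
    have h1 : WellQuasiOrdered (fun a b : List D.Ω × (ι → ℕ) =>
        List.SublistForall₂ D.le a.1 b.1 ∧ a.2 ≤ b.2) :=
      wqo_prod (sublist_trans D.refl D.trans) (sublist_refl D.refl)
        (higman D.refl D.trans D.wqo) wellQuasiOrdered_le
    have h2 := wqo_prod (r := fun x y : ι → ℕ => x ≤ y) (fun _ _ _ => le_trans) (fun _ => le_rfl)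
      wellQuasiOrdered_le h1
    exact h2 fun n => (f n).1
  · rintro ⟨⟨c, l, e⟩, hc, hl⟩ ⟨⟨c', l', e'⟩, hc', hl'⟩ ⟨h1, h2, h3⟩
    dsimp only at *
    obtain ⟨r, rfl⟩ := exists_add_of_le h1
    obtain ⟨s, rfl⟩ := exists_add_of_le h3
    exact ⟨(r, s), Prun_mem hT D h2 _ _ _ _ _ _ hc (zer_le (fun i => by simp) hc') hl hl'
      Relation.ReflTransGen.refl rfl, rfl⟩
  · rintro ⟨⟨c, l, e⟩, hc, hl⟩ ⟨r, s⟩ hw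
    have := Prun_ts hT D _ _ _ _ _ hl hw
    exact ⟨add_mem hc this.1, this.2⟩
  · rintro ⟨x, y⟩ ⟨h1, h2⟩
    obtain ⟨l, hl⟩ := exists_chain D h2
    exact ⟨⟨(x, l, y), h1, hl⟩, rfl⟩
  · rintro ⟨⟨c, l, e⟩, hc, hl⟩
    exact Prun_nice hT D _ _ hc

end star

end PV

namespace PV

theorem rtg_mono {α : Type} {r s : α → α → Prop} (h : ∀ a b, r a b → s a b) {x y : α}
    (h' : Relation.ReflTransGen r x y) : Relation.ReflTransGen s x y := by
  induction h' with
  | refl => exact Relation.ReflTransGen.refl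
  | tail _ h2 ih => exact ih.tail (h _ _ h2)

section net
variable {κ E : Type} (pre post : E → κ → ℕ) (lev : E → ℕ) (J : ℕ → Set κ)

def NStep (x y : κ → ℕ) : Prop :=
  ∃ e z, x = pre e + z ∧ y = post e + z ∧ x ∈ zer (J (lev e))

def tR (k : ℕ) : Set ((κ → ℕ) × (κ → ℕ)) :=
  {p | ∃ e z, lev e = k ∧ p.1 = pre e + z ∧ p.2 = post e + z ∧ p.1 ∈ zer (J k)}

def ltR (k : ℕ) : Set ((κ → ℕ) × (κ → ℕ)) :=
  {p | ∃ l, l < k ∧ p ∈ tR pre post lev J l}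

def DR (k : ℕ) : Set ((κ → ℕ) × (κ → ℕ)) := {p | TS (ltR pre post lev J k) p.1 p.2}

def AR (k : ℕ) : Set ((κ → ℕ) × (κ → ℕ)) :=
  {p | p ∈ rcomp (tR pre post lev J k) (DR pre post lev J k) ∧
    p ∈ (zer (J k)).comap (AddMonoidHom.snd (κ → ℕ) (κ → ℕ))}

def diagHom (N : Type) [AddCommMonoid N] : N →+ N × N :=
  (AddMonoidHom.id N).prod (AddMonoidHom.id N)

theorem Good.diag {N : Type} [AddCommMonoid N] (b b' : N) {C : AddSubmonoid N} (hC : C.FG) :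
    Good {p : N × N | ∃ c ∈ C, p = (b + c, b' + c)} := by
  convert Good.linear (b, b') (hC.map (diagHom N)) using 1
  ext ⟨x, y⟩
  constructor
  · rintro ⟨c, hc, h⟩
    exact ⟨_, ⟨c, hc, rfl⟩, h⟩
  · rintro ⟨_, ⟨c, hc, rfl⟩, h⟩
    exact ⟨c, hc, h⟩

theorem zer_fg [Finite κ] (J : Set κ) : (zer J).FG := by
  cases nonempty_fintype κ
  apply AddSubmonoid.fg_of_subtractive
  intro x hx y hy
  exact (zer_lin J).sub x y hx hy

theorem tR_good [Finite κ] [Finite E] (k : ℕ) : Good (tR pre post lev J k) := by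
  have : tR pre post lev J k = ⋃ e : {e : E // lev e = k ∧ pre e ∈ zer (J k)},
      {p | ∃ c ∈ zer (J k), p = (pre e.1 + c, post e.1 + c)} := by
    ext ⟨x, y⟩
    simp only [tR, Set.mem_ofPred_eq, Set.mem_iUnion]
    constructor
    · rintro ⟨e, z, h, rfl, rfl, h2⟩
      exact ⟨⟨e, h, zer_le (le_self_add) h2⟩, z, zer_le (le_add_self) h2, rfl⟩
    · rintro ⟨⟨e, h, h'⟩, z, hz, h3⟩
      obtain ⟨rfl, rfl⟩ := Prod.mk.inj h3
      exact ⟨e, z, h, rfl, rfl, add_mem h' hz⟩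
  rw [this]
  exact Good.iUnion fun e => Good.diag _ _ (zer_fg _)

variable {J}

theorem DR_add (hJ : Monotone J) (k : ℕ) {x y z : κ → ℕ} (hz : z ∈ zer (J k))
    (h : (x, y) ∈ DR pre post lev J k) : (x + z, y + z) ∈ DR pre post lev J k := by
  change TS _ x y at h
  change TS _ (x + z) (y + z)
  induction h with
  | refl => exact Relation.ReflTransGen.refl
  | tail _ h2 ih =>
    refine ih.tail ?_
    obtain ⟨l, hl, e, w, h3, h4, h5, h6⟩ := h2
    refine ⟨l, hl, e, w + z, h3, ?_, ?_, ?_⟩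
    · simp only at *; rw [h4, add_assoc]
    · simp only at *; rw [h5, add_assoc]
    · exact add_mem h6 fun j hj => hz j (hJ hl.le hj)

theorem AR_mono (hJ : Monotone J) (k : ℕ) : MonoT (J k) (AR pre post lev J k) where
  left := by
    rintro x y ⟨⟨w, ⟨e, z, h1, h2, h3, h4⟩, h5⟩, h6⟩
    exact h4
  right := by
    rintro x y ⟨_, h6⟩
    exact h6
  add := by
    rintro x y z hz ⟨⟨w, ⟨e, u, h1, h2, h3, h4⟩, h5⟩, h6⟩
    refine ⟨⟨w + z, ⟨e, u + z, h1, ?_, ?_, add_mem h4 hz⟩, DR_add pre post lev hJ k hz h5⟩,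
      show y + z ∈ zer (J k) from add_mem h6 hz⟩
    · simp only at *; rw [h2, add_assoc]
    · simp only at *; rw [h3, add_assoc]

theorem DR_mono {k l : ℕ} (h : k ≤ l) : DR pre post lev J k ⊆ DR pre post lev J l := by
  rintro ⟨x, y⟩ h'
  exact rtg_mono (fun a b ⟨m, hm, h2⟩ => ⟨m, hm.trans_le h, h2⟩) h'

theorem tR_sub (k : ℕ) : tR pre post lev J k ⊆ DR pre post lev J (k + 1) := by
  rintro ⟨x, y⟩ h
  exact Relation.ReflTransGen.single ⟨k, k.lt_succ_self, h⟩

theorem AR_sub (k : ℕ) {x y : κ → ℕ} (h : TS (AR pre post lev J k) x y) :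
    (x, y) ∈ DR pre post lev J (k + 1) := by
  induction h with
  | refl => exact Relation.ReflTransGen.refl
  | tail _ h2 ih =>
    obtain ⟨⟨w, h3, h4⟩, _⟩ := h2
    exact TS.trans ih (TS.trans (tR_sub _ _ _ _ h3) (DR_mono _ _ _ (Nat.le_succ _) h4))

theorem DR_succ (k : ℕ) : DR pre post lev J (k + 1) = DR pre post lev J k ∪
    rcomp (rcomp {p | p ∈ DR pre post lev J k ∧
        p ∈ (zer (J k)).comap (AddMonoidHom.snd (κ → ℕ) (κ → ℕ))}
      {p | p.1 ∈ zer (J k) ∧ TS (AR pre post lev J k) p.1 p.2})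
      (rcomp (tR pre post lev J k) (DR pre post lev J k)) := by
  apply Set.Subset.antisymm
  · rintro ⟨x, y⟩ h
    change TS _ x y at h
    induction h with
    | refl => exact Or.inl Relation.ReflTransGen.refl
    | @tail y y' _ h2 ih =>
      obtain ⟨l, hl, h2⟩ := h2
      rcases Nat.lt_succ_iff_lt_or_eq.1 hl with hl | rfl
      · have hs : ∀ u, (u, y) ∈ DR pre post lev J k → (u, y') ∈ DR pre post lev J k :=
          fun u hu => Relation.ReflTransGen.tail hu ⟨l, hl, h2⟩
        rcases ih with ih | ⟨b, ih, c, ih2, ih3⟩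
        · exact Or.inl (hs _ ih)
        · exact Or.inr ⟨b, ih, c, ih2, hs _ ih3⟩
      · have hy : y ∈ zer (J l) := by
          obtain ⟨e, z, h1, h2, h3, h4⟩ := h2
          exact h4
        right
        rcases ih with ih | ⟨b, ⟨a, ih0, ih1, ih4⟩, ih2⟩
        · exact ⟨y, ⟨y, ⟨ih, hy⟩, hy, Relation.ReflTransGen.refl⟩, y', h2,
            Relation.ReflTransGen.refl⟩
        · exact ⟨y, ⟨a, ih0, ih1, Relation.ReflTransGen.tail ih4 ⟨ih2, hy⟩⟩, y', h2,
            Relation.ReflTransGen.refl⟩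
  · rintro ⟨x, y⟩ (h | ⟨b, ⟨a, ⟨h1, _⟩, _, h2⟩, c, h3, h4⟩)
    · exact DR_mono _ _ _ (Nat.le_succ _) h
    · exact TS.trans (y := a) (DR_mono _ _ _ (Nat.le_succ _) h1) (TS.trans (y := b) (AR_sub _ _ _ _ h2)
        (TS.trans (tR_sub _ _ _ _ h3) (DR_mono _ _ _ (Nat.le_succ _) h4)))

theorem DR_good [Fintype κ] [Finite E] (hJ : Monotone J) (k : ℕ) :
    Good (DR pre post lev J k) := by
  induction k with
  | zero =>
    have := Good.diag (0 : κ → ℕ) 0 (zer_fg (∅ : Set κ))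
    convert this using 1
    ext ⟨x, y⟩
    constructor
    · intro h
      change TS _ x y at h
      have : x = y := by
        cases h with
        | refl => rfl
        | tail _ h2 => obtain ⟨l, hl, _⟩ := h2; omega
      subst this
      exact ⟨x, fun j hj => hj.elim, by simp⟩
    · rintro ⟨c, _, h⟩
      obtain ⟨rfl, rfl⟩ := Prod.mk.inj h
      exact Relation.ReflTransGen.refl
  | succ k ih =>
    rw [DR_succ]
    have hA : Good (AR pre post lev J k) :=
      ((tR_good pre post lev J k).comp ih).inter ((zer_lin _).comap _)
    exact ih.union (((ih.inter ((zer_lin _).comap _)).comp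
      (Good.star (AR_mono pre post lev hJ k) hA)).comp ((tR_good pre post lev J k).comp ih))

theorem reach_good [Fintype κ] [Finite E] (hJ : Monotone J) :
    Good {p : (κ → ℕ) × (κ → ℕ) |
      Relation.ReflTransGen (NStep pre post lev J) p.1 p.2} := by
  obtain ⟨k, hk⟩ : ∃ k, ∀ e, lev e < k := by
    obtain ⟨k, hk⟩ := (Set.finite_range lev).bddAbove
    exact ⟨k + 1, fun e => Nat.lt_succ_of_le (hk ⟨e, rfl⟩)⟩
  convert DR_good pre post lev hJ k using 1
  ext ⟨x, y⟩
  constructor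
  · exact fun h => rtg_mono
      (fun a b ⟨e, z, h1, h2, h3⟩ => ⟨lev e, hk e, e, z, rfl, h1, h2, h3⟩) h
  · exact fun h => rtg_mono
      (fun a b ⟨l, hl, e, z, h0, h1, h2, h3⟩ => ⟨e, z, h1, h2, h0 ▸ h3⟩) h
end net
end PV

namespace PV

section sep
variable {N : Type} [AddCommMonoid N]

theorem inter_cover [IsCancelAdd N] {C D : AddSubmonoid N} (hC : C.FG) (hD : D.FG) (b c : N) :
    (C ⊓ D).FG ∧ ∃ F : Finset N, ∀ u ∈ C, ∀ v ∈ D, b + u = c + v →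
      ∃ f ∈ F, ∃ r ∈ C ⊓ D, b + u = f + r := by
  classical
  obtain ⟨S, _, φ, hφ⟩ := fg_param hC
  obtain ⟨S', _, ψ, hψ⟩ := fg_param hD
  let Φ : (S → ℕ) × (S' → ℕ) →+ N := φ.comp (AddMonoidHom.fst _ _)
  let Ψ : (S → ℕ) × (S' → ℕ) →+ N := ψ.comp (AddMonoidHom.snd _ _)
  have htop : (⊤ : AddSubmonoid ((S → ℕ) × (S' → ℕ))).FG := fg_top_prod fg_top_pi fg_top_pi
  have hH : ((⊤ : AddSubmonoid ((S → ℕ) × (S' → ℕ))) ⊓ Φ.eqLocusM Ψ).FG := by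
    apply fg_inf htop
    intro x y hx hxy
    have hx : Φ x = Ψ x := hx
    have hxy : Φ (x + y) = Ψ (x + y) := hxy
    rw [map_add, map_add, hx] at hxy
    exact add_left_cancel hxy
  have hR : C ⊓ D = ((⊤ : AddSubmonoid ((S → ℕ) × (S' → ℕ))) ⊓ Φ.eqLocusM Ψ).map Φ := by
    ext x
    constructor
    · rintro ⟨h1, h2⟩
      obtain ⟨s, hs⟩ := (hφ x).1 h1
      obtain ⟨t, ht⟩ := (hψ x).1 h2
      exact ⟨(s, t), ⟨trivial, hs.trans ht.symm⟩, hs⟩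
    · rintro ⟨⟨s, t⟩, ⟨_, h⟩, rfl⟩
      have h : φ s = ψ t := h
      exact ⟨(hφ _).2 ⟨s, rfl⟩, (hψ _).2 ⟨t, h.symm⟩⟩
  refine ⟨hR ▸ hH.map _, ?_⟩
  have hw : WellQuasiOrdered (fun x y : {st : (S → ℕ) × (S' → ℕ) // b + φ st.1 = c + ψ st.2} =>
      x.1 ≤ y.1) := by
    intro f
    exact wellQuasiOrdered_le (fun n => (f n).1)
  obtain ⟨F, hF⟩ := wqo_basis hw
  refine ⟨F.image fun x => b + φ x.1.1, ?_⟩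
  intro u hu v hv huv
  obtain ⟨s, rfl⟩ := (hφ u).1 hu
  obtain ⟨t, rfl⟩ := (hψ v).1 hv
  obtain ⟨⟨⟨s0, t0⟩, h0⟩, hm, hle⟩ := hF ⟨(s, t), huv⟩
  obtain ⟨ds, rfl⟩ := exists_add_of_le hle.1
  obtain ⟨dt, rfl⟩ := exists_add_of_le hle.2
  refine ⟨_, Finset.mem_image_of_mem _ hm, φ ds, ⟨(hφ _).2 ⟨ds, rfl⟩, (hψ _).2 ⟨dt, ?_⟩⟩, ?_⟩
  · simp only [map_add] at huv h0
    rw [← add_assoc, ← add_assoc, h0] at huv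
    exact (add_left_cancel huv).symm
  · simp only [map_add, add_assoc]

theorem sep_aux {P C : AddSubmonoid N} {p0 : N} (hp0 : p0 ∈ P)
    (hd : ∀ c ∈ C, ∃ k : ℕ, 1 ≤ k ∧ k • (c + p0) ∈ P) {x y s : N} (hx : x ∈ P) (hy : y ∈ C)
    {n : ℕ} (hn : 1 ≤ n) (h : n • (x + p0) + y = s) :
    ∃ k : ℕ, 1 ≤ k ∧ ∀ m : ℕ, 1 ≤ m → ∃ p1 ∈ P, (m * k) • s = x + p1 := by
  obtain ⟨k, hk, hkP⟩ := hd y hy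
  obtain ⟨n, rfl⟩ := Nat.exists_eq_add_of_le hn
  obtain ⟨k, rfl⟩ := Nat.exists_eq_add_of_le hk
  have e : (1 + k) • s = x + ((k + n + k * n) • x + ((1 + k) * n) • p0 + (1 + k) • (y + p0)) := by
    rw [← h]
    simp only [smul_add, add_smul, one_smul, mul_smul, add_mul, one_mul]
    rw [smul_comm k n]
    abel
  have hm0 : (k + n + k * n) • x + ((1 + k) * n) • p0 + (1 + k) • (y + p0) ∈ P :=
    add_mem (add_mem (nsmul_mem hx _) (nsmul_mem hp0 _)) hkP
  refine ⟨1 + k, by omega, fun m hm => ?_⟩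
  obtain ⟨m, rfl⟩ := Nat.exists_eq_add_of_le hm
  refine ⟨_ + m • ((1 + k) • s), add_mem hm0 (nsmul_mem (e ▸ add_mem hx hm0) _), ?_⟩
  rw [← add_assoc, ← e, add_mul, one_mul, add_smul, mul_smul]

theorem sep_core [IsCancelAdd N] {P Q C D : AddSubmonoid N} {p0 q0 b c : N}
    (hp0 : p0 ∈ P) (hd : ∀ c ∈ C, ∃ k : ℕ, 1 ≤ k ∧ k • (c + p0) ∈ P)
    (hq0 : q0 ∈ Q) (hd' : ∀ c ∈ D, ∃ k : ℕ, 1 ≤ k ∧ k • (c + q0) ∈ Q)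
    (h1 : ∀ x ∈ P, ∃ n : ℕ, 1 ≤ n ∧ ∃ r ∈ C ⊓ D, ∃ r' ∈ C ⊓ D, n • x + r' = r)
    (h2 : ∀ x ∈ Q, ∃ n : ℕ, 1 ≤ n ∧ ∃ r ∈ C ⊓ D, ∃ r' ∈ C ⊓ D, n • x + r' = r)
    {u v p p' q q' : N} (hp : p ∈ P) (hp' : p' ∈ P) (hq : q ∈ Q) (hq' : q' ∈ Q)
    (hu : u + p = p') (hv : v + q = q') (huv : b + u = c + v) :
    ∃ x ∈ P, ∃ y ∈ Q, b + x = c + y := by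
  obtain ⟨n, hn, r, hr, r', hr', e1⟩ := h1 _ (add_mem hp hp0)
  obtain ⟨m, hm, t, ht, t', ht', e2⟩ := h2 _ (add_mem hq hq0)
  obtain ⟨k, hk, hkk⟩ := sep_aux hp0 hd hp (add_mem hr'.1 ht.1) hn
    (s := r + t) (by rw [← add_assoc, e1])
  obtain ⟨l, hl, hll⟩ := sep_aux hq0 hd' hq (add_mem ht'.2 hr.2) hm
    (s := r + t) (by rw [← add_assoc, e2, add_comm])
  obtain ⟨p1, hp1, e3⟩ := hkk l hl
  obtain ⟨q1, hq1, e4⟩ := hll k hk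
  refine ⟨p' + p1, add_mem hp' hp1, q' + q1, add_mem hq' hq1, ?_⟩
  have : b + (p' + p1) = (b + u) + (l * k) • (r + t) := by
    rw [e3, ← hu]; abel
  rw [this, mul_comm l k, e4, huv, ← hv]; abel

end sep

section rank
variable {κ : Type}

def castV (κ : Type) : (κ → ℕ) →+ (κ → ℚ) where
  toFun x i := (x i : ℚ)
  map_zero' := by ext; simp
  map_add' := by intro x y; ext; simp

theorem castV_inj : Function.Injective (castV κ) := by
  intro x y h
  ext i
  have := congrFun h i
  simpa [castV] using this

def spn (R : AddSubmonoid (κ → ℕ)) : Submodule ℚ (κ → ℚ) :=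
  Submodule.span ℚ (castV κ '' (R : Set (κ → ℕ)))

theorem spn_mem {R : AddSubmonoid (κ → ℕ)} {x : κ → ℕ} (h : x ∈ R) : castV κ x ∈ spn R :=
  Submodule.subset_span ⟨x, h, rfl⟩

theorem of_spn {R : AddSubmonoid (κ → ℕ)} {x : κ → ℕ} (h : castV κ x ∈ spn R) :
    ∃ n : ℕ, 1 ≤ n ∧ ∃ r ∈ R, ∃ r' ∈ R, n • x + r' = r := by
  suffices H : ∀ v ∈ spn R, ∃ n : ℕ, 1 ≤ n ∧ ∃ r ∈ R, ∃ r' ∈ R,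
      (n : ℚ) • v + castV κ r' = castV κ r by
    obtain ⟨n, hn, r, hr, r', hr', e⟩ := H _ h
    refine ⟨n, hn, r, hr, r', hr', castV_inj ?_⟩
    rw [map_add, map_nsmul, ← e, Nat.cast_smul_eq_nsmul]
  intro v hv
  induction hv using Submodule.span_induction with
  | mem x hx =>
    obtain ⟨y, hy, rfl⟩ := hx
    exact ⟨1, le_rfl, y, hy, 0, zero_mem _, by simp⟩
  | zero => exact ⟨1, le_rfl, 0, zero_mem _, 0, zero_mem _, by simp⟩
  | add x y _ _ hx hy =>
    obtain ⟨n, hn, r, hr, r', hr', e⟩ := hx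
    obtain ⟨m, hm, t, ht, t', ht', e2⟩ := hy
    refine ⟨n * m, Nat.mul_pos hn hm, m • r + n • t, add_mem (nsmul_mem hr _) (nsmul_mem ht _),
      m • r' + n • t', add_mem (nsmul_mem hr' _) (nsmul_mem ht' _), ?_⟩
    simp only [map_add, map_nsmul, ← e, ← e2, ← Nat.cast_smul_eq_nsmul ℚ]
    push_cast
    module
  | smul a x _ hx =>
    obtain ⟨n, hn, r, hr, r', hr', e⟩ := hx
    have ha : (a.den : ℚ) * a = a.num := by
      rw [mul_comm]; exact Rat.mul_den_eq_num a
    have key : ∀ c : ℚ, ((a.den * n : ℕ) : ℚ) • a • x = ((a.num : ℚ)) • ((n : ℚ) • x) := by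
      intro _
      rw [← ha]; push_cast; module
    rcases le_total 0 a.num with h0 | h0
    · obtain ⟨k, hk⟩ := Int.eq_ofNat_of_zero_le h0
      refine ⟨a.den * n, Nat.mul_pos a.den_pos hn, k • r, nsmul_mem hr _, k • r', nsmul_mem hr' _, ?_⟩
      rw [key 0, hk]
      simp only [map_nsmul, ← e, ← Nat.cast_smul_eq_nsmul ℚ]
      push_cast
      module
    · obtain ⟨k, hk⟩ := Int.eq_ofNat_of_zero_le (neg_nonneg.2 h0)
      have hk' : a.num = -(k : ℤ) := by omega
      refine ⟨a.den * n, Nat.mul_pos a.den_pos hn, k • r', nsmul_mem hr' _, k • r, nsmul_mem hr _, ?_⟩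
      rw [key 0, hk']
      simp only [map_nsmul, ← e, ← Nat.cast_smul_eq_nsmul ℚ]
      push_cast
      module

noncomputable def rk (R : AddSubmonoid (κ → ℕ)) : ℕ := Module.finrank ℚ (spn R)

theorem spn_le {R : AddSubmonoid (κ → ℕ)} {W : Submodule ℚ (κ → ℚ)}
    (h : ∀ x ∈ R, castV κ x ∈ W) : spn R ≤ W := by
  apply Submodule.span_le.2
  rintro _ ⟨x, hx, rfl⟩
  exact h x hx

theorem rk_lt [Finite κ] {R : AddSubmonoid (κ → ℕ)} {W : Submodule ℚ (κ → ℚ)}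
    (h : ∀ x ∈ R, castV κ x ∈ W) (h' : ¬ W ≤ spn R) : rk R < Module.finrank ℚ W := by
  apply Submodule.finrank_lt_finrank_of_lt
  exact lt_of_le_not_ge (spn_le h) h'

theorem rk_le [Fintype κ] (R : AddSubmonoid (κ → ℕ)) : rk R ≤ Fintype.card κ := by
  have := Submodule.finrank_le (spn R)
  simpa [rk] using this

end rank
end PV

namespace PV

section fin
variable {κ : Type}

def lset {N : Type} [AddCommMonoid N] (b : N) (C : AddSubmonoid N) : Set N :=
  {x | ∃ c ∈ C, x = b + c}

theorem lset_semilinear {N : Type} [AddCommMonoid N] (b : N) {C : AddSubmonoid N} (hC : C.FG) :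
    IsSemilinearSet (lset b C) := by
  apply IsLinearSet.isSemilinearSet
  rw [isLinearSet_iff_exists_fg_eq_vadd]
  refine ⟨b, C, hC, ?_⟩
  ext x
  simp only [Set.mem_vadd_set, vadd_eq_add]
  constructor
  · rintro ⟨c, hc, rfl⟩; exact ⟨c, hc, rfl⟩
  · rintro ⟨c, hc, rfl⟩; exact ⟨c, hc, rfl⟩

theorem semilinear_decomp {N : Type} [AddCommMonoid N] {S : Set N} (h : IsSemilinearSet S) :
    ∃ (I : Type) (_ : Finite I) (b : I → N) (C : I → AddSubmonoid N), (∀ i, (C i).FG) ∧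
      S = ⋃ i, lset (b i) (C i) := by
  obtain ⟨F, hF, hl, rfl⟩ := h
  have := hF.to_subtype
  have h1 : ∀ s : F, ∃ (b : N) (C : AddSubmonoid N), C.FG ∧ (s : Set N) = lset b C := by
    intro s
    obtain ⟨b, C, hC, e⟩ := isLinearSet_iff_exists_fg_eq_vadd.1 (hl s s.2)
    refine ⟨b, C, hC, ?_⟩
    rw [e]
    ext x
    simp only [Set.mem_vadd_set, vadd_eq_add]
    constructor
    · rintro ⟨c, hc, rfl⟩; exact ⟨c, hc, rfl⟩
    · rintro ⟨c, hc, rfl⟩; exact ⟨c, hc, rfl⟩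
  choose b C hC e using h1
  refine ⟨F, this, b, C, hC, ?_⟩
  rw [Set.sUnion_eq_iUnion]
  exact Set.iUnion_congr e

theorem Good.diagS {N : Type} [AddCommMonoid N] {S : Set N} (h : IsSemilinearSet S) :
    Good {p : N × N | p.1 = p.2 ∧ p.1 ∈ S} := by
  obtain ⟨I, _, b, C, hC, rfl⟩ := semilinear_decomp h
  convert Good.iUnion (fun i => Good.diag (b i) (b i) (hC i)) using 1
  ext ⟨x, y⟩
  simp only [Set.mem_iUnion, Set.mem_ofPred_eq]
  constructor
  · rintro ⟨rfl, i, c, hc, rfl⟩; exact ⟨i, c, hc, rfl⟩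
  · rintro ⟨i, c, hc, h⟩
    obtain ⟨rfl, rfl⟩ := Prod.mk.inj h
    exact ⟨rfl, i, c, hc, rfl⟩

def lin (C P : AddSubmonoid (κ → ℕ)) : AddSubmonoid (κ → ℕ) where
  carrier := {u | u ∈ C ∧ ∃ p ∈ P, u + p ∈ P}
  zero_mem' := ⟨zero_mem _, 0, zero_mem _, by simp⟩
  add_mem' := by
    rintro a b ⟨ha, p, hp, hp'⟩ ⟨hb, q, hq, hq'⟩
    refine ⟨add_mem ha hb, p + q, add_mem hp hq, ?_⟩
    have := add_mem hp' hq'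
    rwa [add_add_add_comm] at this

theorem lin_fg {C P : AddSubmonoid (κ → ℕ)} (hC : C.FG) : (lin C P).FG := by
  have : lin C P = C ⊓ lin ⊤ P := by
    ext x
    exact ⟨fun h => ⟨h.1, trivial, h.2⟩, fun h => ⟨h.1, h.2.2⟩⟩
  rw [this]
  apply fg_inf hC
  rintro x y ⟨_, p, hp, hp'⟩ ⟨_, q, hq, hq'⟩
  refine ⟨trivial, x + p + q, add_mem hp' hq, ?_⟩
  have := add_mem hq' hp
  convert this using 1
  abel

structure Den (C P : AddSubmonoid (κ → ℕ)) : Prop where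
  fg : C.FG
  le : P ≤ C
  ex : ∃ p0 ∈ P, ∀ c ∈ C, ∃ k : ℕ, 1 ≤ k ∧ k • (c + p0) ∈ P

def Approx (Z Z' : Set (κ → ℕ)) : Prop :=
  ∃ (I : Type) (_ : Finite I) (b : I → κ → ℕ) (C P : I → AddSubmonoid (κ → ℕ)),
    (∀ i, Den (C i) (P i)) ∧ Z = ⋃ i, lset (b i) (P i) ∧ Z' = ⋃ i, lset (b i) (lin (C i) (P i))

theorem Approx.sub {Z Z' : Set (κ → ℕ)} (h : Approx Z Z') : Z ⊆ Z' := by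
  obtain ⟨I, _, b, C, P, hD, rfl, rfl⟩ := h
  apply Set.iUnion_mono
  rintro i _ ⟨p, hp, rfl⟩
  exact ⟨p, ⟨(hD i).le hp, 0, zero_mem _, by simpa using hp⟩, rfl⟩

theorem Approx.semilinear {Z Z' : Set (κ → ℕ)} (h : Approx Z Z') : IsSemilinearSet Z' := by
  obtain ⟨I, _, b, C, P, hD, rfl, rfl⟩ := h
  exact IsSemilinearSet.iUnion fun i => lset_semilinear _ (lin_fg (hD i).fg)

theorem Good.approx {M : Type} [AddCommMonoid M] {X : Set M} (h : Good X) (f : M →+ (κ → ℕ)) :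
    ∃ Z', Approx (f '' X) Z' := by
  obtain ⟨I, _, b, P, hP, rfl⟩ := h.decomp
  have : ∀ i, Dense ((P i).map f) := fun i => by
    have := (hP i).map f ⊤ Lin.top
    rwa [inf_top_eq] at this
  choose C hC hle hex using this
  refine ⟨_, I, inferInstance, fun i => f (b i), C, fun i => (P i).map f,
    fun i => ⟨hC i, hle i, hex i⟩, ?_, rfl⟩
  ext x
  simp only [Set.mem_iUnion, Set.mem_image, Set.mem_ofPred_eq]
  constructor
  · rintro ⟨y, ⟨i, p, hp, rfl⟩, rfl⟩
    exact ⟨i, f p, ⟨p, hp, rfl⟩, map_add _ _ _⟩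
  · rintro ⟨i, _, ⟨p, hp, rfl⟩, rfl⟩
    exact ⟨_, ⟨i, p, hp, rfl⟩, map_add _ _ _⟩

def DimLt (n : ℕ) (S : Set (κ → ℕ)) : Prop :=
  ∃ (I : Type) (_ : Finite I) (f : I → κ → ℕ) (R : I → AddSubmonoid (κ → ℕ)),
    (∀ i, (R i).FG ∧ rk (R i) < n) ∧ S ⊆ ⋃ i, lset (f i) (R i)

theorem DimLt.iUnion {n : ℕ} {I : Type} [Finite I] {S : I → Set (κ → ℕ)}
    (h : ∀ i, DimLt n (S i)) : DimLt n (⋃ i, S i) := by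
  choose A hA f R hR hS using h
  refine ⟨Σ i, A i, inferInstance, fun a => f a.1 a.2, fun a => R a.1 a.2,
    fun a => hR a.1 a.2, ?_⟩
  apply Set.iUnion_subset
  intro i x hx
  obtain ⟨a, ha⟩ := Set.mem_iUnion.1 (hS i hx)
  exact Set.mem_iUnion.2 ⟨⟨i, a⟩, ha⟩

theorem DimLt.mono {n m : ℕ} {S T : Set (κ → ℕ)} (h : DimLt n S) (hnm : n ≤ m) (hT : T ⊆ S) :
    DimLt m T := by
  obtain ⟨I, hI, f, R, hR, hS⟩ := h
  exact ⟨I, hI, f, R, fun i => ⟨(hR i).1, (hR i).2.trans_le hnm⟩, hT.trans hS⟩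

theorem spn_of_sub {f b : κ → ℕ} {R P : AddSubmonoid (κ → ℕ)} (h : lset b P ⊆ lset f R) :
    ∀ p ∈ P, castV κ p ∈ spn R := by
  intro p hp
  obtain ⟨r, hr, e⟩ := h ⟨0, zero_mem _, rfl⟩
  obtain ⟨r', hr', e'⟩ := h ⟨p, hp, rfl⟩
  rw [add_zero] at e
  rw [e, add_assoc] at e'
  have e2 := congrArg (castV κ) (add_left_cancel e')
  rw [map_add] at e2
  rw [eq_sub_of_add_eq' e2]
  exact sub_mem (spn_mem hr') (spn_mem hr)

theorem Den.spn {C P : AddSubmonoid (κ → ℕ)} (h : Den C P) {W : Submodule ℚ (κ → ℚ)}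
    (hP : ∀ p ∈ P, castV κ p ∈ W) : ∀ c ∈ C, castV κ c ∈ W := by
  intro c hc
  obtain ⟨p0, hp0, hd⟩ := h.ex
  obtain ⟨k, hk, hkP⟩ := hd c hc
  have h1 := hP _ hkP
  rw [map_nsmul, ← Nat.cast_smul_eq_nsmul ℚ] at h1
  have hk0 : (k : ℚ) ≠ 0 := by
    have : k ≠ 0 := by omega
    exact_mod_cast this
  have h2 := (Submodule.smul_mem_iff W hk0).1 h1
  rw [map_add] at h2
  exact (Submodule.add_mem_iff_left W (hP _ hp0)).1 h2

theorem piece_sep [Finite κ] {C P D Q R : AddSubmonoid (κ → ℕ)} {b c f : κ → ℕ}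
    (hP : Den C P) (hQ : Den D Q) (hPs : lset b P ⊆ lset f R) (hQs : lset c Q ⊆ lset f R)
    (hdis : Disjoint (lset b P) (lset c Q)) :
    DimLt (rk R) (lset b (lin C P) ∩ lset c (lin D Q)) := by
  by_cases he : ∃ z, z ∈ lset b (lin C P) ∩ lset c (lin D Q)
  swap
  · refine ⟨Empty, inferInstance, Empty.elim, Empty.elim, fun i => i.elim, ?_⟩
    intro x hx
    exact (he ⟨x, hx⟩).elim
  obtain ⟨z, ⟨u, ⟨hu, p, hp, hp'⟩, rfl⟩, v, ⟨hv, q, hq, hq'⟩, hz⟩ := he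
  obtain ⟨hfg, F, hF⟩ := inter_cover hP.fg hQ.fg b c
  refine ⟨F, inferInstance, fun i => i, fun _ => C ⊓ D, fun i => ⟨hfg, ?_⟩, ?_⟩
  · apply rk_lt (R := C ⊓ D) (W := spn R) (fun x hx => hP.spn (spn_of_sub hPs) x hx.1)
    intro hle
    obtain ⟨p0, hp0, hd⟩ := hP.ex
    obtain ⟨q0, hq0, hd'⟩ := hQ.ex
    obtain ⟨x, hx, y, hy, e⟩ := sep_core (b := b) (c := c) hp0 hd hq0 hd'
      (fun x hx => of_spn (hle (spn_of_sub hPs x hx)))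
      (fun x hx => of_spn (hle (spn_of_sub hQs x hx))) hp hp' hq hq' rfl rfl hz
    exact Set.disjoint_left.1 hdis ⟨x, hx, rfl⟩ ⟨y, hy, e⟩
  · rintro x ⟨⟨u, hu, rfl⟩, ⟨v, hv, e⟩⟩
    obtain ⟨g, hg, r, hr, e2⟩ := hF u hu.1 v hv.1 e
    exact Set.mem_iUnion.2 ⟨⟨g, hg⟩, r, hr, e2⟩

theorem approx_sep [Finite κ] {X X' Y Y' : Set (κ → ℕ)} {f : κ → ℕ} {R : AddSubmonoid (κ → ℕ)}
    (hX : Approx X X') (hY : Approx Y Y') (hXs : X ⊆ lset f R) (hYs : Y ⊆ lset f R)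
    (hdis : Disjoint X Y) : DimLt (rk R) (X' ∩ Y') := by
  obtain ⟨I, _, b, C, P, hD, rfl, rfl⟩ := hX
  obtain ⟨I', _, b', C', P', hD', rfl, rfl⟩ := hY
  have h1 : DimLt (rk R) (⋃ i : I × I', lset (b i.1) (lin (C i.1) (P i.1)) ∩
      lset (b' i.2) (lin (C' i.2) (P' i.2))) := by
    apply DimLt.iUnion
    rintro ⟨i, j⟩
    exact piece_sep (hD i) (hD' j) ((Set.subset_iUnion (fun i => lset (b i) (P i)) i).trans hXs)
      ((Set.subset_iUnion (fun i => lset (b' i) (P' i)) j).trans hYs)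
      (hdis.mono (Set.subset_iUnion (fun i => lset (b i) (P i)) i)
        (Set.subset_iUnion (fun i => lset (b' i) (P' i)) j))
  refine h1.mono le_rfl ?_
  rintro x ⟨h2, h3⟩
  obtain ⟨i, hi⟩ := Set.mem_iUnion.1 h2
  obtain ⟨j, hj⟩ := Set.mem_iUnion.1 h3
  exact Set.mem_iUnion.2 ⟨(i, j), hi, hj⟩

theorem sep_main [Fintype κ] {st : (κ → ℕ) → (κ → ℕ) → Prop}
    (hg : Good {p : (κ → ℕ) × (κ → ℕ) | Relation.ReflTransGen st p.1 p.2}) (k : ℕ) :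
    ∀ S T : Set (κ → ℕ), IsSemilinearSet S → IsSemilinearSet T →
      (∀ x ∈ S, ∀ y ∈ T, ¬ Relation.ReflTransGen st x y) → DimLt k (S ∪ T)ᶜ →
      ∃ S' : Set (κ → ℕ), IsSemilinearSet S' ∧ S ⊆ S' ∧ Disjoint S' T ∧
        ∀ x ∈ S', ∀ y, st x y → y ∈ S' := by
  induction k with
  | zero =>
    rintro S T hS hT hST ⟨I, _, f, R, hR, hcov⟩
    refine ⟨S, hS, le_rfl, Set.disjoint_left.2 fun x hx hy => hST x hx x hy .refl, ?_⟩
    intro x hx y hxy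
    by_contra hy
    have : y ∈ (S ∪ T)ᶜ := by
      rintro (h | h)
      · exact hy h
      · exact hST x hx y h (.single hxy)
    obtain ⟨i, _⟩ := Set.mem_iUnion.1 (hcov this)
    exact absurd (hR i).2 (Nat.not_lt_zero _)
  | succ k ih =>
    rintro S T hS hT hST ⟨I, _, f, R, hR, hcov⟩
    have hL : ∀ i, IsSemilinearSet (lset (f i) (R i)) := fun i => lset_semilinear _ (hR i).1
    have hY : ∀ i, ∃ Y', Approx {x | x ∈ lset (f i) (R i) ∧
        ∃ y ∈ T, Relation.ReflTransGen st x y} Y' := by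
      intro i
      obtain ⟨Y', h⟩ := (((Good.diagS (hL i)).comp hg).comp (Good.diagS hT)).approx
        (AddMonoidHom.fst (κ → ℕ) (κ → ℕ))
      refine ⟨Y', ?_⟩
      convert h using 1
      ext x
      constructor
      · rintro ⟨h1, y, h2, h3⟩
        exact ⟨(x, y), ⟨y, ⟨x, ⟨rfl, h1⟩, h3⟩, rfl, h2⟩, rfl⟩
      · rintro ⟨⟨_, y⟩, ⟨y', ⟨x', ⟨h1, h2⟩, h3⟩, h4, h5⟩, rfl⟩
        simp only at *
        subst h1 h4
        exact ⟨h2, _, h5, h3⟩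
    choose Y' hY' using hY
    let S1 : Set (κ → ℕ) := S ∪ ⋃ i, (lset (f i) (R i) \ Y' i)
    have hS1 : IsSemilinearSet S1 :=
      hS.union (IsSemilinearSet.iUnion fun i => (hL i).sdiff (hY' i).semilinear)
    have hS1T : ∀ x ∈ S1, ∀ y ∈ T, ¬ Relation.ReflTransGen st x y := by
      rintro x (hx | hx) y hy hr
      · exact hST x hx y hy hr
      · obtain ⟨i, hi, hn⟩ := Set.mem_iUnion.1 hx
        exact hn ((hY' i).sub ⟨hi, y, hy, hr⟩)
    have hX : ∀ i, ∃ X', Approx {x | x ∈ lset (f i) (R i) ∧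
        ∃ y ∈ S1, Relation.ReflTransGen st y x} X' := by
      intro i
      obtain ⟨X', h⟩ := (((Good.diagS hS1).comp hg).comp (Good.diagS (hL i))).approx
        (AddMonoidHom.snd (κ → ℕ) (κ → ℕ))
      refine ⟨X', ?_⟩
      convert h using 1
      ext x
      constructor
      · rintro ⟨h1, y, h2, h3⟩
        exact ⟨(y, x), ⟨x, ⟨y, ⟨rfl, h2⟩, h3⟩, rfl, h1⟩, rfl⟩
      · rintro ⟨⟨y, _⟩, ⟨y', ⟨x', ⟨h1, h2⟩, h3⟩, h4, h5⟩, rfl⟩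
        simp only at *
        subst h1 h4
        exact ⟨h5, _, h2, h3⟩
    choose X' hX' using hX
    let T1 : Set (κ → ℕ) := T ∪ ⋃ i, (lset (f i) (R i) \ X' i)
    have hT1 : IsSemilinearSet T1 :=
      hT.union (IsSemilinearSet.iUnion fun i => (hL i).sdiff (hX' i).semilinear)
    have hST1 : ∀ x ∈ S1, ∀ y ∈ T1, ¬ Relation.ReflTransGen st x y := by
      rintro x hx y (hy | hy) hr
      · exact hS1T x hx y hy hr
      · obtain ⟨i, hi, hn⟩ := Set.mem_iUnion.1 hy
        exact hn ((hX' i).sub ⟨hi, x, hx, hr⟩)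
    have hdim : DimLt k (S1 ∪ T1)ᶜ := by
      have h1 : DimLt k (⋃ i, X' i ∩ Y' i) := by
        apply DimLt.iUnion
        intro i
        refine (approx_sep (hX' i) (hY' i) (fun x hx => hx.1) (fun x hx => hx.1) ?_).mono
          (Nat.lt_succ_iff.1 (hR i).2) le_rfl
        apply Set.disjoint_left.2
        rintro x ⟨_, y, hy, hyx⟩ ⟨_, z, hz, hxz⟩
        exact hS1T y hy z hz (hyx.trans hxz)
      refine h1.mono le_rfl ?_
      intro x hx
      have hx0 : x ∈ (S ∪ T)ᶜ := fun h => hx (h.imp Or.inl Or.inl)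
      obtain ⟨i, hi⟩ := Set.mem_iUnion.1 (hcov hx0)
      refine Set.mem_iUnion.2 ⟨i, ?_, ?_⟩
      · by_contra hn
        exact hx (Or.inr (Or.inr (Set.mem_iUnion.2 ⟨i, hi, hn⟩)))
      · by_contra hn
        exact hx (Or.inl (Or.inr (Set.mem_iUnion.2 ⟨i, hi, hn⟩)))
    obtain ⟨S', h1, h2, h3, h4⟩ := ih S1 T1 hS1 hT1 hST1 hdim
    exact ⟨S', h1, Set.subset_union_left.trans h2, h3.mono_right Set.subset_union_left, h4⟩

theorem sep_point [Fintype κ] {st : (κ → ℕ) → (κ → ℕ) → Prop}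
    (hg : Good {p : (κ → ℕ) × (κ → ℕ) | Relation.ReflTransGen st p.1 p.2}) (s t : κ → ℕ)
    (h : ¬ Relation.ReflTransGen st s t) :
    ∃ S' : Set (κ → ℕ), IsSemilinearSet S' ∧ s ∈ S' ∧ t ∉ S' ∧
        ∀ x ∈ S', ∀ y, st x y → y ∈ S' := by
  have hs : ∀ x : κ → ℕ, IsSemilinearSet ({x} : Set (κ → ℕ)) := IsSemilinearSet.singleton
  obtain ⟨S', h1, h2, h3, h4⟩ := sep_main hg (Fintype.card κ + 1) {s} {t} (hs s) (hs t)
    (by rintro _ rfl _ rfl; exact h)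
    ⟨Unit, inferInstance, fun _ => 0, fun _ => ⊤, fun _ => ⟨fg_top_pi, Nat.lt_succ_of_le (rk_le _)⟩,
      fun x _ => Set.mem_iUnion.2 ⟨(), x, trivial, (zero_add x).symm⟩⟩
  exact ⟨S', h1, h2 rfl, fun h => Set.disjoint_left.1 h3 h rfl, h4⟩

end fin
end PV

namespace PV

theorem to_frozen {N : Type} [AddCommMonoid N] {S : Set N} (h : IsSemilinearSet S) :
    IsSemilinearSubset S := by
  classical
  obtain ⟨I, _, b, C, hC, rfl⟩ := semilinear_decomp h
  cases nonempty_fintype I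
  let e := Fintype.equivFin I
  refine ⟨Fintype.card I, fun i => lset (b (e.symm i)) (C (e.symm i)), fun i => ?_, ?_⟩
  · obtain ⟨A, _, φ, hφ⟩ := fg_param (hC (e.symm i))
    let g := Fintype.equivFin A
    refine ⟨b (e.symm i), Fintype.card A, fun j => φ (Pi.single (g.symm j) 1), ?_⟩
    have key : ∀ c : A → ℕ, φ c = ∑ j, c (g.symm j) • φ (Pi.single (g.symm j) 1) := by
      intro c
      rw [Equiv.sum_comp g.symm (fun a => c a • φ (Pi.single a 1))]
      conv_lhs => rw [← Finset.univ_sum_single c]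
      rw [map_sum]
      refine Finset.sum_congr rfl fun a _ => ?_
      rw [← map_nsmul]
      congr 1
      ext a'
      by_cases h : a' = a
      · subst h; simp
      · simp [h]
    ext x
    constructor
    · rintro ⟨c, hc, rfl⟩
      obtain ⟨s, rfl⟩ := (hφ c).1 hc
      exact ⟨fun j => s (g.symm j), by rw [key]⟩
    · rintro ⟨c, rfl⟩
      refine ⟨_, (hφ _).2 ⟨fun a => c (g a), rfl⟩, ?_⟩
      rw [key]
      simp
  · ext x
    simp only [Set.mem_iUnion]
    exact ⟨fun ⟨i, hi⟩ => ⟨e i, by simpa using hi⟩, fun ⟨i, hi⟩ => ⟨_, hi⟩⟩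

section trans
variable {d : ℕ} (V : PVASS d)

open Classical in
noncomputable def enc (c : V.Q × NVec d) : V.Q ⊕ Fin d → ℕ := Sum.elim (Pi.single c.1 1) c.2

open Classical in
noncomputable def vpre (e : V.E) : V.Q ⊕ Fin d → ℕ :=
  Sum.elim (Pi.single (V.src e) 1) fun i => (-(V.upd e i)).toNat

open Classical in
noncomputable def vpost (e : V.E) : V.Q ⊕ Fin d → ℕ :=
  Sum.elim (Pi.single (V.tgt e) 1) fun i => (V.upd e i).toNat

def vJ (k : ℕ) : Set (V.Q ⊕ Fin d) := {a | ∃ j : Fin d, (j : ℕ) < k ∧ a = Sum.inr j}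

theorem vJ_mono : Monotone (vJ V) := by
  rintro k l h _ ⟨j, hj, rfl⟩
  exact ⟨j, lt_of_lt_of_le hj h, rfl⟩

abbrev VStep := NStep (vpre V) (vpost V) V.test (vJ V)

theorem single_add {Q : Type} [DecidableEq Q] {a b : Q} {z : Q → ℕ}
    (h : (Pi.single b 1 : Q → ℕ) = Pi.single a 1 + z) : a = b ∧ z = 0 := by
  have hab : a = b := by
    by_contra hab
    have := congrFun h a
    simp [hab] at this
    omega
  subst hab
  exact ⟨rfl, (add_eq_left.1 h.symm)⟩

theorem enc_inj {c c' : V.Q × NVec d} (h : enc V c = enc V c') : c = c' := by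
  classical
  have h1 : ∀ q, enc V c (Sum.inl q) = enc V c' (Sum.inl q) := fun q => congrFun h _
  have h2 : ∀ q, enc V c (Sum.inr q) = enc V c' (Sum.inr q) := fun q => congrFun h _
  simp only [enc, Sum.elim_inl, Sum.elim_inr] at h1 h2
  refine Prod.ext ?_ (funext h2)
  have := h1 c.1
  by_contra hc
  simp [hc] at this

theorem step_fwd {c c' : V.Q × NVec d} (h : V.Step c c') : VStep V (enc V c) (enc V c') := by
  classical
  obtain ⟨e, h1, h2, h3, h4⟩ := h
  refine ⟨e, Sum.elim 0 (fun i => c.2 i - (-(V.upd e i)).toNat), ?_, ?_, ?_⟩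
  · ext a
    rcases a with q | i
    · simp [enc, vpre, h1]
    · have := h4 i
      simp only [enc, vpre, Pi.add_apply, Sum.elim_inr]
      omega
  · ext a
    rcases a with q | i
    · simp [enc, vpost, h2]
    · have := h4 i
      simp only [enc, vpost, Pi.add_apply, Sum.elim_inr]
      omega
  · rintro _ ⟨j, hj, rfl⟩
    exact h3 j hj

theorem step_bwd {c : V.Q × NVec d} {y : V.Q ⊕ Fin d → ℕ} (h : VStep V (enc V c) y) :
    ∃ c', y = enc V c' ∧ V.Step c c' := by
  classical
  obtain ⟨e, z, h1, rfl, h3⟩ := h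
  have hl : (Pi.single c.1 1 : V.Q → ℕ) = Pi.single (V.src e) 1 + fun q => z (Sum.inl q) := by
    ext q
    have := congrFun h1 (Sum.inl q)
    simp only [enc, vpre, Pi.add_apply, Sum.elim_inl] at this
    simpa using this
  have hr : ∀ i, c.2 i = (-(V.upd e i)).toNat + z (Sum.inr i) := fun i => by
    have := congrFun h1 (Sum.inr i)
    simpa only [enc, vpre, Pi.add_apply, Sum.elim_inr] using this
  obtain ⟨hs, hz⟩ := single_add hl
  refine ⟨(V.tgt e, fun i => (V.upd e i).toNat + z (Sum.inr i)), ?_, e, hs, rfl, ?_, ?_⟩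
  · ext a
    rcases a with q | i
    · have := congrFun hz q
      simp only [Pi.zero_apply] at this
      simp [enc, vpost, this]
    · simp [enc, vpost]
  · intro j hj
    exact h3 (Sum.inr j) ⟨j, hj, rfl⟩
  · intro i
    have := hr i
    simp only
    omega

theorem reach_bwd {c : V.Q × NVec d} {y : V.Q ⊕ Fin d → ℕ}
    (h : Relation.ReflTransGen (VStep V) (enc V c) y) :
    ∃ c', y = enc V c' ∧ V.Reach c c' := by
  induction h with
  | refl => exact ⟨c, rfl, Relation.ReflTransGen.refl⟩
  | tail _ h2 ih =>
    obtain ⟨c', rfl, h3⟩ := ih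
    obtain ⟨c'', rfl, h4⟩ := step_bwd V h2
    exact ⟨c'', rfl, Relation.ReflTransGen.tail h3 h4⟩

def projR : (V.Q ⊕ Fin d → ℕ) →+ NVec d where
  toFun z i := z (Sum.inr i)
  map_zero' := rfl
  map_add' _ _ := rfl

theorem slice {S : Set (V.Q ⊕ Fin d → ℕ)} (hS : IsSemilinearSet S) (q : V.Q) :
    IsSemilinearSet {x : NVec d | enc V (q, x) ∈ S} := by
  classical
  have := V.fintypeQ
  have h1 := (hS.inter (lset_semilinear (enc V (q, 0))
    (zer_fg (Set.range (Sum.inl : V.Q → V.Q ⊕ Fin d))))).image (projR V)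
  convert h1 using 1
  ext x
  constructor
  · intro hx
    refine ⟨enc V (q, x), ⟨hx, Sum.elim 0 x, ?_, ?_⟩, rfl⟩
    · rintro _ ⟨a, rfl⟩; rfl
    · ext a
      rcases a with a | i
      · simp only [enc, Pi.add_apply, Sum.elim_inl, Pi.zero_apply, add_zero]
      · simp [enc]
  · rintro ⟨_, ⟨hx, z, hz, rfl⟩, rfl⟩
    change enc V _ ∈ S
    convert hx using 1
    ext a
    rcases a with a | i
    · have := hz (Sum.inl a) ⟨a, rfl⟩
      simp only [enc, Pi.add_apply, Sum.elim_inl, this, add_zero]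
    · simp [enc, projR]

end trans
end PV

/-- If a configuration `C_t` of a PVASS is not reachable from `C_s`,
then there is a set `S` of configurations which is semilinear in every state, is an
inductive invariant, contains `C_s` and avoids `C_t`. -/
theorem pvass_semilinear_inductive_invariant {d : ℕ} (V : PVASS d)
    (Cs Ct : V.Q × NVec d) (h : ¬ V.Reach Cs Ct) :
    ∃ S : Set (V.Q × NVec d),
      (∀ q : V.Q, IsSemilinearSubset {x : NVec d | (q, x) ∈ S}) ∧
      (∀ c ∈ S, ∀ c', V.Step c c' → c' ∈ S) ∧
      Cs ∈ S ∧ Ct ∉ S := by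
  have := V.fintypeQ
  have := V.fintypeE
  have hg := PV.reach_good (PV.vpre V) (PV.vpost V) V.test (PV.vJ_mono V)
  obtain ⟨S, h1, h2, h3, h4⟩ := PV.sep_point hg (PV.enc V Cs) (PV.enc V Ct) (fun hr => by
    obtain ⟨c', e, hc⟩ := PV.reach_bwd V hr
    exact h (PV.enc_inj V e ▸ hc))
  exact ⟨{c | PV.enc V c ∈ S}, fun q => PV.to_frozen (PV.slice V h1 q),
    fun c hc c' hs => h4 _ hc _ (PV.step_fwd V hs), h2, h3⟩
end
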